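/- arXiv:1510.05455 — 3 statements merged into one kernel-verified Lean document; each statement's English description precedes it below -/
import Mathlib

section
/- Let v be a radial weight in the class D̂ satisfying ∫₀¹ (1-s)²/v̂(s) ds < ∞ and M₁(v) = sup_{0<r<1} (∫_r¹ v̂(s)/(1-s)² ds)^{1/2} (∫₀^r 1/v̂(s) ds)^{1/2} < ∞. If there exists K > 0 such that for every measurable φ : [0,1) → ℂ with ‖φ‖_{L²_{V̂₂}} < ∞ the function H(φ)(z) = ∫₀¹ φ(t)/(1-tz) dt satisfies ‖H(φ)‖_{D_v} ≤ K · ‖φ‖_{L²_{V̂₂}}, then M₂(v) = sup_{0<r<1} (∫₀^r v̂(s)/(1-s)⁴ ds)^{1/2} (∫_r¹ (1-s)²/v̂(s) ds)^{1/2} < ∞; moreover M₂(v) ≤ C · M₁(v) · K for a constant C depending only on v. -/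
open MeasureTheory Real Set Filter

noncomputable section

/-- `hatw v r = ∫_r^1 v(s) ds`. -/
def hatw (v : ℝ → ℝ) (r : ℝ) : ℝ := ∫ s in r..1, v s

/-- A radial weight: measurable, positive on `[0,1)`, integrable on `(0,1)`. -/
def RadialWeight (v : ℝ → ℝ) : Prop :=
  Measurable v ∧ (∀ r ∈ Set.Ico (0:ℝ) 1, 0 < v r) ∧
    MeasureTheory.IntegrableOn v (Set.Ioo 0 1)

/-- Membership in the class `D̂`. -/
def DoublingD (v : ℝ → ℝ) : Prop :=
  ∃ C : ℝ, 1 ≤ C ∧ ∀ r ∈ Set.Ico (0:ℝ) 1, hatw v r ≤ C * hatw v ((1+r)/2)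

/-- Squared Dirichlet-type norm `‖f‖_{D_v}^2`. -/
def DvSq (v : ℝ → ℝ) (f : ℂ → ℂ) : ENNReal :=
  (‖f 0‖₊ : ENNReal)^2 +
    (ENNReal.ofReal Real.pi)⁻¹ *
      ∫⁻ z in Metric.ball (0:ℂ) 1, (‖deriv f z‖₊ : ENNReal)^2 * ENNReal.ofReal (v ‖z‖)

/-- The Muckenhoupt type quantity `M₁(v)`. -/
def M1v (v : ℝ → ℝ) : ENNReal :=
  ⨆ r ∈ Set.Ioo (0:ℝ) 1,
    (∫⁻ s in Set.Ioo r 1, ENNReal.ofReal (hatw v s / (1-s)^2)) ^ (1/2 : ℝ) *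
    (∫⁻ s in Set.Ioo (0:ℝ) r, ENNReal.ofReal (1 / hatw v s)) ^ (1/2 : ℝ)

/-- The Muckenhoupt type quantity `M₂(v)`. -/
def M2v (v : ℝ → ℝ) : ENNReal :=
  ⨆ r ∈ Set.Ioo (0:ℝ) 1,
    (∫⁻ s in Set.Ioo (0:ℝ) r, ENNReal.ofReal (hatw v s / (1-s)^4)) ^ (1/2 : ℝ) *
    (∫⁻ s in Set.Ioo r 1, ENNReal.ofReal ((1-s)^2 / hatw v s)) ^ (1/2 : ℝ)

/-- The moment `v_x = ∫_0^1 s^x v(s) ds`. -/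
def vx (v : ℝ → ℝ) (x : ℕ) : ℝ := ∫ s in (0:ℝ)..1, s^x * v s

/-- `M_∞(s,f)`, the maximum of `|f|` on the circle of radius `s`. -/
def Minf (f : ℂ → ℂ) (s : ℝ) : ℝ := sSup ((fun z => ‖f z‖) '' Metric.sphere (0:ℂ) s)

/-- `M₂(r,h)`. -/
def M2mean (h : ℂ → ℂ) (r : ℝ) : ℝ :=
  Real.sqrt ((2*Real.pi)⁻¹ * ∫ θ in (-Real.pi)..Real.pi, ‖h ((r:ℂ) * Complex.exp (θ * Complex.I))‖^2)

/-- The norm of `B(2,∞)` (with values in `[0,∞]`). -/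
def B2infE (g : ℂ → ℂ) : ENNReal :=
  (‖g 0‖₊ : ENNReal) +
    ⨆ r ∈ Set.Ioo (0:ℝ) 1, ENNReal.ofReal (M2mean (deriv g) r * Real.sqrt (1-r))

/-- The `p`-th power of the norm of `B(2,p)` (with values in `[0,∞]`). -/
def B2pE (p : ℝ) (g : ℂ → ℂ) : ENNReal :=
  ENNReal.ofReal (‖g 0‖ ^ p) +
    ∫⁻ r in Set.Ioo (0:ℝ) 1, ENNReal.ofReal (M2mean (deriv g) r ^ p * (1-r)^(p/2-1))

/-- The generalized Hilbert operator `H_g`. -/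
def Hg (g f : ℂ → ℂ) (z : ℂ) : ℂ := ∫ t in Set.Ioo (0:ℝ) 1, f t * deriv g (t * z)

/-- The Hilbert operator `H` acting on functions on `[0,1)`. -/
def Hop (φ : ℝ → ℂ) (z : ℂ) : ℂ := ∫ t in Set.Ioo (0:ℝ) 1, φ t / (1 - t * z)

/-- The sublinear Hilbert operator `H̃`. -/
def Htil (φ : ℝ → ℂ) (z : ℂ) : ℂ := ∫ t in Set.Ioo (0:ℝ) 1, (‖φ t‖ : ℂ) / (1 - t * z)

/-- Squared norm in `L²_{V̂₂}`. -/
def L2V2sq (v : ℝ → ℝ) (φ : ℝ → ℂ) : ENNReal :=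
  ∫⁻ t in Set.Ioo (0:ℝ) 1, (‖φ t‖₊ : ENNReal)^2 * ENNReal.ofReal (hatw v t / (1-t)^2)

/-- Taylor coefficient `ĝ(k)` of `g` at the origin. -/
def gcoef (g : ℂ → ℂ) (k : ℕ) : ℂ := iteratedDeriv k g 0 / (Nat.factorial k)


lemma aux_circle (F : ℂ → ℂ) (hF : DifferentiableOn ℂ F (Metric.ball 0 1)) (s r : ℝ)
    (hs : s ∈ Set.Ioo (0:ℝ) 1) (hr : r ∈ Set.Ioo (0:ℝ) 1) :
    ENNReal.ofReal (2 * π * (1 - r * s) * ‖F ((r * s ^ 2 : ℝ) : ℂ)‖ ^ 2) ≤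
      ∫⁻ θ in Set.Ioo (-π) π,
        (‖F (Complex.polarCoord.symm (s, θ))‖₊ : ENNReal) ^ 2 := by
  obtain ⟨hs0, hs1⟩ := hs
  obtain ⟨hr0, hr1⟩ := hr
  have hrs : r * s < 1 := by nlinarith
  have hpc : ∀ θ : ℝ, Complex.polarCoord.symm (s, θ) = circleMap 0 s θ := by
    intro θ
    rw [Complex.polarCoord_symm_apply, circleMap, Complex.exp_mul_I]
    simp
  have hsub : Metric.closedBall (0:ℂ) s ⊆ Metric.ball 0 1 :=
    Metric.closedBall_subset_ball hs1
  have hcont : Continuous fun θ : ℝ => ‖F (circleMap 0 s θ)‖ ^ 2 := by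
    refine (continuous_norm.comp ?_).pow 2
    refine hF.continuousOn.comp_continuous (continuous_circleMap 0 s) fun θ => ?_
    exact hsub (circleMap_mem_closedBall 0 hs0.le θ)
  set w : ℂ := ((r * s ^ 2 : ℝ) : ℂ) with hw
  have hwn : ‖w‖ = r * s ^ 2 := by
    rw [hw, Complex.norm_real, Real.norm_of_nonneg (by positivity)]
  have hwb : w ∈ Metric.ball (0:ℂ) s := by
    rw [mem_ball_zero_iff, hwn]; nlinarith
  have hcau := DifferentiableOn.circleIntegral_sub_inv_smul (c := 0) (R := s) (w := w)
    (f := fun z => F z ^ 2) ((hF.mono hsub).pow 2) hwb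
  have hb : ‖∮ z in C(0, s), (z - w)⁻¹ • (F z ^ 2)‖ ≤
      ∫ θ in (0:ℝ)..2 * π, (1 - r * s)⁻¹ * ‖F (circleMap 0 s θ)‖ ^ 2 := by
    rw [circleIntegral]
    refine intervalIntegral.norm_integral_le_of_norm_le (by positivity) ?_
      ((continuous_const.mul hcont).intervalIntegrable _ _)
    refine Filter.Eventually.of_forall fun θ _ => ?_
    have h1 : s * (1 - r * s) ≤ ‖circleMap 0 s θ - w‖ := by
      have := norm_sub_norm_le (circleMap 0 s θ) w
      rw [norm_circleMap_zero, hwn, abs_of_pos hs0] at this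
      linarith
    have h2 : 0 < s * (1 - r * s) := mul_pos hs0 (by linarith)
    simp only [smul_eq_mul, norm_mul, deriv_circleMap, norm_inv, norm_pow, Complex.norm_I, mul_one,
      norm_circleMap_zero, abs_of_pos hs0]
    rw [← mul_assoc]
    gcongr
    calc s * ‖circleMap 0 s θ - w‖⁻¹ ≤ s * (s * (1 - r * s))⁻¹ := by gcongr
      _ = (1 - r * s)⁻¹ := by field_simp
  rw [hcau] at hb
  have hper : (∫ θ in (0:ℝ)..2 * π, ‖F (circleMap 0 s θ)‖ ^ 2) =
      ∫ θ in (-π)..π, ‖F (circleMap 0 s θ)‖ ^ 2 := by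
    have hp : Function.Periodic (fun θ : ℝ => ‖F (circleMap 0 s θ)‖ ^ 2) (2 * π) := by
      intro θ; simp only [periodic_circleMap 0 s θ]
    have := hp.intervalIntegral_add_eq 0 (-π)
    rw [zero_add] at this
    rw [this]; congr 1; ring
  rw [intervalIntegral.integral_const_mul, hper] at hb
  have hb2 : 2 * π * (1 - r * s) * ‖F w‖ ^ 2 ≤ ∫ θ in (-π)..π, ‖F (circleMap 0 s θ)‖ ^ 2 := by
    have h3 : (0:ℝ) < 1 - r * s := by linarith
    have h4 : ‖(2 * π * Complex.I : ℂ) • F w ^ 2‖ = 2 * π * ‖F w‖ ^ 2 := by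
      simp [abs_of_pos Real.pi_pos]
    rw [h4, inv_mul_eq_div, le_div_iff₀ h3] at hb
    linarith
  refine (ENNReal.ofReal_le_ofReal hb2).trans ?_
  rw [intervalIntegral.integral_of_le (by linarith [Real.pi_pos]),
    MeasureTheory.integral_Ioc_eq_integral_Ioo, ofReal_integral_eq_lintegral_ofReal]
  · refine le_of_eq (lintegral_congr fun θ => ?_)
    rw [hpc, ENNReal.ofReal_pow (norm_nonneg _), ofReal_norm]
    rfl
  · exact (hcont.integrableOn_Icc).mono_set Set.Ioo_subset_Icc_self
  · exact Filter.Eventually.of_forall fun θ => by positivity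

lemma aux_deriv (φ : ℝ → ℂ) (hφ : IntegrableOn φ (Set.Ioo 0 1)) (z : ℂ) (hz : ‖z‖ < 1) :
    IntegrableOn (fun t : ℝ => φ t * t / (1 - t * z) ^ 2) (Set.Ioo 0 1) ∧
    HasDerivAt (Hop φ) (∫ t in Set.Ioo (0:ℝ) 1, φ t * t / (1 - t * z) ^ 2) z := by
  obtain ⟨ρ, hρ1, hρ2⟩ := exists_between hz
  have hlow : ∀ t ∈ Set.Ioo (0:ℝ) 1, ∀ x ∈ Metric.ball (0:ℂ) ρ, 1 - ρ ≤ ‖1 - t * x‖ := by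
    intro t ht x hx
    have h1 := norm_sub_norm_le (1:ℂ) (t * x)
    rw [mem_ball_zero_iff] at hx
    rw [norm_one, norm_mul, Complex.norm_real, Real.norm_of_nonneg ht.1.le] at h1
    have : t * ‖x‖ ≤ 1 * ‖x‖ := by gcongr; exact ht.2.le
    linarith
  have hne : ∀ t ∈ Set.Ioo (0:ℝ) 1, ∀ x ∈ Metric.ball (0:ℂ) ρ, (1 - t * x : ℂ) ≠ 0 := by
    intro t ht x hx h0
    have := hlow t ht x hx
    rw [h0, norm_zero] at this
    linarith
  have hmem : Metric.ball (0:ℂ) ρ ∈ nhds z :=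
    Metric.isOpen_ball.mem_nhds (by rwa [mem_ball_zero_iff])
  have hφm := hφ.aestronglyMeasurable
  have hzb : z ∈ Metric.ball (0:ℂ) ρ := mem_of_mem_nhds hmem
  unfold IntegrableOn
  unfold Hop
  refine hasDerivAt_integral_of_dominated_loc_of_deriv_le (μ := volume.restrict (Set.Ioo 0 1))
    (F := fun (x : ℂ) (t : ℝ) => φ t / (1 - t * x))
    (F' := fun (x : ℂ) (t : ℝ) => φ t * t / (1 - t * x) ^ 2)
    (bound := fun t => (1 - ρ)⁻¹ ^ 2 * ‖φ t‖) hmem ?_ ?_ ?_ ?_ ?_ ?_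
  · refine Filter.Eventually.of_forall fun x => ?_
    simp_rw [div_eq_mul_inv]
    exact hφm.mul (Measurable.aestronglyMeasurable (by fun_prop))
  · have hm : AEStronglyMeasurable (fun t : ℝ => φ t / (1 - t * z))
        (volume.restrict (Set.Ioo 0 1)) := by
      simp_rw [div_eq_mul_inv]
      exact hφm.mul (Measurable.aestronglyMeasurable (by fun_prop))
    refine Integrable.mono' (hφ.norm.const_mul (1 - ρ)⁻¹) hm ?_
    filter_upwards [ae_restrict_mem measurableSet_Ioo] with t ht
    rw [norm_div, div_eq_inv_mul]
    have := hlow t ht z hzb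
    have h' : 0 < 1 - ρ := by linarith
    gcongr
  · simp_rw [div_eq_mul_inv, mul_assoc]
    exact hφm.mul (Measurable.aestronglyMeasurable (by fun_prop))
  · filter_upwards [ae_restrict_mem measurableSet_Ioo] with t ht x hx
    have := hlow t ht x hx
    have h' : 0 < 1 - ρ := by linarith
    rw [norm_div, div_eq_inv_mul, norm_pow, norm_mul, Complex.norm_real,
      Real.norm_of_nonneg ht.1.le, ← inv_pow]
    have h3 : ‖φ t‖ * t ≤ ‖φ t‖ := mul_le_of_le_one_right (norm_nonneg _) ht.2.le
    have h4 : 0 ≤ ‖φ t‖ * t := mul_nonneg (norm_nonneg _) ht.1.le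
    gcongr
  · exact hφ.norm.const_mul _
  · filter_upwards [ae_restrict_mem measurableSet_Ioo] with t ht x hx
    have h1 : HasDerivAt (fun x : ℂ => 1 - t * x) (-t : ℂ) x := by
      simpa using ((hasDerivAt_id x).const_mul (t:ℂ)).const_sub 1
    have h2 := (hasDerivAt_const x (φ t)).div h1 (hne t ht x hx)
    have e : φ t * t / (1 - t * x) ^ 2 = (0 * (1 - t * x) - φ t * -t) / (1 - t * x) ^ 2 := by
      ring
    rw [e]
    exact h2

lemma aux_lower (ψ : ℝ → ℝ) (hψ : IntegrableOn ψ (Set.Ioo 0 1)) (h0 : ∀ t, 0 ≤ ψ t)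
    (r : ℝ) (hr : r ∈ Set.Ioo (0:ℝ) 1) (hr0 : ∀ t, t ≤ r → ψ t = 0) (x : ℝ)
    (hx : x ∈ Set.Ioo (0:ℝ) 1) :
    r * (∫ t in Set.Ioo (0:ℝ) 1, ψ t) / (1 - r * x) ^ 2 ≤ ‖deriv (Hop fun t => (ψ t : ℂ)) x‖ := by
  obtain ⟨hi, hd⟩ := aux_deriv (fun t => (ψ t : ℂ)) hψ.ofReal (x : ℂ)
    (by rw [Complex.norm_real, Real.norm_of_nonneg hx.1.le]; exact hx.2)
  have hfun : (fun t : ℝ => (ψ t : ℂ) * t / (1 - t * x) ^ 2) =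
      fun t : ℝ => ((ψ t * t / (1 - t * x) ^ 2 : ℝ) : ℂ) := by
    funext t; push_cast; rfl
  rw [hd.deriv]
  rw [hfun] at hi ⊢
  rw [integral_complex_ofReal, Complex.norm_real]
  refine le_trans ?_ (le_abs_self _)
  have hi' : IntegrableOn (fun t : ℝ => ψ t * t / (1 - t * x) ^ 2) (Set.Ioo 0 1) := by
    exact hi.re
  have e : r * (∫ t in Set.Ioo (0:ℝ) 1, ψ t) / (1 - r * x) ^ 2 =
      ∫ t in Set.Ioo (0:ℝ) 1, (r / (1 - r * x) ^ 2) * ψ t := by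
    rw [integral_const_mul]; ring
  rw [e]
  refine setIntegral_mono_on (hψ.const_mul _) hi' measurableSet_Ioo fun t ht => ?_
  rcases le_or_gt t r with h | h
  · rw [hr0 t h]; simp
  · have h1 : 0 < 1 - t * x := by nlinarith [ht.1, ht.2, hx.1, hx.2]
    have h2 : 1 - t * x ≤ 1 - r * x := by nlinarith [hx.1]
    have h3 : r / (1 - r * x) ^ 2 ≤ t / (1 - t * x) ^ 2 := by
      have := hr.1
      have := ht.1
      gcongr
    calc r / (1 - r * x) ^ 2 * ψ t ≤ t / (1 - t * x) ^ 2 * ψ t :=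
          mul_le_mul_of_nonneg_right h3 (h0 t)
      _ = ψ t * t / (1 - t * x) ^ 2 := by ring

lemma aux_Dv (v : ℝ → ℝ) (hv : RadialWeight v) (ψ : ℝ → ℝ) (hψ : IntegrableOn ψ (Set.Ioo 0 1))
    (h0 : ∀ t, 0 ≤ ψ t)
    (r : ℝ) (hr : r ∈ Set.Ioo (0:ℝ) 1) (hr0 : ∀ t, t ≤ r → ψ t = 0) :
    ENNReal.ofReal (r ^ 2 * (∫ t in Set.Ioo (0:ℝ) 1, ψ t) ^ 2 / 8) *
      ∫⁻ s in Set.Ioo (0:ℝ) 1, ENNReal.ofReal (s * v s / (1 - r * s) ^ 3) ≤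
    DvSq v (Hop fun t => (ψ t : ℂ)) := by
  set B := ∫ t in Set.Ioo (0:ℝ) 1, ψ t with hB
  have hB0 : 0 ≤ B := integral_nonneg h0
  set f := Hop fun t => (ψ t : ℂ) with hf
  have hdf : DifferentiableOn ℂ f (Metric.ball 0 1) := fun z hz =>
    (aux_deriv (fun t => (ψ t : ℂ)) hψ.ofReal z
      (by rwa [mem_ball_zero_iff] at hz)).2.differentiableAt.differentiableWithinAt
  have hdF : DifferentiableOn ℂ (deriv f) (Metric.ball 0 1) := hdf.deriv Metric.isOpen_ball
  have hcirc : ∀ s ∈ Set.Ioo (0:ℝ) 1, ENNReal.ofReal (π * (r ^ 2 * B ^ 2 / 8 / (1 - r * s) ^ 3)) ≤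
      ∫⁻ θ in Set.Ioo (-π) π,
        (‖deriv f (Complex.polarCoord.symm (s, θ))‖₊ : ENNReal) ^ 2 := by
    intro s hs
    refine le_trans (ENNReal.ofReal_le_ofReal ?_) (aux_circle (deriv f) hdF s r hs hr)
    have hrp := hr.1
    have hsp := hs.1
    have hrs : 0 < r * s := by positivity
    have hrs1 : r * s < 1 := by nlinarith [hr.2, hs.2]
    have h1 := aux_lower ψ hψ h0 r hr hr0 (r * s ^ 2) ⟨by positivity, by nlinarith [hr.2, hs.2]⟩
    rw [← hB] at h1
    have h2 : r * B / (2 * (1 - r * s)) ^ 2 ≤ r * B / (1 - r * (r * s ^ 2)) ^ 2 := by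
      have : 0 < 1 - r * (r * s ^ 2) := by nlinarith
      gcongr
      nlinarith [sq_nonneg (1 - r * s)]
    have h3 := h2.trans h1
    have h4 : 0 < 1 - r * s := by linarith
    calc π * (r ^ 2 * B ^ 2 / 8 / (1 - r * s) ^ 3)
        = 2 * π * (1 - r * s) * (r * B / (2 * (1 - r * s)) ^ 2) ^ 2 := by
          field_simp; norm_num
      _ ≤ _ := by gcongr
  have hGm : Measurable fun z : ℂ => (‖deriv f z‖₊ : ENNReal) ^ 2 * ENNReal.ofReal (v ‖z‖) := by
    have h1 : Measurable (deriv f) := measurable_deriv f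
    have h2 := hv.1
    fun_prop
  have hpm : Measurable fun p : ℝ × ℝ => Complex.polarCoord.symm p := by
    simp_rw [Complex.polarCoord_symm_apply]
    fun_prop
  have hpolar : ∫⁻ s in Set.Ioo (0:ℝ) 1, ENNReal.ofReal s * ENNReal.ofReal (v s) *
        ∫⁻ θ in Set.Ioo (-π) π, (‖deriv f (Complex.polarCoord.symm (s, θ))‖₊ : ENNReal) ^ 2 ≤
      ∫⁻ z in Metric.ball (0:ℂ) 1, (‖deriv f z‖₊ : ENNReal)^2 * ENNReal.ofReal (v ‖z‖) := by
    rw [← lintegral_indicator Metric.isOpen_ball.measurableSet,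
      ← Complex.lintegral_comp_polarCoord_symm]
    have hsub : Set.Ioo (0:ℝ) 1 ×ˢ Set.Ioo (-π) π ⊆ polarCoord.target := by
      rw [polarCoord_target]
      exact Set.prod_mono (fun x hx => hx.1) (Set.Subset.refl _)
    refine le_trans ?_ (lintegral_mono_set hsub)
    rw [Measure.volume_eq_prod, setLIntegral_prod]
    · refine setLIntegral_mono' measurableSet_Ioo fun s hs => ?_
      rw [← lintegral_const_mul]
      · refine lintegral_mono fun θ => ?_
        have hn : ‖Complex.polarCoord.symm (s, θ)‖ = s := by
          rw [Complex.norm_polarCoord_symm]; exact abs_of_pos hs.1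
        have hmem : Complex.polarCoord.symm (s, θ) ∈ Metric.ball (0:ℂ) 1 := by
          rw [mem_ball_zero_iff, hn]; exact hs.2
        rw [Set.indicator_of_mem hmem, hn, smul_eq_mul]
        exact le_of_eq (by ring)
      · have h1 : Measurable (deriv f) := measurable_deriv f
        have h2 : Measurable fun θ : ℝ => Complex.polarCoord.symm (s, θ) :=
          hpm.comp (by fun_prop)
        fun_prop
    · refine Measurable.aemeasurable ?_
      have h3 := (hGm.indicator (Metric.isOpen_ball (x := (0:ℂ)) (ε := 1)).measurableSet).comp hpm
      exact Measurable.mul (by fun_prop) h3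
  have hpi : ENNReal.ofReal π ≠ 0 := by simpa using Real.pi_pos
  unfold DvSq
  refine le_trans ?_ le_add_self
  calc _ = (ENNReal.ofReal π)⁻¹ * (ENNReal.ofReal π * (ENNReal.ofReal (r ^ 2 * B ^ 2 / 8) *
      ∫⁻ s in Set.Ioo (0:ℝ) 1, ENNReal.ofReal (s * v s / (1 - r * s) ^ 3))) := by
        rw [← mul_assoc, ENNReal.inv_mul_cancel hpi ENNReal.ofReal_ne_top, one_mul]
    _ ≤ _ := by
      refine mul_le_mul_right ?_ _
      refine le_trans ?_ hpolar
      rw [← mul_assoc, ← ENNReal.ofReal_mul Real.pi_pos.le, ← lintegral_const_mul']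
      · refine setLIntegral_mono' measurableSet_Ioo fun s hs => ?_
        have hvs := hv.2.1 s ⟨hs.1.le, hs.2⟩
        refine le_trans (le_of_eq ?_) (mul_le_mul_right (hcirc s hs) _)
        have h4 : 0 < 1 - r * s := by nlinarith [hr.1, hr.2, hs.1, hs.2]
        have h5 := hs.1
        have h6 := Real.pi_pos
        rw [← ENNReal.ofReal_mul h5.le, ← ENNReal.ofReal_mul (by positivity),
          ← ENNReal.ofReal_mul (by positivity)]
        congr 1
        ring
      · exact ENNReal.ofReal_ne_top

lemma aux_pos {f : ℝ → ℝ} {a b : ℝ} (hab : a < b)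
    (hm : AEMeasurable f (volume.restrict (Set.Ioo a b))) (hpos : ∀ x ∈ Set.Ioo a b, 0 < f x) :
    ∫⁻ x in Set.Ioo a b, ENNReal.ofReal (f x) ≠ 0 := by
  intro h
  rw [lintegral_eq_zero_iff' hm.ennreal_ofReal] at h
  have h2 : ∀ᵐ x ∂(volume.restrict (Set.Ioo a b)), False := by
    filter_upwards [h, ae_restrict_mem measurableSet_Ioo] with x hx hx2
    have := hpos x hx2
    simp at hx
    linarith
  rw [Filter.eventually_false_iff_eq_bot, ae_eq_bot, Measure.restrict_eq_zero, Real.volume_Ioo] at h2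
  simp at h2
  linarith

lemma aux_IJ (v : ℝ → ℝ) (hv : RadialWeight v) : ∃ C : ENNReal, C ≠ ⊤ ∧
    ∀ r ∈ Set.Ioo (0:ℝ) 1, ∫⁻ t in Set.Ioo (0:ℝ) 1, ENNReal.ofReal (v t / (1 - r * t) ^ 3) ≤
      C * ∫⁻ t in Set.Ioo (0:ℝ) 1, ENNReal.ofReal (t * v t / (1 - r * t) ^ 3) := by
  obtain ⟨hm, hp, hi⟩ := hv
  set I0 := ∫⁻ t in Set.Ioo (0:ℝ) 1, ENNReal.ofReal (v t) with hI0
  set J0 := ∫⁻ t in Set.Ioo (0:ℝ) 1, ENNReal.ofReal (t * v t) with hJ0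
  have hI0t : I0 ≠ ⊤ := (Integrable.lintegral_lt_top hi).ne
  have hJ0z : J0 ≠ 0 := aux_pos one_pos (by fun_prop)
    fun t ht => mul_pos ht.1 (hp t ⟨ht.1.le, ht.2⟩)
  have hJ0t : J0 ≠ ⊤ := by
    refine ne_top_of_le_ne_top hI0t (setLIntegral_mono' measurableSet_Ioo fun t ht => ?_)
    refine ENNReal.ofReal_le_ofReal ?_
    have := hp t ⟨ht.1.le, ht.2⟩
    nlinarith [ht.2]
  refine ⟨2 + 8 * (I0 / J0), ?_, fun r hr => ?_⟩
  · exact ENNReal.add_ne_top.2 ⟨by simp, ENNReal.mul_ne_top (by simp) (ENNReal.div_ne_top hI0t hJ0z)⟩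
  set J := ∫⁻ t in Set.Ioo (0:ℝ) 1, ENNReal.ofReal (t * v t / (1 - r * t) ^ 3) with hJ
  have hJJ : J0 ≤ J := by
    refine setLIntegral_mono' measurableSet_Ioo fun t ht => ENNReal.ofReal_le_ofReal ?_
    have h1 := mul_pos ht.1 (hp t ⟨ht.1.le, ht.2⟩)
    have h2 : 0 < 1 - r * t := by nlinarith [hr.1, hr.2, ht.1, ht.2]
    have h3 : 1 - r * t ≤ 1 := by nlinarith [hr.1, ht.1]
    rw [le_div_iff₀ (by positivity)]
    exact mul_le_of_le_one_right h1.le (pow_le_one₀ h2.le h3)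
  calc _ ≤ ∫⁻ t in Set.Ioo (0:ℝ) 1,
        (2 * ENNReal.ofReal (t * v t / (1 - r * t) ^ 3) + 8 * ENNReal.ofReal (v t)) := by
        refine setLIntegral_mono' measurableSet_Ioo fun t ht => ?_
        have h0 := hp t ⟨ht.1.le, ht.2⟩
        have h2 : 0 < 1 - r * t := by nlinarith [hr.1, hr.2, ht.1, ht.2]
        have ht0 := ht.1
        rw [show (2:ENNReal) = ENNReal.ofReal 2 by simp, show (8:ENNReal) = ENNReal.ofReal 8 by simp,
          ← ENNReal.ofReal_mul (by norm_num), ← ENNReal.ofReal_mul (by norm_num),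
          ← ENNReal.ofReal_add (by positivity) (by positivity)]
        refine ENNReal.ofReal_le_ofReal ?_
        rcases le_or_gt (1/2) t with h | h
        · have : v t / (1 - r * t) ^ 3 ≤ 2 * (t * v t / (1 - r * t) ^ 3) := by
            rw [← mul_div_assoc]
            gcongr
            nlinarith
          linarith
        · have : v t / (1 - r * t) ^ 3 ≤ v t / (1 / 2) ^ 3 := by
            gcongr
            nlinarith [hr.1, hr.2]
          have h6 : v t / (1 / 2) ^ 3 = 8 * v t := by ring
          have h5 : 0 ≤ 2 * (t * v t / (1 - r * t) ^ 3) := by positivity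
          linarith
    _ = 2 * J + 8 * I0 := by
        rw [lintegral_add_right _ (by fun_prop), lintegral_const_mul _ (by fun_prop),
          lintegral_const_mul _ (by fun_prop)]
    _ = 2 * J + 8 * (I0 / J0 * J0) := by rw [ENNReal.div_mul_cancel hJ0z hJ0t]
    _ ≤ 2 * J + 8 * (I0 / J0 * J) := by gcongr
    _ = _ := by ring

lemma aux_prim (m : ℝ) (h0 : 0 < m) (h1 : m < 1) :
    ∫⁻ s in Set.Ioo 0 m, ENNReal.ofReal (((1 - s) ^ 4)⁻¹) ≤
      ENNReal.ofReal (((1 - m) ^ 3)⁻¹) := by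
  have hc : ContinuousOn (fun s : ℝ => ((1 - s) ^ 4)⁻¹) (Set.uIcc 0 m) := by
    refine ContinuousOn.inv₀ (by fun_prop) fun s hs => ?_
    rw [Set.uIcc_of_le h0.le] at hs
    have : 0 < 1 - s := by linarith [hs.2]
    positivity
  have hi := hc.intervalIntegrable (μ := volume)
  have hftc : ∫ s in (0:ℝ)..m, ((1 - s) ^ 4)⁻¹ =
      ((1 - m) ^ 3)⁻¹ / 3 - ((1 - 0) ^ 3)⁻¹ / 3 := by
    refine intervalIntegral.integral_eq_sub_of_hasDerivAt
      (f := fun s : ℝ => ((1 - s) ^ 3)⁻¹ / 3) (fun s hs => ?_) hi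
    rw [Set.uIcc_of_le h0.le] at hs
    have hp : 0 < 1 - s := by linarith [hs.2]
    have h2 : HasDerivAt (fun s : ℝ => 1 - s) (-1) s := (hasDerivAt_id s).const_sub 1
    have h3 := ((h2.pow 3).inv (by simp; positivity)).div_const 3
    convert! h3 using 1
    simp
    field_simp
  have hp : 0 < 1 - m := by linarith
  rw [← ofReal_integral_eq_lintegral_ofReal, ← integral_Ioc_eq_integral_Ioo,
    ← intervalIntegral.integral_of_le h0.le, hftc]
  · refine ENNReal.ofReal_le_ofReal ?_
    have : 0 < ((1 - m) ^ 3)⁻¹ := by positivity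
    norm_num
    linarith
  · exact ((intervalIntegrable_iff_integrableOn_Ioc_of_le h0.le).1 hi).mono_set
      Set.Ioo_subset_Ioc_self
  · exact Filter.Eventually.of_forall fun s => by positivity

lemma aux_A (v : ℝ → ℝ) (hv : RadialWeight v) (r : ℝ) (hr : r ∈ Set.Ioo (0:ℝ) 1) :
    ∫⁻ s in Set.Ioo (0:ℝ) r, ENNReal.ofReal (hatw v s / (1-s)^4) ≤
      8 * ∫⁻ t in Set.Ioo (0:ℝ) 1, ENNReal.ofReal (v t / (1 - r * t) ^ 3) := by
  obtain ⟨hm, hp, hi⟩ := hv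
  set S : Set (ℝ × ℝ) := {p | p.1 < p.2} with hS
  have hSm : MeasurableSet S := measurableSet_lt measurable_fst measurable_snd
  set k : ℝ × ℝ → ENNReal := S.indicator
    fun p => ENNReal.ofReal (((1 - p.1) ^ 4)⁻¹) * ENNReal.ofReal (v p.2) with hk
  have hkm : Measurable k := Measurable.indicator (by fun_prop) hSm
  have hA : ∀ s ∈ Set.Ioo (0:ℝ) r, ENNReal.ofReal (hatw v s / (1-s)^4) =
      ∫⁻ t in Set.Ioo (0:ℝ) 1, k (s, t) := by
    intro s hs
    have hs1 : s < 1 := hs.2.trans hr.2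
    have hsub : Set.Ioo s 1 ⊆ Set.Ioo 0 1 := Set.Ioo_subset_Ioo_left hs.1.le
    have e1 : ∫⁻ t in Set.Ioo (0:ℝ) 1, k (s, t) = ∫⁻ t in Set.Ioo (0:ℝ) 1,
        (Set.Ioo s 1).indicator
          (fun t => ENNReal.ofReal (((1 - s) ^ 4)⁻¹) * ENNReal.ofReal (v t)) t := by
      refine setLIntegral_congr_fun measurableSet_Ioo fun t ht => ?_
      by_cases h : s < t
      · rw [hk, Set.indicator_of_mem (show (s, t) ∈ S from h),
          Set.indicator_of_mem (show t ∈ Set.Ioo s 1 from ⟨h, ht.2⟩)]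
      · rw [hk, Set.indicator_of_notMem (show (s, t) ∉ S from h),
          Set.indicator_of_notMem (show t ∉ Set.Ioo s 1 from fun h' => h h'.1)]
    rw [e1, setLIntegral_indicator measurableSet_Ioo, Set.inter_eq_left.2 hsub,
      lintegral_const_mul _ (by fun_prop), ← ofReal_integral_eq_lintegral_ofReal (hi.mono_set hsub),
      ← ENNReal.ofReal_mul (by positivity), hatw, intervalIntegral.integral_of_le hs1.le,
      integral_Ioc_eq_integral_Ioo]
    · congr 1; ring
    · filter_upwards [ae_restrict_mem measurableSet_Ioo] with t ht
      exact (hp t ⟨(hsub ht).1.le, ht.2⟩).le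
  rw [setLIntegral_congr_fun measurableSet_Ioo hA, lintegral_lintegral_swap (f := fun s t => k (s, t)) hkm.aemeasurable,
    ← lintegral_const_mul' _ _ (by simp)]
  refine setLIntegral_mono' measurableSet_Ioo fun t ht => ?_
  have hvt := hp t ⟨ht.1.le, ht.2⟩
  set m := min r t with hmdef
  have hm0 : 0 < m := lt_min hr.1 ht.1
  have hm1 : m < 1 := (min_le_left _ _).trans_lt hr.2
  have hrt : 1 - r * t ≤ 2 * (1 - m) := by
    rcases le_total r t with h | h
    · rw [hmdef, min_eq_left h]; nlinarith [hr.1, hr.2, ht.1, ht.2]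
    · rw [hmdef, min_eq_right h]; nlinarith [hr.1, hr.2, ht.1, ht.2]
  have hrt0 : 0 < 1 - r * t := by nlinarith [hr.1, hr.2, ht.1, ht.2]
  have hpm : 0 < 1 - m := by linarith
  calc ∫⁻ s in Set.Ioo (0:ℝ) r, k (s, t)
      = ∫⁻ s in Set.Ioo (0:ℝ) r, (Set.Ioo 0 m).indicator
          (fun s => ENNReal.ofReal (((1 - s) ^ 4)⁻¹) * ENNReal.ofReal (v t)) s := by
        refine setLIntegral_congr_fun measurableSet_Ioo fun s hs => ?_
        by_cases h : s < t
        · rw [hk, Set.indicator_of_mem (show (s, t) ∈ S from h),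
            Set.indicator_of_mem (show s ∈ Set.Ioo 0 m from ⟨hs.1, lt_min hs.2 h⟩)]
        · rw [hk, Set.indicator_of_notMem (show (s, t) ∉ S from h),
            Set.indicator_of_notMem (show s ∉ Set.Ioo 0 m from
              fun h' => h (h'.2.trans_le (min_le_right _ _)))]
    _ = (∫⁻ s in Set.Ioo (0:ℝ) m, ENNReal.ofReal (((1 - s) ^ 4)⁻¹)) * ENNReal.ofReal (v t) := by
        rw [setLIntegral_indicator measurableSet_Ioo,
          Set.inter_eq_left.2 (Set.Ioo_subset_Ioo_right (min_le_left _ _)),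
          lintegral_mul_const _ (by fun_prop)]
    _ ≤ ENNReal.ofReal (((1 - m) ^ 3)⁻¹) * ENNReal.ofReal (v t) := by
        gcongr; exact aux_prim m hm0 hm1
    _ ≤ _ := by
        rw [show (8:ENNReal) = ENNReal.ofReal 8 by simp, ← ENNReal.ofReal_mul (by positivity),
          ← ENNReal.ofReal_mul (by positivity)]
        refine ENNReal.ofReal_le_ofReal ?_
        have h7 : ((1 - m) ^ 3)⁻¹ ≤ (((1 - r * t) / 2) ^ 3)⁻¹ := by
          refine inv_anti₀ (by positivity) ?_
          gcongr
          linarith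
        calc ((1 - m) ^ 3)⁻¹ * v t ≤ (((1 - r * t) / 2) ^ 3)⁻¹ * v t :=
              mul_le_mul_of_nonneg_right h7 hvt.le
          _ = 8 * (v t / (1 - r * t) ^ 3) := by field_simp; norm_num

lemma aux_hat_cont (v : ℝ → ℝ) (hv : RadialWeight v) : ContinuousOn (hatw v) (Set.Icc 0 1) := by
  have h : IntegrableOn v (Set.uIcc 0 1) := by
    rw [Set.uIcc_of_le zero_le_one, integrableOn_Icc_iff_integrableOn_Ioo]
    exact hv.2.2
  have := intervalIntegral.continuousOn_primitive_interval_left h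
  rwa [Set.uIcc_of_le zero_le_one] at this

lemma aux_hat_pos (v : ℝ → ℝ) (hv : RadialWeight v) (s : ℝ) (hs : s ∈ Set.Ico (0:ℝ) 1) :
    0 < hatw v s := by
  refine intervalIntegral.intervalIntegral_pos_of_pos_on ?_ (fun x hx => ?_) hs.2
  · rw [intervalIntegrable_iff_integrableOn_Ioo_of_le hs.2.le]
    exact hv.2.2.mono_set (Set.Ioo_subset_Ioo_left hs.1)
  · exact hv.2.1 x ⟨hs.1.trans hx.1.le, hx.2⟩

lemma aux_test (v : ℝ → ℝ) (hv : RadialWeight v)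
    (hvg2 : ∫⁻ s in Set.Ioo (0:ℝ) 1, ENNReal.ofReal ((1-s)^2 / hatw v s) < ⊤)
    (K : ℝ) (hK : 0 < K)
    (hH : ∀ φ : ℝ → ℂ, Measurable φ → L2V2sq v φ < ⊤ →
        (DvSq v (Hop φ)) ^ (1/2 : ℝ) ≤ ENNReal.ofReal K * (L2V2sq v φ) ^ (1/2 : ℝ))
    (r : ℝ) (hr : r ∈ Set.Ico (1/2:ℝ) 1) :
    (∫⁻ s in Set.Ioo (0:ℝ) 1, ENNReal.ofReal (s * v s / (1 - r * s) ^ 3)) *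
      ∫⁻ s in Set.Ioo r 1, ENNReal.ofReal ((1-s)^2 / hatw v s) ≤ 32 * ENNReal.ofReal K ^ 2 := by
  set J := ∫⁻ s in Set.Ioo (0:ℝ) 1, ENNReal.ofReal (s * v s / (1 - r * s) ^ 3) with hJ
  set B := ∫⁻ s in Set.Ioo r 1, ENNReal.ofReal ((1-s)^2 / hatw v s) with hB
  have hr0 : 0 < r := by linarith [hr.1]
  have hsub : Set.Ioo r 1 ⊆ Set.Ioo 0 1 := Set.Ioo_subset_Ioo_left hr0.le
  have hhp : ∀ t ∈ Set.Ioo r 1, 0 < hatw v t := fun t ht =>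
    aux_hat_pos v hv t ⟨(hsub ht).1.le, ht.2⟩
  have hgc : ContinuousOn (fun t => (1-t)^2 / hatw v t) (Set.Ioo r 1) := by
    refine ContinuousOn.div (by fun_prop) ?_ fun t ht => (hhp t ht).ne'
    exact (aux_hat_cont v hv).mono (hsub.trans Set.Ioo_subset_Icc_self)
  set ψ : ℝ → ℝ := (Set.Ioo r 1).indicator fun t => (1-t)^2 / hatw v t with hψ
  have hψm : Measurable ψ := by
    rw [hψ, ← Set.piecewise_eq_indicator]
    exact hgc.measurable_piecewise continuousOn_const measurableSet_Ioo
  have hψ0 : ∀ t, 0 ≤ ψ t := by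
    intro t
    refine Set.indicator_nonneg (fun x hx => ?_) t
    have := hhp x hx
    positivity
  have hψr : ∀ t, t ≤ r → ψ t = 0 := fun t ht =>
    Set.indicator_of_notMem (fun h => absurd h.1 (not_lt.2 ht)) _
  have hBψ : ∫⁻ t in Set.Ioo (0:ℝ) 1, ENNReal.ofReal (ψ t) = B := by
    have e : ∀ t, ENNReal.ofReal (ψ t) =
        (Set.Ioo r 1).indicator (fun t => ENNReal.ofReal ((1-t)^2 / hatw v t)) t := by
      intro t
      by_cases h : t ∈ Set.Ioo r 1
      · rw [hψ, Set.indicator_of_mem h, Set.indicator_of_mem h]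
      · rw [hψ, Set.indicator_of_notMem h, Set.indicator_of_notMem h, ENNReal.ofReal_zero]
    simp_rw [e]
    rw [setLIntegral_indicator measurableSet_Ioo, Set.inter_eq_left.2 hsub]
  have hBt : B ≠ ⊤ := ((lintegral_mono_set hsub).trans_lt hvg2).ne
  have hB0 : B ≠ 0 := by
    refine aux_pos hr.2 (hgc.aemeasurable measurableSet_Ioo) fun t ht => ?_
    have := hhp t ht
    have : 0 < 1 - t := by linarith [ht.2]
    positivity
  have hψi : IntegrableOn ψ (Set.Ioo 0 1) := by
    refine ⟨hψm.aestronglyMeasurable, ?_⟩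
    rw [hasFiniteIntegral_iff_ofReal (Filter.Eventually.of_forall hψ0), hBψ]
    exact hBt.lt_top
  have hBr : ENNReal.ofReal (∫ t in Set.Ioo (0:ℝ) 1, ψ t) = B := by
    rw [ofReal_integral_eq_lintegral_ofReal hψi (Filter.Eventually.of_forall hψ0), hBψ]
  have hL2 : L2V2sq v (fun t => (ψ t : ℂ)) = B := by
    rw [← hBψ, L2V2sq]
    refine setLIntegral_congr_fun measurableSet_Ioo fun t ht => ?_
    have e : ((‖(ψ t : ℂ)‖₊ : ENNReal)) = ENNReal.ofReal (ψ t) := by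
      have : ‖(ψ t : ℂ)‖ = ψ t := by
        rw [Complex.norm_real, Real.norm_of_nonneg (hψ0 t)]
      calc ((‖(ψ t : ℂ)‖₊ : ENNReal)) = ENNReal.ofReal ‖(ψ t : ℂ)‖ := (ofReal_norm (ψ t : ℂ)).symm
        _ = _ := by rw [this]
    have hh := aux_hat_pos v hv t ⟨ht.1.le, ht.2⟩
    have h1t : 0 < 1 - t := by linarith [ht.2]
    simp only [e]
    rw [← ENNReal.ofReal_pow (hψ0 t), ← ENNReal.ofReal_mul (by positivity)]
    congr 1
    by_cases h : t ∈ Set.Ioo r 1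
    · rw [hψ, Set.indicator_of_mem h]
      field_simp
    · rw [hψ, Set.indicator_of_notMem h]; simp
  have h1 := hH (fun t => (ψ t : ℂ)) (by fun_prop) (by rw [hL2]; exact hBt.lt_top)
  rw [hL2] at h1
  have h2 : DvSq v (Hop fun t => (ψ t : ℂ)) ≤ ENNReal.ofReal K ^ 2 * B := by
    have h3 := ENNReal.rpow_le_rpow h1 (show (0:ℝ) ≤ 2 by norm_num)
    rw [ENNReal.mul_rpow_of_nonneg _ _ (by norm_num), ← ENNReal.rpow_mul, ← ENNReal.rpow_mul] at h3
    norm_num at h3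
    exact h3
  have h4 := (aux_Dv v hv ψ hψi hψ0 r ⟨hr0, hr.2⟩ hψr).trans h2
  rw [← hJ] at h4
  set b := ∫ t in Set.Ioo (0:ℝ) 1, ψ t with hb
  have hb0 : 0 ≤ b := integral_nonneg hψ0
  have h5 : B ^ 2 ≤ 32 * ENNReal.ofReal (r ^ 2 * b ^ 2 / 8) := by
    rw [← hBr, ← ENNReal.ofReal_pow hb0, show (32:ENNReal) = ENNReal.ofReal 32 by simp,
      ← ENNReal.ofReal_mul (by norm_num)]
    refine ENNReal.ofReal_le_ofReal ?_
    have : (1:ℝ) ≤ 4 * r ^ 2 := by nlinarith [hr.1]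
    nlinarith [mul_le_mul_of_nonneg_right this (sq_nonneg b)]
  have h6 : J * B * B ≤ 32 * ENNReal.ofReal K ^ 2 * B := by
    calc J * B * B = B ^ 2 * J := by ring
      _ ≤ 32 * ENNReal.ofReal (r ^ 2 * b ^ 2 / 8) * J := by gcongr
      _ = 32 * (ENNReal.ofReal (r ^ 2 * b ^ 2 / 8) * J) := by ring
      _ ≤ 32 * (ENNReal.ofReal K ^ 2 * B) := by gcongr
      _ = _ := by ring
  exact (ENNReal.mul_le_mul_iff_left hB0 hBt).1 h6

theorem statement5 (v : ℝ → ℝ) (hv : RadialWeight v) (hD : DoublingD v)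
    (hvg2 : ∫⁻ s in Set.Ioo (0:ℝ) 1, ENNReal.ofReal ((1-s)^2 / hatw v s) < ⊤)
    (hM1 : M1v v < ⊤) :
    ∃ C : ℝ, 0 < C ∧ ∀ K : ℝ, 0 < K →
      (∀ φ : ℝ → ℂ, Measurable φ → L2V2sq v φ < ⊤ →
        (DvSq v (Hop φ)) ^ (1/2 : ℝ) ≤ ENNReal.ofReal K * (L2V2sq v φ) ^ (1/2 : ℝ)) →
      M2v v < ⊤ ∧ M2v v ≤ ENNReal.ofReal C * M1v v * ENNReal.ofReal K := by
  obtain ⟨C1, hC1t, hC1⟩ := aux_IJ v hv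
  have hsub : Set.Ioo (1/2:ℝ) 1 ⊆ Set.Ioo 0 1 := Set.Ioo_subset_Ioo_left (by norm_num)
  have hsub2 : Set.Ioo (0:ℝ) (1/2) ⊆ Set.Ioo 0 1 := Set.Ioo_subset_Ioo_right (by norm_num)
  have hhp : ∀ t ∈ Set.Ioo (0:ℝ) 1, 0 < hatw v t := fun t ht =>
    aux_hat_pos v hv t ⟨ht.1.le, ht.2⟩
  have hhc : ContinuousOn (hatw v) (Set.Ioo 0 1) :=
    (aux_hat_cont v hv).mono Set.Ioo_subset_Icc_self
  set B0 := ∫⁻ s in Set.Ioo (0:ℝ) 1, ENNReal.ofReal ((1-s)^2 / hatw v s) with hB0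
  set Bh := ∫⁻ s in Set.Ioo (1/2:ℝ) 1, ENNReal.ofReal ((1-s)^2 / hatw v s) with hBh
  have hBh0 : Bh ≠ 0 := by
    refine aux_pos (by norm_num) (ContinuousOn.aemeasurable ?_ measurableSet_Ioo) fun t ht => ?_
    · exact ContinuousOn.div (by fun_prop) (hhc.mono hsub) fun t ht => (hhp t (hsub ht)).ne'
    · have := hhp t (hsub ht)
      have : 0 < 1 - t := by linarith [ht.2]
      positivity
  have hBB : Bh ≤ B0 := lintegral_mono_set hsub
  have hBht : Bh ≠ ⊤ := (hBB.trans_lt hvg2).ne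
  have hM0 : M1v v ≠ 0 := by
    have h1 : ∫⁻ s in Set.Ioo (1/2:ℝ) 1, ENNReal.ofReal (hatw v s / (1-s)^2) ≠ 0 := by
      refine aux_pos (by norm_num) (ContinuousOn.aemeasurable ?_ measurableSet_Ioo) fun t ht => ?_
      · refine ContinuousOn.div (hhc.mono hsub) (by fun_prop) fun t ht => ?_
        have : 0 < 1 - t := by linarith [ht.2]
        positivity
      · have := hhp t (hsub ht)
        have : 0 < 1 - t := by linarith [ht.2]
        positivity
    have h2 : ∫⁻ s in Set.Ioo (0:ℝ) (1/2), ENNReal.ofReal (1 / hatw v s) ≠ 0 := by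
      refine aux_pos (by norm_num) (ContinuousOn.aemeasurable ?_ measurableSet_Ioo) fun t ht => ?_
      · exact ContinuousOn.div (by fun_prop) (hhc.mono hsub2) fun t ht => (hhp t (hsub2 ht)).ne'
      · have := hhp t (hsub2 ht)
        positivity
    intro h
    have h3 : (∫⁻ s in Set.Ioo (1/2:ℝ) 1, ENNReal.ofReal (hatw v s / (1-s)^2)) ^ (1/2 : ℝ) *
        (∫⁻ s in Set.Ioo (0:ℝ) (1/2), ENNReal.ofReal (1 / hatw v s)) ^ (1/2 : ℝ) ≤ M1v v :=
      le_iSup₂ (f := fun (r : ℝ) (_ : r ∈ Set.Ioo (0:ℝ) 1) =>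
        (∫⁻ s in Set.Ioo r 1, ENNReal.ofReal (hatw v s / (1-s)^2)) ^ (1/2 : ℝ) *
        (∫⁻ s in Set.Ioo (0:ℝ) r, ENNReal.ofReal (1 / hatw v s)) ^ (1/2 : ℝ)) (1/2)
        ⟨by norm_num, by norm_num⟩
    rw [h, nonpos_iff_eq_zero, mul_eq_zero, ENNReal.rpow_eq_zero_iff, ENNReal.rpow_eq_zero_iff] at h3
    norm_num at h3
    norm_num at h1 h2
    tauto
  set C2 : ENNReal := 8 * C1 * 32 * (B0 / Bh) with hC2
  have hC2t : C2 ≠ ⊤ := by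
    refine ENNReal.mul_ne_top (ENNReal.mul_ne_top (ENNReal.mul_ne_top (by simp) hC1t) (by simp)) ?_
    exact ENNReal.div_ne_top hvg2.ne hBh0
  set D : ENNReal := C2 ^ (1/2 : ℝ) / M1v v with hDd
  have hDt : D ≠ ⊤ := ENNReal.div_ne_top (ENNReal.rpow_ne_top_of_nonneg (by norm_num) hC2t) hM0
  refine ⟨D.toReal + 1, by positivity, fun K hK hH => ?_⟩
  have hbig : ∀ r ∈ Set.Ico (1/2:ℝ) 1,
      (∫⁻ s in Set.Ioo (0:ℝ) r, ENNReal.ofReal (hatw v s / (1-s)^4)) *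
      (∫⁻ s in Set.Ioo r 1, ENNReal.ofReal ((1-s)^2 / hatw v s)) ≤
        8 * C1 * 32 * ENNReal.ofReal K ^ 2 := by
    intro r hr
    have hr' : r ∈ Set.Ioo (0:ℝ) 1 := ⟨by linarith [hr.1], hr.2⟩
    have h1 := aux_A v hv r hr'
    have h2 := hC1 r hr'
    have h3 := aux_test v hv hvg2 K hK hH r hr
    set J := ∫⁻ s in Set.Ioo (0:ℝ) 1, ENNReal.ofReal (s * v s / (1 - r * s) ^ 3)
    calc _ ≤ 8 * (C1 * J) * (∫⁻ s in Set.Ioo r 1, ENNReal.ofReal ((1-s)^2 / hatw v s)) := by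
            refine mul_le_mul_left (h1.trans ?_) _
            exact mul_le_mul_right h2 _
      _ = 8 * C1 * (J * (∫⁻ s in Set.Ioo r 1, ENNReal.ofReal ((1-s)^2 / hatw v s))) := by ring
      _ ≤ 8 * C1 * (32 * ENNReal.ofReal K ^ 2) := mul_le_mul_right h3 _
      _ = _ := by ring
  have hone : 1 ≤ B0 / Bh := by
    rw [ENNReal.le_div_iff_mul_le (Or.inl hBh0) (Or.inl hBht), one_mul]; exact hBB
  have hall : ∀ r ∈ Set.Ioo (0:ℝ) 1,
      (∫⁻ s in Set.Ioo (0:ℝ) r, ENNReal.ofReal (hatw v s / (1-s)^4)) *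
      (∫⁻ s in Set.Ioo r 1, ENNReal.ofReal ((1-s)^2 / hatw v s)) ≤ C2 * ENNReal.ofReal K ^ 2 := by
    intro r hr
    rcases le_or_gt (1/2) r with h | h
    · refine (hbig r ⟨h, hr.2⟩).trans ?_
      rw [hC2]
      refine mul_le_mul_left ?_ _
      exact le_mul_of_one_le_right' hone
    · have h1 := hbig (1/2) ⟨le_refl _, by norm_num⟩
      rw [← hBh] at h1
      calc _ ≤ (∫⁻ s in Set.Ioo (0:ℝ) (1/2), ENNReal.ofReal (hatw v s / (1-s)^4)) * B0 :=
            mul_le_mul' (lintegral_mono_set (Set.Ioo_subset_Ioo_right h.le))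
              (lintegral_mono_set (Set.Ioo_subset_Ioo_left hr.1.le))
        _ = (∫⁻ s in Set.Ioo (0:ℝ) (1/2), ENNReal.ofReal (hatw v s / (1-s)^4)) *
              (B0 / Bh * Bh) := by rw [ENNReal.div_mul_cancel hBh0 hBht]
        _ = (∫⁻ s in Set.Ioo (0:ℝ) (1/2), ENNReal.ofReal (hatw v s / (1-s)^4)) * Bh *
              (B0 / Bh) := by ring
        _ ≤ 8 * C1 * 32 * ENNReal.ofReal K ^ 2 * (B0 / Bh) := mul_le_mul_left h1 _
        _ = C2 * ENNReal.ofReal K ^ 2 := by rw [hC2]; ring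
  have hM2 : M2v v ≤ C2 ^ (1/2 : ℝ) * ENNReal.ofReal K := by
    refine iSup₂_le fun r hr => ?_
    rw [← ENNReal.mul_rpow_of_nonneg _ _ (by norm_num : (0:ℝ) ≤ 1/2)]
    refine (ENNReal.rpow_le_rpow (hall r hr) (by norm_num)).trans (le_of_eq ?_)
    rw [ENNReal.mul_rpow_of_nonneg _ _ (by norm_num : (0:ℝ) ≤ 1/2), ← ENNReal.rpow_natCast,
      ← ENNReal.rpow_mul]
    norm_num
  refine ⟨hM2.trans_lt ?_, hM2.trans ?_⟩
  · exact ENNReal.mul_lt_top (ENNReal.rpow_lt_top_of_nonneg (by norm_num) hC2t)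
      ENNReal.ofReal_lt_top
  · refine mul_le_mul_left ?_ _
    calc C2 ^ (1/2 : ℝ) = D * M1v v := by rw [hDd, ENNReal.div_mul_cancel hM0 hM1.ne]
      _ ≤ ENNReal.ofReal (D.toReal + 1) * M1v v := by
        refine mul_le_mul_left ?_ _
        rw [ENNReal.le_ofReal_iff_toReal_le hDt (by positivity)]
        linarith

end
end

section
/- Let v be a radial weight in the class D̂ satisfying M₁(v) = sup_{0<r<1} (∫_r¹ v̂(s)/(1-s)² ds)^{1/2} (∫₀^r 1/v̂(s) ds)^{1/2} < ∞ and M₂(v) = sup_{0<r<1} (∫₀^r v̂(s)/(1-s)⁴ ds)^{1/2} (∫_r¹ (1-s)²/v̂(s) ds)^{1/2} < ∞. Then there exists C = C(v) > 0 such that for every function f analytic on the unit disc 𝔻 with ‖f‖_{D_v} < ∞, both H(f)(z) = ∫₀¹ f(t)/(1-tz) dt and H̃(f)(z) = ∫₀¹ |f(t)|/(1-tz) dt define analytic functions on 𝔻 and satisfy ‖H(f)‖_{D_v} ≤ C‖f‖_{D_v} and ‖H̃(f)‖_{D_v} ≤ C‖f‖_{D_v}. -/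
open MeasureTheory Real Set Filter

noncomputable section

/-- Cauchy-Schwarz for lower integrals. -/
lemma cs_lint {α : Type*} [MeasurableSpace α] (μ : Measure α) (f g : α → ENNReal)
    (hf : AEMeasurable f μ) (hg : AEMeasurable g μ) :
    (∫⁻ a, f a * g a ∂μ) ^ 2 ≤ (∫⁻ a, f a ^ 2 ∂μ) * (∫⁻ a, g a ^ 2 ∂μ) := by
  have h := ENNReal.lintegral_mul_le_Lp_mul_Lq μ (p := 2) (q := 2)
    (by constructor <;> norm_num) hf hg
  simp only [Pi.mul_apply, ENNReal.rpow_two] at h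
  calc (∫⁻ a, f a * g a ∂μ) ^ 2 ≤ ((∫⁻ a, f a ^ 2 ∂μ) ^ (1 / 2 : ℝ) * (∫⁻ a, g a ^ 2 ∂μ) ^ (1 / 2 : ℝ)) ^ 2 := by gcongr
    _ = _ := by
      rw [mul_pow, ← ENNReal.rpow_two, ← ENNReal.rpow_two, ← ENNReal.rpow_mul,
        ← ENNReal.rpow_mul]
      norm_num

lemma le_of_sq_le_mul {X A : ENNReal} (hX : X ≠ ⊤) (h : X ^ 2 ≤ A * X) : X ≤ A := by
  rcases eq_or_ne X 0 with h0 | h0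
  · simp [h0]
  · rw [sq] at h
    exact (ENNReal.mul_le_mul_iff_left h0 hX).1 h

lemma hardy_sq (μ : Measure ℝ) [SFinite μ] (χ : ℝ → ℝ → ENNReal)
    (hχ : Measurable (Function.uncurry χ)) (hχ1 : ∀ s t, χ s t ≤ 1)
    (hχ2 : ∀ s t, 1 ≤ χ s t + χ t s) (h : ℝ → ENNReal) (hh : Measurable h) (r : ℝ) :
    (∫⁻ s, χ s r * h s ∂μ) ^ 2 ≤ 2 * ∫⁻ s, χ s r * h s * (∫⁻ t, χ t s * h t ∂μ) ∂μ := by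
  have m1 : Measurable fun s => χ s r := hχ.comp (measurable_id.prodMk measurable_const)
  have m2 : ∀ s, Measurable fun t => χ t s := fun s =>
    hχ.comp (measurable_id.prodMk measurable_const)
  have m3 : Measurable (Function.uncurry fun s t => χ s r * h s * (χ t s * h t)) := by
    have : Measurable fun p : ℝ × ℝ => χ p.2 p.1 := hχ.comp measurable_swap
    exact ((m1.comp measurable_fst).mul (hh.comp measurable_fst)).mul
      (this.mul (hh.comp measurable_snd))
  calc (∫⁻ s, χ s r * h s ∂μ) ^ 2
      = ∫⁻ s, ∫⁻ t, (χ s r * h s) * (χ t r * h t) ∂μ ∂μ := by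
        rw [sq, ← lintegral_mul_const _ (m1.fun_mul hh)]
        congr 1; ext s
        rw [lintegral_const_mul _ (m1.fun_mul hh)]
    _ ≤ ∫⁻ s, ∫⁻ t, (χ s r * h s * (χ t s * h t) + χ t r * h t * (χ s t * h s)) ∂μ ∂μ := by
        gcongr with s t
        calc (χ s r * h s) * (χ t r * h t)
            ≤ (χ s r * h s) * (χ t r * h t) * (χ t s + χ s t) := by
              conv_lhs => rw [← mul_one ((χ s r * h s) * (χ t r * h t))]
              gcongr; exact hχ2 t s
          _ = χ t r * (χ s r * h s * (χ t s * h t)) + χ s r * (χ t r * h t * (χ s t * h s)) := by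
              ring
          _ ≤ 1 * (χ s r * h s * (χ t s * h t)) + 1 * (χ t r * h t * (χ s t * h s)) := by
              gcongr <;> exact hχ1 _ _
          _ = _ := by ring
    _ = (∫⁻ s, ∫⁻ t, χ s r * h s * (χ t s * h t) ∂μ ∂μ)
        + ∫⁻ s, ∫⁻ t, χ t r * h t * (χ s t * h s) ∂μ ∂μ := by
        rw [← lintegral_add_left (f := fun s => ∫⁻ t, χ s r * h s * (χ t s * h t) ∂μ) m3.lintegral_prod_right']
        congr 1; ext s
        rw [lintegral_add_left (f := fun t => χ s r * h s * (χ t s * h t)) (m3.comp measurable_prodMk_left)]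
    _ = 2 * ∫⁻ s, ∫⁻ t, χ s r * h s * (χ t s * h t) ∂μ ∂μ := by
        rw [lintegral_lintegral_swap (f := fun s t => χ t r * h t * (χ s t * h s))
          (m3.comp measurable_swap).aemeasurable, two_mul]
    _ = _ := by
        congr 2; ext s
        rw [lintegral_const_mul _ ((m2 s).fun_mul hh)]

lemma hardy_fin (μ : Measure ℝ) [SFinite μ] (χ : ℝ → ℝ → ENNReal)
    (hχ : Measurable (Function.uncurry χ)) (hχ1 : ∀ s t, χ s t ≤ 1)
    (hχ2 : ∀ s t, 1 ≤ χ s t + χ t s) (h u k : ℝ → ENNReal) (hh : Measurable h)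
    (hu : Measurable u) (hk : Measurable k) (c : ENNReal)
    (hc : ∀ᵐ s ∂μ, ∫⁻ r, u r ^ 2 * χ s r ∂μ ≤ c * (u s * k s))
    (hfin : ∫⁻ r, (u r * ∫⁻ s, χ s r * h s ∂μ) ^ 2 ∂μ ≠ ⊤) :
    ∫⁻ r, (u r * ∫⁻ s, χ s r * h s ∂μ) ^ 2 ∂μ ≤ 4 * c ^ 2 * ∫⁻ r, (k r * h r) ^ 2 ∂μ := by
  have hχ' : Measurable fun p : ℝ × ℝ => χ p.2 p.1 := hχ.comp measurable_swap
  set H : ℝ → ENNReal := fun r => ∫⁻ s, χ s r * h s ∂μ with hH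
  have mH : Measurable H :=
    Measurable.lintegral_prod_right' (f := fun p : ℝ × ℝ => χ p.2 p.1 * h p.2)
      (hχ'.mul (hh.comp measurable_snd))
  have m1 : ∀ r, Measurable fun s => χ s r := fun r =>
    hχ.comp (measurable_id.prodMk measurable_const)
  have m2 : ∀ r, Measurable fun s => χ r s := fun r =>
    hχ.comp measurable_prodMk_left
  set X := ∫⁻ r, (u r * H r) ^ 2 ∂μ with hX
  have key : X ≤ 2 * c * ∫⁻ s, (u s * H s) * (k s * h s) ∂μ := by
    calc X ≤ ∫⁻ r, u r ^ 2 * (2 * ∫⁻ s, χ s r * h s * H s ∂μ) ∂μ := by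
          rw [hX]; gcongr with r
          rw [mul_pow]; gcongr
          exact hardy_sq μ χ hχ hχ1 hχ2 h hh r
      _ = 2 * ∫⁻ r, ∫⁻ s, u r ^ 2 * (χ s r * h s * H s) ∂μ ∂μ := by
          rw [← lintegral_const_mul' _ _ (by norm_num)]
          congr 1; ext r
          rw [lintegral_const_mul _ (((m1 r).fun_mul hh).fun_mul mH)]
          ring
      _ = 2 * ∫⁻ s, ∫⁻ r, u r ^ 2 * (χ s r * h s * H s) ∂μ ∂μ := by
          rw [lintegral_lintegral_swap]
          exact (((hu.comp measurable_fst).pow_const 2).mul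
            ((hχ'.mul (hh.comp measurable_snd)).mul (mH.comp measurable_snd))).aemeasurable
      _ = 2 * ∫⁻ s, (∫⁻ r, u r ^ 2 * χ s r ∂μ) * (h s * H s) ∂μ := by
          congr 2; ext s
          rw [← lintegral_mul_const _ ((hu.pow_const 2).fun_mul (m2 s))]
          congr 1; ext r; ring
      _ ≤ 2 * ∫⁻ s, c * ((u s * H s) * (k s * h s)) ∂μ := by
          gcongr 2 * ?_
          apply lintegral_mono_ae
          filter_upwards [hc] with s hs
          calc _ ≤ c * (u s * k s) * (h s * H s) := by gcongr
            _ = _ := by ring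
      _ = _ := by
          rw [lintegral_const_mul _ ((hu.fun_mul mH).fun_mul (hk.fun_mul hh)), mul_assoc]
  apply le_of_sq_le_mul hfin
  calc X ^ 2 ≤ (2 * c * ∫⁻ s, (u s * H s) * (k s * h s) ∂μ) ^ 2 := by gcongr
    _ ≤ (2 * c) ^ 2 * (X * ∫⁻ r, (k r * h r) ^ 2 ∂μ) := by
      rw [mul_pow (2 * c)]; gcongr
      exact cs_lint μ _ _ (hu.mul mH).aemeasurable (hk.mul hh).aemeasurable
    _ = _ := by ring

lemma hardy_abs (μ : Measure ℝ) [SFinite μ] (χ : ℝ → ℝ → ENNReal)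
    (hχ : Measurable (Function.uncurry χ)) (hχ1 : ∀ s t, χ s t ≤ 1)
    (hχ2 : ∀ s t, 1 ≤ χ s t + χ t s) (h u k : ℝ → ENNReal)
    (hu : Measurable u) (hk : Measurable k) (c : ENNReal)
    (hc : ∀ᵐ s ∂μ, ∫⁻ r, u r ^ 2 * χ s r ∂μ ≤ c * (u s * k s))
    (hn : ℕ → ℝ → ENNReal) (hhn : ∀ n, Measurable (hn n)) (hmono : Monotone hn)
    (hsup : ∀ᵐ s ∂μ, ⨆ n, hn n s = h s)
    (hfin : ∀ n, ∫⁻ r, (u r * ∫⁻ s, χ s r * hn n s ∂μ) ^ 2 ∂μ ≠ ⊤) :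
    ∫⁻ r, (u r * ∫⁻ s, χ s r * h s ∂μ) ^ 2 ∂μ ≤ 4 * c ^ 2 * ∫⁻ r, (k r * h r) ^ 2 ∂μ := by
  have hχ' : Measurable fun p : ℝ × ℝ => χ p.2 p.1 := hχ.comp measurable_swap
  have m1 : ∀ r, Measurable fun s => χ s r := fun r =>
    hχ.comp (measurable_id.prodMk measurable_const)
  have mH : ∀ n, Measurable fun r => ∫⁻ s, χ s r * hn n s ∂μ := fun n =>
    Measurable.lintegral_prod_right' (f := fun p : ℝ × ℝ => χ p.2 p.1 * hn n p.2)
      (hχ'.mul ((hhn n).comp measurable_snd))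
  have e1 : ∀ r, ∫⁻ s, χ s r * h s ∂μ = ⨆ n, ∫⁻ s, χ s r * hn n s ∂μ := by
    intro r
    rw [← lintegral_iSup (fun n => (m1 r).fun_mul (hhn n))]
    · apply lintegral_congr_ae
      filter_upwards [hsup] with s hs
      rw [← hs, ENNReal.mul_iSup]
    · intro n m hnm s
      dsimp; gcongr; exact hmono hnm s
  have mono2 : Monotone fun n r => ∫⁻ s, χ s r * hn n s ∂μ := by
    intro n m hnm r
    dsimp; gcongr with s; exact hmono hnm s
  have e2 : ∫⁻ r, (u r * ∫⁻ s, χ s r * h s ∂μ) ^ 2 ∂μ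
      = ⨆ n, ∫⁻ r, (u r * ∫⁻ s, χ s r * hn n s ∂μ) ^ 2 ∂μ := by
    rw [← lintegral_iSup (fun n => (hu.fun_mul (mH n)).pow_const 2)]
    · congr 1; ext r
      rw [e1, ENNReal.mul_iSup]
      rw [ENNReal.iSup_pow]
    · intro n m hnm r
      dsimp; gcongr (u r * ?_) ^ 2; exact mono2 hnm r
  rw [e2]
  apply iSup_le
  intro n
  refine (hardy_fin μ χ hχ hχ1 hχ2 (hn n) u k (hhn n) hu hk c hc (hfin n)).trans ?_
  gcongr 4 * c ^ 2 * ?_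
  apply lintegral_mono_ae
  filter_upwards [hsup] with s hs
  gcongr
  rw [← hs]; exact le_iSup (fun n => hn n s) n

/-- Integration over the disc in polar coordinates. -/
lemma polar_disc (F : ℂ → ENNReal) (hF : Measurable F) :
    ∫⁻ z in Metric.ball (0:ℂ) 1, F z = ∫⁻ r in Ioo (0:ℝ) 1, ENNReal.ofReal r *
      ∫⁻ θ in Ioo (-π) π, F ((r:ℂ) * Complex.exp (θ * Complex.I)) := by
  have hm : Measurable fun p : ℝ × ℝ => (p.1:ℂ) * Complex.exp (p.2 * Complex.I) := by fun_prop
  have hF2 : Measurable ((Metric.ball (0:ℂ) 1).indicator F) := hF.indicator measurableSet_ball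
  have e : ∀ p : ℝ × ℝ, Complex.polarCoord.symm p = (p.1:ℂ) * Complex.exp (p.2 * Complex.I) := by
    intro p
    rw [Complex.polarCoord_symm_apply, Complex.exp_mul_I, Complex.ofReal_cos, Complex.ofReal_sin]
  have nrm : ∀ r θ : ℝ, 0 < r → ‖(r:ℂ) * Complex.exp (θ * Complex.I)‖ = r := by
    intro r θ hr
    rw [norm_mul, Complex.norm_exp_ofReal_mul_I]; simp [abs_of_pos hr]
  rw [← lintegral_indicator measurableSet_ball, ← Complex.lintegral_comp_polarCoord_symm]
  simp_rw [e]
  rw [polarCoord_target, Measure.volume_eq_prod, ← Measure.prod_restrict,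
    lintegral_prod _ (by
      apply Measurable.aemeasurable
      simp only [smul_eq_mul]
      exact (by fun_prop : Measurable fun p : ℝ × ℝ => ENNReal.ofReal p.1).mul (hF2.comp hm))]
  rw [← Ioo_union_Ici_eq_Ioi (zero_lt_one' ℝ), lintegral_union measurableSet_Ici
    (by rw [Set.disjoint_left]; intro x hx hx'; exact absurd hx.2 (not_lt.2 hx'))]
  have z : ∫⁻ r in Ici (1:ℝ), ∫⁻ θ in Ioo (-π) π, ENNReal.ofReal r •
      (Metric.ball (0:ℂ) 1).indicator F ((r:ℂ) * Complex.exp (θ * Complex.I)) = 0 := by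
    rw [setLIntegral_congr_fun (g := fun _ => 0) measurableSet_Ici]
    · simp
    · intro r hr
      have hr : (1:ℝ) ≤ r := hr
      dsimp
      rw [lintegral_congr (g := fun _ => 0)]
      · simp
      · intro θ
        rw [Set.indicator_of_notMem, mul_zero]
        rw [mem_ball_zero_iff, nrm r θ (by linarith)]; linarith
  rw [z, add_zero]
  apply setLIntegral_congr_fun measurableSet_Ioo
  intro r hr
  dsimp
  rw [← lintegral_const_mul' _ _ ENNReal.ofReal_ne_top]
  congr 1; ext θ
  rw [Set.indicator_of_mem]
  rw [mem_ball_zero_iff, nrm r θ hr.1]; exact hr.2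

lemma poisson_bound (ρ : ℝ) (h0 : 0 ≤ ρ) (h1 : ρ < 1) :
    ∫⁻ θ in Ioo (-π) π, ENNReal.ofReal (1 / ‖1 - (ρ:ℂ) * Complex.exp (θ * Complex.I)‖ ^ 2)
      ≤ ENNReal.ofReal (2 * π / (1 - ρ)) := by
  have hne : ∀ z : ℂ, ‖z‖ = 1 → z - ρ ≠ 0 := by
    intro z hz h
    rw [sub_eq_zero] at h
    rw [h] at hz; simp [abs_of_nonneg h0] at hz; linarith
  have hav := DiffContOnCl.circleAverage_poissonKernel_smul (f := fun _ => (1:ℂ)) (R := 1)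
    (w := (ρ:ℂ)) (c := 0) diffContOnCl_const (by simp [abs_of_nonneg h0, h1])
  have hnn : ∀ θ : ℝ, ‖1 - (ρ:ℂ) * Complex.exp (θ * Complex.I)‖
      = ‖Complex.exp ((-θ:ℝ) * Complex.I) - ρ‖ := by
    intro θ
    have : Complex.exp ((-θ:ℝ) * Complex.I) - ρ
        = Complex.exp ((-θ:ℝ) * Complex.I) * (1 - (ρ:ℂ) * Complex.exp (θ * Complex.I)) := by
      have h2 : Complex.exp ((-θ:ℝ) * Complex.I) * Complex.exp (θ * Complex.I) = 1 := by
        rw [← Complex.exp_add]; simp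
      linear_combination (-(ρ:ℂ)) * (-h2)
    rw [this, norm_mul, Complex.norm_exp_ofReal_mul_I, one_mul]
  have hnn2 : ∀ θ : ℝ, ‖1 - (ρ:ℂ) * Complex.exp (θ * Complex.I)‖
      = ‖Complex.exp (θ * Complex.I) - ρ‖ := by
    intro θ
    rw [hnn, ← RCLike.norm_conj (K := ℂ), map_sub, ← Complex.exp_conj]; simp
  set p : ℝ → ℝ := fun θ => 1 / ‖Complex.exp (θ * Complex.I) - ρ‖ ^ 2 with hp
  have hpc : Continuous p := by
    apply Continuous.div continuous_const (by fun_prop)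
    intro θ
    have := hne (Complex.exp (θ * Complex.I)) (Complex.norm_exp_ofReal_mul_I θ)
    positivity
  have hper : Function.Periodic p (2 * π) := by
    intro θ
    simp only [hp]
    congr 4
    push_cast
    rw [add_mul, Complex.exp_add, Complex.exp_two_pi_mul_I, mul_one]
  have hI : ∫ θ in (0:ℝ)..(2 * π), p θ = 2 * π / (1 - ρ ^ 2) := by
    rw [Real.circleAverage_def] at hav
    have e : ∀ θ : ℝ, (poissonKernel 0 (ρ:ℂ) • fun _ : ℂ => (1:ℂ)) (circleMap 0 1 θ)
        = (((1 - ρ ^ 2) * p θ : ℝ) : ℂ) := by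
      intro θ
      simp [poissonKernel_def, circleMap, hp, div_eq_mul_inv]
    simp_rw [e] at hav
    rw [intervalIntegral.integral_ofReal, intervalIntegral.integral_const_mul] at hav
    have h2 : (2 * π)⁻¹ * ((1 - ρ ^ 2) * ∫ θ in (0:ℝ)..(2 * π), p θ) = 1 := by
      have : (((2 * π)⁻¹ * ((1 - ρ ^ 2) * ∫ θ in (0:ℝ)..(2 * π), p θ) : ℝ) : ℂ) = ((1:ℝ):ℂ) := by
        rw [← smul_eq_mul, Complex.ofReal_one, ← hav]
        simp
      exact_mod_cast this
    have h3 : 0 < 1 - ρ ^ 2 := by nlinarith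
    have := Real.pi_pos
    field_simp at h2 ⊢
    linarith
  simp_rw [hnn2]
  change ∫⁻ θ in Ioo (-π) π, ENNReal.ofReal (p θ) ≤ _
  rw [restrict_Ioo_eq_restrict_Ioc, ← ofReal_integral_eq_lintegral_ofReal,
    ← intervalIntegral.integral_of_le (by linarith [Real.pi_pos])]
  · have := hper.intervalIntegral_add_eq (-π) 0
    rw [zero_add, show -π + 2 * π = π by ring] at this
    rw [this, hI]
    apply ENNReal.ofReal_le_ofReal
    apply div_le_div_of_nonneg_left (by positivity) (by linarith) (by nlinarith)
  · exact (hpc.continuousOn.integrableOn_Icc (a := -π) (b := π)).mono_set Ioc_subset_Icc_self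
  · exact Eventually.of_forall fun θ => by simp only [hp]; positivity

lemma fejer_riesz (g : ℂ → ℂ) (hg : DifferentiableOn ℂ g (Metric.ball 0 1)) (ρ : ℝ)
    (h0 : 0 < ρ) (h1 : ρ < 1) :
    ∫⁻ t in Ioo (0:ℝ) ρ, ‖g t‖ₑ ^ 2 ≤ ENNReal.ofReal ρ *
      ∫⁻ θ in Ioo (-π) π, ‖g ((ρ:ℂ) * Complex.exp (θ * Complex.I))‖ₑ ^ 2 := by
  set G : ℂ → ℂ := fun z => g z * (starRingEnd ℂ) (g ((starRingEnd ℂ) z)) with hG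
  have hGd : DifferentiableOn ℂ G (Metric.ball 0 1) := by
    intro z hz
    have hz' : (starRingEnd ℂ) z ∈ Metric.ball (0:ℂ) 1 := by simpa using hz
    have a1 := hg.differentiableAt (Metric.isOpen_ball.mem_nhds hz)
    have a2 := hg.differentiableAt (Metric.isOpen_ball.mem_nhds hz')
    have := a2.conj_conj
    simp only [Complex.conj_conj] at this
    exact (a1.mul this).differentiableWithinAt
  obtain ⟨F, hF⟩ := hGd.isExactOn_ball
  have nrm : ∀ θ : ℝ, ‖(ρ:ℂ) * Complex.exp (θ * Complex.I)‖ = ρ := by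
    intro θ
    rw [norm_mul, Complex.norm_exp_ofReal_mul_I]; simp [abs_of_pos h0]
  have mem : ∀ θ : ℝ, (ρ:ℂ) * Complex.exp (θ * Complex.I) ∈ Metric.ball (0:ℂ) 1 := by
    intro θ; rw [mem_ball_zero_iff, nrm]; exact h1
  have memr : ∀ t ∈ uIcc (-ρ) ρ, (t:ℂ) ∈ Metric.ball (0:ℂ) 1 := by
    intro t ht
    rw [uIcc_of_le (by linarith)] at ht
    simp only [mem_ball_zero_iff, Complex.norm_real, Real.norm_eq_abs]
    exact (abs_le.2 ht).trans_lt h1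
  have hgc : ContinuousOn (fun t : ℝ => g t) (uIcc (-ρ) ρ) :=
    hg.continuousOn.comp Complex.continuous_ofReal.continuousOn memr
  have hGr : ∀ t : ℝ, G t = ((‖g t‖ ^ 2 : ℝ) : ℂ) := by
    intro t
    simp only [hG, Complex.conj_ofReal]
    rw [Complex.mul_conj, Complex.normSq_eq_norm_sq]
  have I1 : ∫ t in (-ρ)..ρ, G t = F ρ - F (-ρ) := by
    have := intervalIntegral.integral_eq_sub_of_hasDerivAt (a := -ρ) (b := ρ)
      (f := fun t : ℝ => F t) (f' := fun t : ℝ => G t)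
      (fun t ht => (hF t (memr t ht)).comp_ofReal) (by
        apply ContinuousOn.intervalIntegrable
        exact hGd.continuousOn.comp Complex.continuous_ofReal.continuousOn memr)
    simpa using this
  have hce : Continuous fun θ : ℝ => (ρ:ℂ) * Complex.exp (θ * Complex.I) := by fun_prop
  have hcG : Continuous fun θ : ℝ => G ((ρ:ℂ) * Complex.exp (θ * Complex.I)) :=
    hGd.continuousOn.comp_continuous hce mem
  have hcg : Continuous fun θ : ℝ => g ((ρ:ℂ) * Complex.exp (θ * Complex.I)) :=
    hg.continuousOn.comp_continuous hce mem
  have I2 : ∫ θ in (0:ℝ)..π, G ((ρ:ℂ) * Complex.exp (θ * Complex.I)) *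
      ((ρ:ℂ) * (Complex.exp (θ * Complex.I) * Complex.I)) = F (-ρ) - F ρ := by
    have := intervalIntegral.integral_eq_sub_of_hasDerivAt (a := 0) (b := π)
      (f := fun θ : ℝ => F ((ρ:ℂ) * Complex.exp (θ * Complex.I)))
      (f' := fun θ : ℝ => G ((ρ:ℂ) * Complex.exp (θ * Complex.I)) *
        ((ρ:ℂ) * (Complex.exp (θ * Complex.I) * Complex.I)))
      (fun θ _ => by
        have d1 : HasDerivAt (fun θ : ℝ => (ρ:ℂ) * Complex.exp (θ * Complex.I))
            ((ρ:ℂ) * (Complex.exp (θ * Complex.I) * Complex.I)) θ := by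
          have : HasDerivAt (fun z : ℂ => (ρ:ℂ) * Complex.exp (z * Complex.I))
            ((ρ:ℂ) * (Complex.exp (θ * Complex.I) * (1 * Complex.I))) (θ:ℂ) :=
            (((hasDerivAt_id (θ:ℂ)).mul_const Complex.I).cexp).const_mul _
          simpa using this.comp_ofReal
        exact (hF _ (mem θ)).comp θ d1) (by
          apply Continuous.intervalIntegrable
          exact hcG.mul (by fun_prop))
    simpa using this
  have conjm : ∀ θ : ℝ, (starRingEnd ℂ) ((ρ:ℂ) * Complex.exp (θ * Complex.I))
      = (ρ:ℂ) * Complex.exp ((-θ:ℝ) * Complex.I) := by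
    intro θ
    rw [map_mul, ← Complex.exp_conj]; simp
  set q : ℝ → ENNReal := fun θ => ‖g ((ρ:ℂ) * Complex.exp (θ * Complex.I))‖ₑ with hq
  have mq : Measurable q := hcg.enorm.measurable
  have L : ∫⁻ t in Ioo (0:ℝ) ρ, ‖g t‖ₑ ^ 2 ≤ ‖∫ t in (-ρ)..ρ, G t‖ₑ := by
    simp_rw [hGr]
    rw [intervalIntegral.integral_ofReal, ← ofReal_norm, Complex.norm_real, Real.norm_of_nonneg
      (intervalIntegral.integral_nonneg (by linarith) (fun _ _ => by positivity)),
      intervalIntegral.integral_of_le (by linarith), ofReal_integral_eq_lintegral_ofReal]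
    · have : ∀ t : ℝ, ENNReal.ofReal (‖g t‖ ^ 2) = ‖g t‖ₑ ^ 2 := by
        intro t; rw [ENNReal.ofReal_pow (norm_nonneg _), ofReal_norm]
      simp_rw [this]
      apply lintegral_mono_set
      intro t ht; exact ⟨by linarith [ht.1], ht.2.le⟩
    · have := (hgc.norm.pow 2).intervalIntegrable (μ := volume)
      rwa [intervalIntegrable_iff_integrableOn_Ioc_of_le (by linarith)] at this
    · exact Eventually.of_forall fun _ => by positivity
  calc ∫⁻ t in Ioo (0:ℝ) ρ, ‖g t‖ₑ ^ 2 ≤ ‖∫ t in (-ρ)..ρ, G t‖ₑ := L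
    _ = ‖∫ θ in (0:ℝ)..π, G ((ρ:ℂ) * Complex.exp (θ * Complex.I)) *
      ((ρ:ℂ) * (Complex.exp (θ * Complex.I) * Complex.I))‖ₑ := by
        rw [I1, I2, ← enorm_neg, neg_sub]
    _ ≤ ∫⁻ θ in Ioc 0 π, ‖G ((ρ:ℂ) * Complex.exp (θ * Complex.I)) *
      ((ρ:ℂ) * (Complex.exp (θ * Complex.I) * Complex.I))‖ₑ := by
        rw [intervalIntegral.integral_of_le Real.pi_pos.le]
        exact enorm_integral_le_lintegral_enorm _
    _ ≤ ∫⁻ θ in Ioc 0 π, ENNReal.ofReal ρ * (q θ ^ 2 + q (-θ) ^ 2) := by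
        gcongr with θ
        have a : ‖((ρ:ℂ) * (Complex.exp (θ * Complex.I) * Complex.I))‖ₑ = ENNReal.ofReal ρ := by
          rw [← mul_assoc, ← ofReal_norm, norm_mul, nrm]; simp
        rw [enorm_mul, a, mul_comm]
        gcongr
        simp only [hG, conjm, enorm_mul]
        rw [show ∀ z : ℂ, ‖(starRingEnd ℂ) z‖ₑ = ‖z‖ₑ from fun z => by
          rw [← ofReal_norm, RCLike.norm_conj, ofReal_norm]]
        change q θ * q (-θ) ≤ _
        rcases le_total (q θ) (q (-θ)) with h | h
        · calc q θ * q (-θ) ≤ q (-θ) * q (-θ) := by gcongr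
            _ = q (-θ) ^ 2 := (sq _).symm
            _ ≤ _ := le_add_self
        · calc q θ * q (-θ) ≤ q θ * q θ := by gcongr
            _ = q θ ^ 2 := (sq _).symm
            _ ≤ _ := le_self_add
    _ = ENNReal.ofReal ρ * (∫⁻ θ in Ioo 0 π, q θ ^ 2 + q (-θ) ^ 2) := by
        rw [lintegral_const_mul' _ _ ENNReal.ofReal_ne_top, restrict_Ioo_eq_restrict_Ioc]
    _ = ENNReal.ofReal ρ * ((∫⁻ θ in Ioo 0 π, q θ ^ 2) + ∫⁻ θ in Ioo (-π) 0, q θ ^ 2) := by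
        rw [lintegral_add_left (mq.pow_const 2)]
        congr 2
        have := (Measure.measurePreserving_neg (volume : Measure ℝ)).setLIntegral_comp_preimage
          (s := Ioo (-π) 0) measurableSet_Ioo (f := fun θ => q θ ^ 2) (mq.pow_const 2)
        rw [← this]
        simp
    _ ≤ _ := by
        gcongr
        rw [add_comm, ← lintegral_union measurableSet_Ioo (by
          rw [Set.disjoint_left]; intro x hx hx'; exact absurd hx.2 (not_lt.2 hx'.1.le))]
        apply lintegral_mono_set
        intro x hx
        rcases hx with hx | hx
        · exact ⟨hx.1, hx.2.trans Real.pi_pos⟩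
        · exact ⟨by linarith [hx.1, Real.pi_pos], hx.2⟩

/-- `ENNReal`-valued tail of the weight. -/
def omE (v : ℝ → ℝ) (t : ℝ) : ENNReal := ∫⁻ r in Ioo (0:ℝ) 1 ∩ Ioi t, ENNReal.ofReal (v r)

/-- Globally antitone real version of `hatw`. -/
def om (v : ℝ → ℝ) (t : ℝ) : ℝ := (omE v t).toReal

lemma omE_ne_top {v : ℝ → ℝ} (hv : RadialWeight v) (t : ℝ) : omE v t ≠ ⊤ := by
  have h : ∫⁻ r in Ioo (0:ℝ) 1, ENNReal.ofReal (v r) < ⊤ := by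
    have := hv.2.2.2
    refine lt_of_le_of_lt (lintegral_mono fun r => ?_) this
    rw [← ofReal_norm]; exact ENNReal.ofReal_le_ofReal (le_abs_self _)
  exact ((lintegral_mono_set inter_subset_left).trans_lt h).ne

lemma ofReal_om {v : ℝ → ℝ} (hv : RadialWeight v) (t : ℝ) : ENNReal.ofReal (om v t) = omE v t :=
  ENNReal.ofReal_toReal (omE_ne_top hv t)

lemma om_nonneg (v : ℝ → ℝ) (t : ℝ) : 0 ≤ om v t := ENNReal.toReal_nonneg

lemma om_anti {v : ℝ → ℝ} (hv : RadialWeight v) : Antitone (om v) := by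
  intro a b hab
  apply ENNReal.toReal_mono (omE_ne_top hv a)
  exact lintegral_mono_set (inter_subset_inter_right _ (Ioi_subset_Ioi hab))

lemma om_meas {v : ℝ → ℝ} (hv : RadialWeight v) : Measurable (om v) := (om_anti hv).measurable

lemma om_eq {v : ℝ → ℝ} (hv : RadialWeight v) (t : ℝ) (h0 : 0 ≤ t) (h1 : t < 1) :
    hatw v t = om v t := by
  unfold hatw om omE
  rw [show Ioo (0:ℝ) 1 ∩ Ioi t = Ioo t 1 by
    ext x; simp only [mem_inter_iff, mem_Ioo, mem_Ioi]; constructor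
    · rintro ⟨⟨a, b⟩, c⟩; exact ⟨c, b⟩
    · rintro ⟨a, b⟩; exact ⟨⟨by linarith, b⟩, a⟩]
  rw [intervalIntegral.integral_of_le h1.le, ← restrict_Ioo_eq_restrict_Ioc,
    integral_eq_lintegral_of_nonneg_ae]
  · filter_upwards [ae_restrict_mem measurableSet_Ioo] with s hs
    exact (hv.2.1 s ⟨by linarith [hs.1], hs.2⟩).le
  · exact hv.1.aestronglyMeasurable

lemma om_pos {v : ℝ → ℝ} (hv : RadialWeight v) (t : ℝ) (h1 : t < 1) :
    0 < om v t := by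
  have key : 0 < om v (max t 0) := by
    have h2 : max t 0 < 1 := max_lt h1 one_pos
    have h3 : (0:ℝ) ≤ max t 0 := le_max_right _ _
    rw [← om_eq hv _ h3 h2]
    unfold hatw
    apply intervalIntegral.intervalIntegral_pos_of_pos_on
    · rw [intervalIntegrable_iff_integrableOn_Ioo_of_le h2.le]
      exact hv.2.2.mono_set (Ioo_subset_Ioo_left h3)
    · intro x hx; exact hv.2.1 x ⟨by linarith [hx.1], hx.2⟩
    · exact h2
  exact key.trans_le (om_anti hv (le_max_left _ _))

lemma le_div_of_mul_le_aux {a b : ENNReal} {α B : ℝ} (hα : 0 < α) (ha : ENNReal.ofReal α ≤ a)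
    (hab : a * b ≤ ENNReal.ofReal B) : b ≤ ENNReal.ofReal (B / α) := by
  rw [ENNReal.ofReal_div_of_pos hα]
  rw [ENNReal.le_div_iff_mul_le (Or.inl (by simpa using hα)) (Or.inl ENNReal.ofReal_ne_top), mul_comm]
  exact (by gcongr : _ ≤ a * b).trans hab

lemma lint_lower (S : Set ℝ) (f : ℝ → ℝ) (a b c : ℝ) (hs : Ioo a b ⊆ S) (hc : 0 ≤ c)
    (h : ∀ s ∈ Ioo a b, c ≤ f s) :
    ENNReal.ofReal (c * (b - a)) ≤ ∫⁻ s in S, ENNReal.ofReal (f s) := by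
  calc ENNReal.ofReal (c * (b - a)) = ∫⁻ s in Ioo a b, ENNReal.ofReal c := by
        rw [setLIntegral_const, Real.volume_Ioo, ENNReal.ofReal_mul hc]
    _ ≤ ∫⁻ s in Ioo a b, ENNReal.ofReal (f s) :=
        setLIntegral_mono' measurableSet_Ioo fun s hs => ENNReal.ofReal_le_ofReal (h s hs)
    _ ≤ _ := lintegral_mono_set hs

lemma lint_upper (f : ℝ → ℝ) (a b c : ℝ) (hc : 0 ≤ c)
    (h : ∀ s ∈ Ioo a b, f s ≤ c) :
    ∫⁻ s in Ioo a b, ENNReal.ofReal (f s) ≤ ENNReal.ofReal (c * (b - a)) := by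
  calc _ ≤ ∫⁻ s in Ioo a b, ENNReal.ofReal c :=
        setLIntegral_mono' measurableSet_Ioo fun s hs => ENNReal.ofReal_le_ofReal (h s hs)
    _ = _ := by rw [setLIntegral_const, Real.volume_Ioo, ENNReal.ofReal_mul hc]

lemma lint_split (f : ℝ → ENNReal) (a b c : ℝ) (hab : a < b) (hbc : b < c) :
    ∫⁻ s in Ioo a c, f s = (∫⁻ s in Ioo a b, f s) + ∫⁻ s in Ioo b c, f s := by
  rw [← Ioo_union_Ico_eq_Ioo hab hbc.le, lintegral_union measurableSet_Ico (by
    rw [Set.disjoint_left]; intro x hx hx'; exact absurd hx.2 (not_lt.2 hx'.1)),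
    restrict_Ioo_eq_restrict_Ico (a := b)]

lemma sqrt_prod_bound {M a b : ENNReal} (hM : M < ⊤)
    (h : a ^ (1/2:ℝ) * b ^ (1/2:ℝ) ≤ M) : a * b ≤ ENNReal.ofReal (M.toReal ^ 2) := by
  rw [ENNReal.ofReal_pow ENNReal.toReal_nonneg, ENNReal.ofReal_toReal hM.ne]
  calc a * b = (a ^ (1/2:ℝ) * b ^ (1/2:ℝ)) ^ 2 := by
        rw [mul_pow, ← ENNReal.rpow_two, ← ENNReal.rpow_two, ← ENNReal.rpow_mul,
          ← ENNReal.rpow_mul]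
        norm_num
    _ ≤ _ := by gcongr

lemma M1_bound {v : ℝ → ℝ} (hv : RadialWeight v) (hM : M1v v < ⊤) : ∃ B : ℝ, 0 ≤ B ∧
    ∀ r ∈ Ioo (0:ℝ) 1, (∫⁻ s in Ioo (0:ℝ) r, ENNReal.ofReal (1 / om v s)) *
      (∫⁻ s in Ioo r 1, ENNReal.ofReal (om v s / (1-s)^2)) ≤ ENNReal.ofReal B := by
  refine ⟨(M1v v).toReal ^ 2, by positivity, fun r hr => ?_⟩
  · rw [mul_comm]
    apply sqrt_prod_bound hM
    unfold M1v
    refine le_trans ?_ (le_iSup₂ r hr)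
    rw [setLIntegral_congr_fun (f := fun s => ENNReal.ofReal (hatw v s / (1-s)^2))
      (g := fun s => ENNReal.ofReal (om v s / (1-s)^2)) measurableSet_Ioo,
      setLIntegral_congr_fun (f := fun s => ENNReal.ofReal (1 / hatw v s))
      (g := fun s => ENNReal.ofReal (1 / om v s)) measurableSet_Ioo]
    · intro s hs; dsimp; rw [om_eq hv s hs.1.le (hs.2.trans hr.2)]
    · intro s hs; dsimp; rw [om_eq hv s (hr.1.trans hs.1).le hs.2]

lemma M2_bound {v : ℝ → ℝ} (hv : RadialWeight v) (hM : M2v v < ⊤) : ∃ B : ℝ, 0 ≤ B ∧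
    ∀ r ∈ Ioo (0:ℝ) 1, (∫⁻ s in Ioo (0:ℝ) r, ENNReal.ofReal (om v s / (1-s)^4)) *
      (∫⁻ s in Ioo r 1, ENNReal.ofReal ((1-s)^2 / om v s)) ≤ ENNReal.ofReal B := by
  refine ⟨(M2v v).toReal ^ 2, by positivity, fun r hr => ?_⟩
  · apply sqrt_prod_bound hM
    unfold M2v
    refine le_trans ?_ (le_iSup₂ r hr)
    rw [setLIntegral_congr_fun (f := fun s => ENNReal.ofReal (hatw v s / (1-s)^4))
      (g := fun s => ENNReal.ofReal (om v s / (1-s)^4)) measurableSet_Ioo,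
      setLIntegral_congr_fun (f := fun s => ENNReal.ofReal ((1-s)^2 / hatw v s))
      (g := fun s => ENNReal.ofReal ((1-s)^2 / om v s)) measurableSet_Ioo]
    · intro s hs; dsimp; rw [om_eq hv s (hr.1.trans hs.1).le hs.2]
    · intro s hs; dsimp; rw [om_eq hv s hs.1.le (hs.2.trans hr.2)]

lemma P1 {v : ℝ → ℝ} (hv : RadialWeight v) (hD : DoublingD v) (hM : M1v v < ⊤) :
    ∃ C : ℝ, 0 ≤ C ∧ (∫⁻ s in Ioo (0:ℝ) 1, ENNReal.ofReal (om v s / (1-s)^2) ≤ ENNReal.ofReal C) ∧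
      ∀ r ∈ Ioo (0:ℝ) 1, ∫⁻ s in Ioo r 1, ENNReal.ofReal (om v s / (1-s)^2) ≤
        ENNReal.ofReal (C * (om v r / (1 - r))) := by
  obtain ⟨B, hB, hB1⟩ := M1_bound hv hM
  obtain ⟨D, hD1, hD2⟩ := hD
  have big : ∀ r : ℝ, 1/2 ≤ r → r < 1 →
      ∫⁻ s in Ioo r 1, ENNReal.ofReal (om v s / (1-s)^2) ≤
        ENNReal.ofReal ((B * D) * (om v r / (1 - r))) := by
    intro r h2 h1
    have hp := om_pos hv r h1
    have h3 : om v (2 * r - 1) ≤ D * om v r := by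
      have := hD2 (2 * r - 1) ⟨by linarith, by linarith⟩
      rw [om_eq hv _ (by linarith) (by linarith), show (1 + (2 * r - 1)) / 2 = r by ring,
        om_eq hv _ (by linarith) h1] at this
      exact this
    have low := lint_lower (Ioo 0 r) (fun s => 1 / om v s) (2 * r - 1) r (1 / (D * om v r))
      (Ioo_subset_Ioo_left (by linarith)) (by positivity) (by
        intro s hs
        have := om_anti hv hs.1.le
        exact one_div_le_one_div_of_le (om_pos hv s (hs.2.trans h1)) (this.trans h3))
    have := le_div_of_mul_le_aux (mul_pos (by positivity) (by linarith)) low (hB1 r ⟨by linarith, h1⟩)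
    refine this.trans (le_of_eq ?_)
    congr 1
    have : 1 - r ≠ 0 := by linarith
    rw [show r - (2 * r - 1) = 1 - r by ring]
    field_simp
  have hp0 := om_pos hv 0 one_pos
  have hp2 := om_pos hv (1/2) (by norm_num)
  have all : ∫⁻ s in Ioo (0:ℝ) 1, ENNReal.ofReal (om v s / (1-s)^2) ≤
      ENNReal.ofReal (4 * om v 0 + B * D * (om v (1/2) / (1 - 1/2))) := by
    rw [lint_split _ 0 (1/2) 1 (by norm_num) (by norm_num), ENNReal.ofReal_add (by positivity)
      (by have : (0:ℝ) ≤ 1 - 1/2 := by norm_num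
          positivity)]
    refine add_le_add ?_ (big _ le_rfl (by norm_num))
    refine (lint_upper _ _ _ (4 * om v 0) (by positivity) ?_).trans ?_
    · intro s hs
      have h4 : (1/4:ℝ) ≤ (1 - s) ^ 2 := by nlinarith [hs.1, hs.2]
      rw [div_le_iff₀ (by positivity)]
      have := om_anti hv hs.1.le
      nlinarith
    · apply ENNReal.ofReal_le_ofReal; linarith
  set A := 4 * om v 0 + B * D * (om v (1/2) / (1 - 1/2)) with hA
  have hA0 : 0 ≤ A := by
    have : (0:ℝ) ≤ 1 - 1/2 := by norm_num
    positivity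
  refine ⟨A + B * D + A / om v (1/2), by positivity, all.trans (ENNReal.ofReal_le_ofReal ?_), ?_⟩
  · have : 0 ≤ A / om v (1/2) := by positivity
    have : 0 ≤ B * D := by positivity
    linarith
  · intro r hr
    have hq : 0 ≤ om v r / (1 - r) := div_nonneg (om_nonneg _ _) (by linarith [hr.2])
    rcases le_total (1/2) r with h | h
    · refine (big r h hr.2).trans (ENNReal.ofReal_le_ofReal ?_)
      apply mul_le_mul_of_nonneg_right _ hq
      have : 0 ≤ A / om v (1/2) := by positivity
      linarith
    · refine (lintegral_mono_set (Ioo_subset_Ioo_left hr.1.le)).trans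
        (all.trans (ENNReal.ofReal_le_ofReal ?_))
      calc A = A / om v (1/2) * om v (1/2) := by field_simp
        _ ≤ A / om v (1/2) * (om v r / (1 - r)) := by
          gcongr
          rw [le_div_iff₀ (by linarith [hr.2])]
          have := om_anti hv h
          nlinarith [hr.1]
        _ ≤ _ := by
          apply mul_le_mul_of_nonneg_right _ hq
          have : 0 ≤ B * D := by positivity
          linarith

lemma P2 {v : ℝ → ℝ} (hv : RadialWeight v) (hM : M2v v < ⊤) :
    ∃ C : ℝ, 0 ≤ C ∧ (∫⁻ s in Ioo (0:ℝ) 1, ENNReal.ofReal ((1-s)^2 / om v s) ≤ ENNReal.ofReal C) ∧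
      (∀ r ∈ Ioo (0:ℝ) 1, om v 0 ≤ C * (om v r / (1 - r) ^ 3)) ∧
      ∀ r ∈ Ioo (0:ℝ) 1, ∫⁻ s in Ioo 0 r, ENNReal.ofReal (om v s / (1-s)^4) ≤
        ENNReal.ofReal (C * (om v r / (1 - r) ^ 3)) := by
  obtain ⟨B, hB, hB1⟩ := M2_bound hv hM
  have hp0 := om_pos hv 0 one_pos
  have hp2 := om_pos hv (1/2) (by norm_num)
  have c : ∀ r ∈ Ioo (0:ℝ) 1, ∫⁻ s in Ioo 0 r, ENNReal.ofReal (om v s / (1-s)^4) ≤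
        ENNReal.ofReal ((8 * B) * (om v r / (1 - r) ^ 3)) := by
    intro r hr
    have hp := om_pos hv r hr.2
    have h1r : 0 < 1 - r := by linarith [hr.2]
    have low := lint_lower (Ioo r 1) (fun s => (1-s)^2 / om v s) r ((1+r)/2)
      (((1-r)/2)^2 / om v r) (Ioo_subset_Ioo_right (by linarith [hr.2])) (by positivity) (by
        intro s hs
        have h5 := om_anti hv hs.1.le
        have h6 := om_pos hv s (by linarith [hs.2, hr.2])
        have h7 : (1-r)/2 ≤ 1 - s := by linarith [hs.2]
        gcongr)
    have := le_div_of_mul_le_aux (mul_pos (by positivity) (by linarith [hr.2])) low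
      (by rw [mul_comm]; exact hB1 r hr)
    refine this.trans (le_of_eq ?_)
    congr 1
    rw [show (1 + r)/2 - r = (1 - r)/2 by ring]
    field_simp
    norm_num
  have low2 : ∀ r : ℝ, 1/2 ≤ r → ENNReal.ofReal (om v (1/2) * (1/2 - 0)) ≤
      ∫⁻ s in Ioo 0 r, ENNReal.ofReal (om v s / (1-s)^4) := by
    intro r hr
    apply lint_lower _ _ _ _ _ (Ioo_subset_Ioo_right hr) hp2.le
    intro s hs
    rw [le_div_iff₀ (by have := hs.2; have : 0 < 1 - s := by linarith
                        positivity)]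
    have h5 := om_anti hv hs.2.le
    have h6 : (1 - s) ^ 4 ≤ 1 := pow_le_one₀ (by linarith [hs.2]) (by linarith [hs.1])
    nlinarith
  have d : ∫⁻ s in Ioo (0:ℝ) 1, ENNReal.ofReal ((1-s)^2 / om v s) ≤
      ENNReal.ofReal (1 / om v (1/2) * (1/2 - 0) + B / (om v (1/2) * (1/2 - 0))) := by
    rw [lint_split _ 0 (1/2) 1 (by norm_num) (by norm_num), ENNReal.ofReal_add
      (mul_nonneg (by positivity) (by norm_num))
      (div_nonneg hB (mul_nonneg hp2.le (by norm_num)))]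
    refine add_le_add ?_ ?_
    · apply lint_upper _ _ _ _ (by positivity)
      intro s hs
      have h5 := om_anti hv hs.2.le
      have h6 : (1 - s) ^ 2 ≤ 1 := pow_le_one₀ (by linarith [hs.2]) (by linarith [hs.1])
      gcongr
    · exact le_div_of_mul_le_aux (mul_pos hp2 (by norm_num)) (low2 _ le_rfl)
        (hB1 (1/2) ⟨by norm_num, by norm_num⟩)
  set A := 1 / om v (1/2) * (1/2 - 0) + B / (om v (1/2) * (1/2 - 0)) with hA
  have hA0 : 0 ≤ A := add_nonneg (mul_nonneg (by positivity) (by norm_num))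
      (div_nonneg hB (mul_nonneg hp2.le (by norm_num)))
  set E := om v 0 / om v (1/2) with hE
  have hE0 : 0 ≤ E := by positivity
  have e : ∀ r ∈ Ioo (0:ℝ) 1, om v 0 ≤ (E + 2 * E * (8 * B)) * (om v r / (1 - r) ^ 3) := by
    intro r hr
    have h1r : 0 < 1 - r := by linarith [hr.2]
    have hq : 0 ≤ om v r / (1 - r) ^ 3 := div_nonneg (om_nonneg _ _) (by positivity)
    have e0 : om v 0 = E * om v (1/2) := by rw [hE]; field_simp
    rcases le_total (1/2) r with h | h
    · have := (low2 r h).trans (c r hr)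
      rw [ENNReal.ofReal_le_ofReal_iff (by positivity)] at this
      have : E * om v (1/2) ≤ 2 * E * (8 * B) * (om v r / (1 - r) ^ 3) := by nlinarith
      have : 0 ≤ E * (om v r / (1 - r) ^ 3) := by positivity
      nlinarith
    · have : om v (1/2) ≤ om v r / (1 - r) ^ 3 := by
        rw [le_div_iff₀ (by positivity)]
        have h5 := om_anti hv h
        have h6 : (1 - r) ^ 3 ≤ 1 := pow_le_one₀ (by linarith) (by linarith [hr.1])
        nlinarith
      have h8 : 0 ≤ 2 * E * (8 * B) * (om v r / (1 - r) ^ 3) := by positivity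
      have := mul_le_mul_of_nonneg_left this hE0
      nlinarith
  refine ⟨A + 8 * B + (E + 2 * E * (8 * B)), by positivity,
    d.trans (ENNReal.ofReal_le_ofReal ?_), fun r hr => (e r hr).trans ?_, fun r hr =>
    (c r hr).trans (ENNReal.ofReal_le_ofReal ?_)⟩
  · have : 0 ≤ 8 * B + (E + 2 * E * (8 * B)) := by positivity
    linarith
  · have h1r : 0 < 1 - r := by linarith [hr.2]
    apply mul_le_mul_of_nonneg_right _ (div_nonneg (om_nonneg _ _) (by positivity))
    linarith
  · have h1r : 0 < 1 - r := by linarith [hr.2]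
    apply mul_le_mul_of_nonneg_right _ (div_nonneg (om_nonneg _ _) (by positivity))
    have : 0 ≤ (E + 2 * E * (8 * B)) := by positivity
    linarith

/-- The indicator of `s ≤ r`. -/
def chi (s r : ℝ) : ENNReal := if s ≤ r then 1 else 0

lemma chi_meas : Measurable (Function.uncurry chi) := by
  unfold chi
  exact Measurable.ite (measurableSet_le measurable_fst measurable_snd) measurable_const
    measurable_const

lemma chi_meas' : Measurable (Function.uncurry fun s r => chi r s) := chi_meas.comp measurable_swap

lemma chi_le_one (s r : ℝ) : chi s r ≤ 1 := by unfold chi; split_ifs <;> simp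

lemma chi_total (s r : ℝ) : 1 ≤ chi s r + chi r s := by
  unfold chi
  rcases le_total s r with h | h
  · rw [if_pos h]; exact le_self_add
  · rw [if_pos h]; exact le_add_self

lemma chi_lint_right (F : ℝ → ENNReal) (a b s : ℝ) (hs : s ∈ Ioo a b) :
    ∫⁻ r in Ioo a b, chi s r * F r = ∫⁻ r in Ioo s b, F r := by
  have : ∀ r, chi s r * F r = (Ici s).indicator F r := by
    intro r
    unfold chi
    by_cases h : s ≤ r
    · rw [Set.indicator_of_mem (by exact h)]; simp [h]
    · rw [Set.indicator_of_notMem (by exact h)]; simp [h]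
  simp_rw [this]
  rw [lintegral_indicator measurableSet_Ici, Measure.restrict_restrict measurableSet_Ici,
    restrict_Ioo_eq_restrict_Ico (a := s)]
  congr 2
  ext x; simp only [mem_inter_iff, mem_Ici, mem_Ioo, mem_Ico]; constructor
  · rintro ⟨h1, h2, h3⟩; exact ⟨h1, h3⟩
  · rintro ⟨h1, h2⟩; exact ⟨h1, hs.1.trans_le h1, h2⟩

lemma chi_lint_left (F : ℝ → ENNReal) (a b s : ℝ) (hs : s ∈ Ioo a b) :
    ∫⁻ r in Ioo a b, chi r s * F r = ∫⁻ r in Ioo a s, F r := by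
  have : ∀ r, chi r s * F r = (Iic s).indicator F r := by
    intro r
    unfold chi
    by_cases h : r ≤ s
    · rw [Set.indicator_of_mem (by exact h)]; simp [h]
    · rw [Set.indicator_of_notMem (by exact h)]; simp [h]
  simp_rw [this]
  rw [lintegral_indicator measurableSet_Iic, Measure.restrict_restrict measurableSet_Iic,
    restrict_Ioo_eq_restrict_Ioc (b := s)]
  congr 2
  ext x; simp only [mem_inter_iff, mem_Iic, mem_Ioc, mem_Ioo]; constructor
  · rintro ⟨h1, h2, h3⟩; exact ⟨h2, h1⟩
  · rintro ⟨h1, h2⟩; exact ⟨h2, h1, h2.trans_lt hs.2⟩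

lemma omE_eq (v : ℝ → ℝ) (t : ℝ) (h0 : 0 ≤ t) :
    omE v t = ∫⁻ r in Ioo t 1, ENNReal.ofReal (v r) := by
  unfold omE
  rw [show Ioo (0:ℝ) 1 ∩ Ioi t = Ioo t 1 by
    ext x; simp only [mem_inter_iff, mem_Ioo, mem_Ioi]; constructor
    · rintro ⟨⟨a, b⟩, c⟩; exact ⟨c, b⟩
    · rintro ⟨a, b⟩; exact ⟨⟨by linarith, b⟩, a⟩]

/-- Tonelli for a triangle. -/
lemma tri (a b : ℝ) (F V : ℝ → ENNReal) (hF : Measurable F) (hV : Measurable V) :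
    ∫⁻ r in Ioo a b, V r * ∫⁻ s in Ioo a r, F s =
      ∫⁻ s in Ioo a b, F s * ∫⁻ r in Ioo s b, V r := by
  have c1 : ∀ r, Measurable fun s => chi s r := fun r =>
    chi_meas.comp (measurable_id.prodMk measurable_const)
  have c2 : ∀ s, Measurable fun r => chi s r := fun s => chi_meas.comp measurable_prodMk_left
  calc _ = ∫⁻ r in Ioo a b, ∫⁻ s in Ioo a b, V r * (chi s r * F s) := by
        apply setLIntegral_congr_fun measurableSet_Ioo
        intro r hr
        dsimp
        rw [lintegral_const_mul _ ((c1 r).fun_mul hF), chi_lint_left _ _ _ _ hr]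
    _ = ∫⁻ s in Ioo a b, ∫⁻ r in Ioo a b, V r * (chi s r * F s) := by
        rw [lintegral_lintegral_swap]
        exact ((hV.comp measurable_fst).mul ((chi_meas.comp measurable_swap).mul
          (hF.comp measurable_snd))).aemeasurable
    _ = _ := by
        apply setLIntegral_congr_fun measurableSet_Ioo
        intro s hs
        dsimp
        rw [← chi_lint_right _ _ _ _ hs, ← lintegral_const_mul _ ((c2 s).fun_mul hV)]
        congr 1; ext r; ring

/-- truncation parameters -/
def aseq (n : ℕ) : ℝ := 1 - 1 / ((n:ℝ) + 2)

lemma aseq_mem (n : ℕ) : aseq n ∈ Ioo (0:ℝ) 1 := by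
  unfold aseq
  have : (0:ℝ) ≤ n := n.cast_nonneg
  have h2 : 1 / ((n:ℝ) + 2) ≤ 1 / 2 := by gcongr; linarith
  have h3 : 0 < 1 / ((n:ℝ) + 2) := by positivity
  exact ⟨by linarith, by linarith⟩

lemma aseq_mono : Monotone aseq := by
  intro n m h
  unfold aseq
  have : (n:ℝ) ≤ m := by exact_mod_cast h
  gcongr

lemma trunc_mono (h : ℝ → ENNReal) : Monotone fun (n : ℕ) s => chi s (aseq n) * h s := by
  intro n m hnm s
  dsimp
  gcongr
  unfold chi
  split_ifs with h1 h2
  · rfl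
  · exact absurd (h1.trans (aseq_mono hnm)) h2
  · simp
  · simp

lemma trunc_sup (h : ℝ → ENNReal) (s : ℝ) (hs : s < 1) :
    ⨆ n, chi s (aseq n) * h s = h s := by
  apply le_antisymm
  · apply iSup_le
    intro n
    calc _ ≤ 1 * h s := by gcongr; exact chi_le_one _ _
      _ = _ := one_mul _
  · obtain ⟨n, hn⟩ := exists_nat_gt (1 / (1 - s))
    have h1 : 0 < 1 - s := by linarith
    have : s ≤ aseq n := by
      unfold aseq
      have h2 : 1 / ((n:ℝ) + 2) ≤ 1 - s := by
        rw [div_le_iff₀ (by positivity)]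
        rw [div_lt_iff₀ h1] at hn
        nlinarith
      linarith
    refine le_trans (le_of_eq ?_) (le_iSup (fun n => chi s (aseq n) * h s) n)
    simp [chi, this]

lemma sq_add_le_four (a b : ENNReal) : (a + b) ^ 2 ≤ 4 * a ^ 2 + 4 * b ^ 2 := by
  rcases le_total a b with h | h
  · calc (a + b) ^ 2 ≤ (b + b) ^ 2 := by gcongr
      _ = 4 * b ^ 2 := by ring
      _ ≤ _ := le_add_self
  · calc (a + b) ^ 2 ≤ (a + a) ^ 2 := by gcongr
      _ = 4 * a ^ 2 := by ring
      _ ≤ _ := le_self_add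

lemma A1 {v : ℝ → ℝ} (hv : RadialWeight v) (g : ℂ → ℂ) (hgm : Measurable g)
    (hg : DifferentiableOn ℂ g (Metric.ball 0 1)) :
    ∫⁻ t in Ioo (0:ℝ) 1, ‖g t‖ₑ ^ 2 * omE v t ≤
      ∫⁻ z in Metric.ball (0:ℂ) 1, ‖g z‖ₑ ^ 2 * ENNReal.ofReal (v ‖z‖) := by
  have hvm := hv.1
  rw [polar_disc _ (by fun_prop)]
  calc _ = ∫⁻ t in Ioo (0:ℝ) 1, ‖g t‖ₑ ^ 2 * ∫⁻ r in Ioo t 1, ENNReal.ofReal (v r) := by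
        apply setLIntegral_congr_fun measurableSet_Ioo
        intro t ht
        dsimp; rw [omE_eq v t ht.1.le]
    _ = ∫⁻ r in Ioo (0:ℝ) 1, ENNReal.ofReal (v r) * ∫⁻ t in Ioo 0 r, ‖g t‖ₑ ^ 2 := by
        rw [tri 0 1 (fun t => ‖g t‖ₑ ^ 2) _ (by fun_prop) (by fun_prop)]
    _ ≤ _ := by
        apply setLIntegral_mono' measurableSet_Ioo
        intro r hr
        have e : ∀ θ : ℝ, ‖(r:ℂ) * Complex.exp (θ * Complex.I)‖ = r := by
          intro θ
          rw [norm_mul, Complex.norm_exp_ofReal_mul_I]; simp [abs_of_pos hr.1]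
        simp_rw [e]
        rw [lintegral_mul_const' _ _ ENNReal.ofReal_ne_top]
        calc _ ≤ ENNReal.ofReal (v r) * (ENNReal.ofReal r *
              ∫⁻ θ in Ioo (-π) π, ‖g ((r:ℂ) * Complex.exp (θ * Complex.I))‖ₑ ^ 2) := by
              gcongr; exact fejer_riesz g hg r hr.1 hr.2
          _ = _ := by ring

lemma mem_ball_of_Ico {t : ℝ} (h0 : 0 ≤ t) (h1 : t < 1) : (t:ℂ) ∈ Metric.ball (0:ℂ) 1 := by
  simp [abs_of_nonneg h0, h1]

lemma A3 (f : ℂ → ℂ) (hf : DifferentiableOn ℂ f (Metric.ball 0 1)) (t : ℝ) (ht : t ∈ Ioo (0:ℝ) 1) :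
    ‖f t‖ₑ ≤ ‖f 0‖ₑ + ∫⁻ s in Ioo 0 t, ‖deriv f s‖ₑ := by
  have hd : DifferentiableOn ℂ (deriv f) (Metric.ball 0 1) := hf.deriv Metric.isOpen_ball
  have mem : ∀ s ∈ uIcc 0 t, (s:ℂ) ∈ Metric.ball (0:ℂ) 1 := by
    intro s hs
    rw [uIcc_of_le ht.1.le] at hs
    exact mem_ball_of_Ico hs.1 (hs.2.trans_lt ht.2)
  have := intervalIntegral.integral_eq_sub_of_hasDerivAt (a := 0) (b := t)
      (f := fun t : ℝ => f t) (f' := fun t : ℝ => deriv f t)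
      (fun s hs => (hf.differentiableAt (Metric.isOpen_ball.mem_nhds (mem s hs))).hasDerivAt.comp_ofReal) (by
        apply ContinuousOn.intervalIntegrable
        exact hd.continuousOn.comp Complex.continuous_ofReal.continuousOn mem)
  have e : f t = f 0 + ∫ s in (0:ℝ)..t, deriv f s := by rw [this]; simp
  rw [e, restrict_Ioo_eq_restrict_Ioc]
  refine (enorm_add_le _ _).trans ?_
  gcongr
  rw [intervalIntegral.integral_of_le ht.1.le]
  exact enorm_integral_le_lintegral_enorm _

lemma ofReal_sq_aux {x : ℝ} (hx : 0 ≤ x) (d : ℝ) (m : ℕ) (hd : 0 ≤ d) :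
    ENNReal.ofReal (√x / d ^ m) ^ 2 = ENNReal.ofReal (x / d ^ (2 * m)) := by
  rw [← ENNReal.ofReal_pow (by positivity), div_pow, Real.sq_sqrt hx, ← pow_mul, mul_comm m]

lemma stepA {v : ℝ → ℝ} (hv : RadialWeight v) (hD : DoublingD v) (hM : M1v v < ⊤) :
    ∃ C : ℝ, 0 ≤ C ∧ ∀ f : ℂ → ℂ, DifferentiableOn ℂ f (Metric.ball 0 1) →
      ∫⁻ t in Ioo (0:ℝ) 1, ‖f t‖ₑ ^ 2 * ENNReal.ofReal (om v t / (1-t)^2) ≤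
        ENNReal.ofReal C * DvSq v f := by
  obtain ⟨C, hC, hC1, hC2⟩ := P1 hv hD hM
  refine ⟨4 * C + 4 * (4 * C ^ 2 * π), by positivity, fun f hf => ?_⟩
  have hd : DifferentiableOn ℂ (deriv f) (Metric.ball 0 1) := hf.deriv Metric.isOpen_ball
  have hdm : Measurable (deriv f) := measurable_deriv f
  have mo := om_meas hv
  set u : ℝ → ENNReal := fun t => ENNReal.ofReal (√(om v t) / (1 - t) ^ 1) with hu
  set k : ℝ → ENNReal := fun t => ENNReal.ofReal (√(om v t) / (1 - t) ^ 0) with hk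
  set h : ℝ → ENNReal := fun t => ‖deriv f t‖ₑ with hh
  have mh : Measurable h := by fun_prop
  have mu : Measurable u := by fun_prop
  have mk : Measurable k := by fun_prop
  have u2 : ∀ t ∈ Ioo (0:ℝ) 1, u t ^ 2 = ENNReal.ofReal (om v t / (1 - t) ^ 2) := fun t ht =>
    ofReal_sq_aux (om_nonneg _ _) _ 1 (by linarith [ht.2])
  have k2 : ∀ t ∈ Ioo (0:ℝ) 1, k t ^ 2 = omE v t := by
    intro t ht
    rw [← ofReal_om hv, hk]
    dsimp only
    rw [ofReal_sq_aux (om_nonneg _ _) _ 0 (by linarith [ht.2])]; simp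
  have uk : ∀ t ∈ Ioo (0:ℝ) 1, u t * k t = ENNReal.ofReal (om v t / (1 - t)) := by
    intro t ht
    have : 0 < 1 - t := by linarith [ht.2]
    rw [hu, hk]
    dsimp only
    rw [← ENNReal.ofReal_mul (by positivity)]
    congr 1
    rw [div_mul_div_comm, Real.mul_self_sqrt (om_nonneg _ _)]; simp
  have u2i : ∫⁻ r in Ioo (0:ℝ) 1, u r ^ 2 ≤ ENNReal.ofReal C := by
    rw [setLIntegral_congr_fun measurableSet_Ioo (g := fun t => ENNReal.ofReal (om v t / (1 - t) ^ 2)) u2]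
    exact hC1
  have hardy := hardy_abs (volume.restrict (Ioo (0:ℝ) 1)) chi chi_meas chi_le_one chi_total h u k
    mu mk (ENNReal.ofReal C) (by
      filter_upwards [ae_restrict_mem measurableSet_Ioo] with s hs
      rw [uk s hs, ← ENNReal.ofReal_mul hC]
      refine le_trans (le_of_eq ?_) (hC2 s hs)
      rw [← chi_lint_right _ 0 1 s hs]
      apply setLIntegral_congr_fun measurableSet_Ioo
      intro r hr
      dsimp only
      rw [u2 r hr, mul_comm])
    (fun n s => chi s (aseq n) * h s)
    (fun n => (chi_meas.comp (measurable_id.prodMk measurable_const)).fun_mul mh) (trunc_mono h)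
    (by
      filter_upwards [ae_restrict_mem measurableSet_Ioo] with s hs
      exact trunc_sup h s hs.2)
    (by
      intro n
      set K := ∫⁻ s in Ioo 0 (aseq n), h s with hK
      have hKfin : K ≠ ⊤ := by
        have cont : ContinuousOn (fun t : ℝ => deriv f t) (Icc 0 (aseq n)) :=
          hd.continuousOn.comp Complex.continuous_ofReal.continuousOn
            (fun t ht => mem_ball_of_Ico ht.1 (ht.2.trans_lt (aseq_mem n).2))
        have := (cont.integrableOn_Icc (μ := volume)).2
        exact ((lintegral_mono_set Ioo_subset_Icc_self).trans_lt this).ne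
      have : ∫⁻ r in Ioo (0:ℝ) 1, (u r * ∫⁻ s in Ioo (0:ℝ) 1, chi s r * (chi s (aseq n) * h s)) ^ 2
          ≤ ENNReal.ofReal C * K ^ 2 := by
        calc _ ≤ ∫⁻ r in Ioo (0:ℝ) 1, u r ^ 2 * K ^ 2 := by
              gcongr with r
              rw [mul_pow]; gcongr
              rw [hK, ← chi_lint_left _ 0 1 _ (aseq_mem n)]
              refine lintegral_mono fun s => ?_
              calc chi s r * (chi s (aseq n) * h s) ≤ 1 * (chi s (aseq n) * h s) :=
                    mul_le_mul_left (chi_le_one _ _) _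
                _ = _ := one_mul _
          _ = (∫⁻ r in Ioo (0:ℝ) 1, u r ^ 2) * K ^ 2 :=
              lintegral_mul_const _ (mu.pow_const 2)
          _ ≤ _ := by gcongr
      exact (this.trans_lt (ENNReal.mul_lt_top ENNReal.ofReal_lt_top (by
        exact ENNReal.pow_lt_top hKfin.lt_top))).ne)
  have kh : ∫⁻ r in Ioo (0:ℝ) 1, (k r * h r) ^ 2 ≤
      ∫⁻ z in Metric.ball (0:ℂ) 1, ‖deriv f z‖ₑ ^ 2 * ENNReal.ofReal (v ‖z‖) := by
    refine le_trans (le_of_eq ?_) (A1 hv (deriv f) hdm hd)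
    apply setLIntegral_congr_fun measurableSet_Ioo
    intro r hr
    dsimp only
    rw [mul_pow, k2 r hr, mul_comm]
  set I := ∫⁻ z in Metric.ball (0:ℂ) 1, ‖deriv f z‖ₑ ^ 2 * ENNReal.ofReal (v ‖z‖) with hI
  have hDv : DvSq v f = ‖f 0‖ₑ ^ 2 + (ENNReal.ofReal π)⁻¹ * I := rfl
  have hIp : I = ENNReal.ofReal π * ((ENNReal.ofReal π)⁻¹ * I) := by
    rw [← mul_assoc, ENNReal.mul_inv_cancel (by simp [Real.pi_pos]) ENNReal.ofReal_ne_top, one_mul]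
  calc ∫⁻ t in Ioo (0:ℝ) 1, ‖f t‖ₑ ^ 2 * ENNReal.ofReal (om v t / (1-t)^2)
      ≤ ∫⁻ t in Ioo (0:ℝ) 1, (4 * ‖f 0‖ₑ ^ 2 * u t ^ 2 +
          4 * (u t * ∫⁻ s in Ioo (0:ℝ) 1, chi s t * h s) ^ 2) := by
        apply setLIntegral_mono' measurableSet_Ioo
        intro t ht
        rw [← u2 t ht, chi_lint_left _ _ _ _ ht]
        calc _ ≤ (‖f 0‖ₑ + ∫⁻ s in Ioo 0 t, ‖deriv f s‖ₑ) ^ 2 * u t ^ 2 := by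
              gcongr; exact A3 f hf t ht
          _ ≤ (4 * ‖f 0‖ₑ ^ 2 + 4 * (∫⁻ s in Ioo 0 t, ‖deriv f s‖ₑ) ^ 2) * u t ^ 2 := by
              gcongr; exact sq_add_le_four _ _
          _ = _ := by ring
    _ = 4 * ‖f 0‖ₑ ^ 2 * (∫⁻ t in Ioo (0:ℝ) 1, u t ^ 2) +
          4 * ∫⁻ t in Ioo (0:ℝ) 1, (u t * ∫⁻ s in Ioo (0:ℝ) 1, chi s t * h s) ^ 2 := by
        rw [lintegral_add_left (by fun_prop), lintegral_const_mul _ (mu.pow_const 2),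
          lintegral_const_mul' _ _ (by norm_num)]
    _ ≤ 4 * ‖f 0‖ₑ ^ 2 * ENNReal.ofReal C + 4 * (4 * ENNReal.ofReal C ^ 2 * I) := by
        gcongr
        exact hardy.trans (by gcongr)
    _ ≤ _ := by
        rw [hDv, ENNReal.ofReal_add (by positivity) (by positivity)]
        rw [ENNReal.ofReal_mul (by norm_num), ENNReal.ofReal_mul (by norm_num),
          ENNReal.ofReal_mul (by positivity), ENNReal.ofReal_mul (by norm_num),
          ENNReal.ofReal_pow hC, show ENNReal.ofReal 4 = 4 by norm_num]
        conv_lhs => rw [hIp]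
        set J := (ENNReal.ofReal π)⁻¹ * I
        rw [add_mul, mul_add, mul_add]
        refine add_le_add ?_ ?_
        · refine le_trans (le_of_eq ?_) le_self_add
          ring
        · refine le_trans (le_of_eq ?_) le_add_self
          ring

lemma ftc_lint (G g : ℝ → ℝ) (a r : ℝ) (har : a ≤ r) (hd : ∀ s ∈ Icc a r, HasDerivAt G (g s) s)
    (hc : ContinuousOn g (Icc a r)) (hg : ∀ s ∈ Icc a r, 0 ≤ g s) :
    ENNReal.ofReal (G r - G a) = ∫⁻ s in Ioo a r, ENNReal.ofReal (g s) := by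
  have hi : IntervalIntegrable g volume a r := by
    apply ContinuousOn.intervalIntegrable; rwa [uIcc_of_le har]
  rw [← intervalIntegral.integral_eq_sub_of_hasDerivAt (f := G) (f' := g)
    (by rwa [uIcc_of_le har]) hi,
    intervalIntegral.integral_of_le har, ← restrict_Ioo_eq_restrict_Ioc,
    ofReal_integral_eq_lintegral_ofReal]
  · exact (hc.integrableOn_Icc).mono_set Ioo_subset_Icc_self
  · filter_upwards [ae_restrict_mem measurableSet_Ioo] with s hs
    exact hg s (Ioo_subset_Icc_self hs)

lemma ftc1 (a r : ℝ) (har : a ≤ r) (hr : r < 1) :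
    ENNReal.ofReal (1 / (1 - r)) ≤ ENNReal.ofReal (1 / (1 - a)) +
      ∫⁻ s in Ioo a r, ENNReal.ofReal (1 / (1 - s) ^ 2) := by
  have key := ftc_lint (fun s => 1 / (1 - s)) (fun s => 1 / (1 - s) ^ 2) a r har (by
    intro s hs
    have h : 1 - s ≠ 0 := by linarith [hs.2]
    have := ((hasDerivAt_id s).const_sub 1).inv h
    simp only [id] at this
    have e : (fun s : ℝ => 1 / (1 - s)) = (fun x => 1 - x)⁻¹ := by ext; simp
    rw [e]
    exact this.congr_deriv (by ring)) (by
    apply ContinuousOn.div₀ (by fun_prop) (by fun_prop)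
    intro s hs
    have h : 1 - s ≠ 0 := by linarith [hs.2]
    positivity) (fun s hs => by positivity)
  rw [← key, ← ENNReal.ofReal_add (by have : 0 < 1 - a := by linarith
                                      positivity)]
  · apply ENNReal.ofReal_le_ofReal; linarith
  · have : 0 < 1 - r := by linarith
    have : 1 / (1 - a) ≤ 1 / (1 - r) := by gcongr
    linarith

lemma ftc3 (r : ℝ) (h0 : 0 ≤ r) (hr : r < 1) :
    ENNReal.ofReal (1 / (1 - r) ^ 3) ≤ 1 +
      ∫⁻ s in Ioo 0 r, ENNReal.ofReal (3 / (1 - s) ^ 4) := by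
  have key := ftc_lint (fun s => 1 / (1 - s) ^ 3) (fun s => 3 / (1 - s) ^ 4) 0 r h0 (by
    intro s hs
    have h : 1 - s ≠ 0 := by linarith [hs.2]
    have := (((hasDerivAt_id s).const_sub 1).fun_pow 3).inv (pow_ne_zero 3 h)
    simp only [id] at this
    have e : (fun s : ℝ => 1 / (1 - s) ^ 3) = (fun x => (1 - x) ^ 3)⁻¹ := by ext; simp
    rw [e]
    exact this.congr_deriv (by field_simp; norm_num; ring)) (by
    apply ContinuousOn.div₀ (by fun_prop) (by fun_prop)
    intro s hs
    have h : 1 - s ≠ 0 := by linarith [hs.2]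
    positivity) (fun s hs => by positivity)
  rw [← key, ← ENNReal.ofReal_one, ← ENNReal.ofReal_add zero_le_one]
  · apply ENNReal.ofReal_le_ofReal; simp
  · have : 0 < 1 - r := by linarith
    have : 1 / (1 - 0) ^ 3 ≤ 1 / (1 - r) ^ 3 := by gcongr
    linarith

lemma Itail {v : ℝ → ℝ} (hv : RadialWeight v) {C : ℝ} (hC : 0 ≤ C)
    (hP : ∀ r ∈ Ioo (0:ℝ) 1, ∫⁻ s in Ioo r 1, ENNReal.ofReal (om v s / (1-s)^2) ≤
        ENNReal.ofReal (C * (om v r / (1 - r)))) (t : ℝ) (ht : t ∈ Ioo (0:ℝ) 1) :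
    ∫⁻ r in Ioo t 1, ENNReal.ofReal (v r) * ENNReal.ofReal (1 / (1 - r)) ≤
      ENNReal.ofReal ((1 + C) * (om v t / (1 - t))) := by
  have hvm := hv.1
  have ht' : 0 < 1 - t := by linarith [ht.2]
  have hm : Measurable fun r => ENNReal.ofReal (v r) := by fun_prop
  calc _ ≤ ∫⁻ r in Ioo t 1, (ENNReal.ofReal (1 / (1 - t)) * ENNReal.ofReal (v r) +
          ENNReal.ofReal (v r) * ∫⁻ s in Ioo t r, ENNReal.ofReal (1 / (1 - s) ^ 2)) := by
        apply setLIntegral_mono' measurableSet_Ioo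
        intro r hr
        rw [mul_comm (ENNReal.ofReal (1 / (1 - t))), ← mul_add]
        gcongr
        exact ftc1 t r hr.1.le hr.2
    _ = ENNReal.ofReal (1 / (1 - t)) * omE v t + ∫⁻ s in Ioo t 1, ENNReal.ofReal (om v s / (1-s)^2) := by
        rw [lintegral_add_left (hm.const_mul _), lintegral_const_mul _ hm, ← omE_eq v t ht.1.le,
          tri t 1 _ _ (by fun_prop) hm]
        congr 1
        apply setLIntegral_congr_fun measurableSet_Ioo
        intro s hs
        dsimp only
        rw [← omE_eq v s (ht.1.trans hs.1).le, ← ofReal_om hv,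
          ← ENNReal.ofReal_mul (by positivity)]
        congr 1; ring
    _ ≤ ENNReal.ofReal (1 / (1 - t)) * omE v t + ENNReal.ofReal (C * (om v t / (1 - t))) := by
        gcongr; exact hP t ht
    _ = _ := by
        have := om_nonneg v t
        rw [← ofReal_om hv, ← ENNReal.ofReal_mul (by positivity),
          ← ENNReal.ofReal_add (by positivity) (by positivity)]
        congr 1; ring

lemma Ihead {v : ℝ → ℝ} (hv : RadialWeight v) {C : ℝ} (hC : 0 ≤ C)
    (hP0 : ∀ r ∈ Ioo (0:ℝ) 1, om v 0 ≤ C * (om v r / (1 - r) ^ 3))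
    (hP : ∀ r ∈ Ioo (0:ℝ) 1, ∫⁻ s in Ioo 0 r, ENNReal.ofReal (om v s / (1-s)^4) ≤
        ENNReal.ofReal (C * (om v r / (1 - r) ^ 3))) (t : ℝ) (ht : t ∈ Ioo (0:ℝ) 1) :
    ∫⁻ r in Ioo 0 t, ENNReal.ofReal (v r) * ENNReal.ofReal (1 / (1 - r) ^ 3) ≤
      ENNReal.ofReal (4 * C * (om v t / (1 - t) ^ 3)) := by
  have hvm := hv.1
  have ht' : 0 < 1 - t := by linarith [ht.2]
  have hm : Measurable fun r => ENNReal.ofReal (v r) := by fun_prop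
  have sub : ∀ s, 0 ≤ s → ∫⁻ r in Ioo s t, ENNReal.ofReal (v r) ≤ omE v s := by
    intro s hs
    rw [omE_eq v s hs]
    exact lintegral_mono_set (Ioo_subset_Ioo_right ht.2.le)
  calc _ ≤ ∫⁻ r in Ioo 0 t, (ENNReal.ofReal (v r) +
          ENNReal.ofReal (v r) * ∫⁻ s in Ioo 0 r, ENNReal.ofReal (3 / (1 - s) ^ 4)) := by
        apply setLIntegral_mono' measurableSet_Ioo
        intro r hr
        calc _ ≤ ENNReal.ofReal (v r) * (1 + ∫⁻ s in Ioo 0 r, ENNReal.ofReal (3 / (1 - s) ^ 4)) := by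
              gcongr
              exact ftc3 r hr.1.le (hr.2.trans ht.2)
          _ = _ := by rw [mul_add, mul_one]
    _ ≤ omE v 0 + 3 * ∫⁻ s in Ioo 0 t, ENNReal.ofReal (om v s / (1-s)^4) := by
        rw [lintegral_add_left hm, tri 0 t _ _ (by fun_prop) hm,
          ← lintegral_const_mul' _ _ (by norm_num)]
        gcongr ?_ + ?_
        · exact sub 0 le_rfl
        · apply setLIntegral_mono' measurableSet_Ioo
          intro s hs
          refine (mul_le_mul_right (sub s hs.1.le) _).trans (le_of_eq ?_)
          rw [← ofReal_om hv, ← ENNReal.ofReal_mul (by positivity),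
            show (3:ENNReal) = ENNReal.ofReal 3 by norm_num, ← ENNReal.ofReal_mul (by positivity)]
          congr 1; ring
    _ ≤ ENNReal.ofReal (C * (om v t / (1 - t) ^ 3)) +
          3 * ENNReal.ofReal (C * (om v t / (1 - t) ^ 3)) := by
        gcongr
        · rw [← ofReal_om hv]; exact ENNReal.ofReal_le_ofReal (hP0 t ht)
        · exact hP t ht
    _ = _ := by
        have := om_nonneg v t
        rw [show (3:ENNReal) = ENNReal.ofReal 3 by norm_num, ← ENNReal.ofReal_mul (by positivity),
          ← ENNReal.ofReal_add (by positivity) (by positivity)]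
        congr 1; ring

lemma Kbound {v : ℝ → ℝ} (hv : RadialWeight v) (hD : DoublingD v) (hM1 : M1v v < ⊤)
    (hM2 : M2v v < ⊤) : ∃ C : ℝ, 0 ≤ C ∧ ∀ t ∈ Ioo (0:ℝ) 1, ∀ s ∈ Ioo (0:ℝ) 1,
      ∫⁻ z in Metric.ball (0:ℂ) 1, ENNReal.ofReal (1 / ‖1 - t * z‖ ^ 2) *
        ENNReal.ofReal (1 / ‖1 - s * z‖ ^ 2) * ENNReal.ofReal (v ‖z‖) ≤
      ENNReal.ofReal (C * (om v t / (1 - t) ^ 3)) := by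
  obtain ⟨C1, hC1, -, hP1⟩ := P1 hv hD hM1
  obtain ⟨C2, hC2, -, hP0, hP2⟩ := P2 hv hM2
  have hvm := hv.1
  refine ⟨2 * π * (4 * C2 + (1 + C1)), by positivity, fun t ht s hs => ?_⟩
  have ht' : 0 < 1 - t := by linarith [ht.2]
  have ho := om_nonneg v t
  rw [polar_disc _ (by fun_prop)]
  calc _ ≤ ∫⁻ r in Ioo (0:ℝ) 1, ENNReal.ofReal (2 * π) * (ENNReal.ofReal (v r) *
        (ENNReal.ofReal (1 / (1 - t * r) ^ 2) * ENNReal.ofReal (1 / (1 - r)))) := by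
        apply setLIntegral_mono' measurableSet_Ioo
        intro r hr
        have htr : t * r < 1 := by nlinarith [ht.1, ht.2, hr.1, hr.2]
        have hsr : s * r ≤ r := by nlinarith [hs.1, hs.2, hr.1, hr.2]
        have hsr0 : 0 ≤ s * r := by nlinarith [hs.1, hs.2, hr.1, hr.2]
        have hr' : 0 < 1 - r := by linarith [hr.2]
        calc _ ≤ 1 * ∫⁻ θ in Ioo (-π) π, (ENNReal.ofReal (1 / (1 - t * r) ^ 2) * ENNReal.ofReal (v r)) *
              ENNReal.ofReal (1 / ‖1 - ((s * r : ℝ):ℂ) * Complex.exp (θ * Complex.I)‖ ^ 2) := by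
              gcongr ?_ * ?_
              · exact ENNReal.ofReal_le_one.2 hr.2.le
              · refine lintegral_mono fun θ => ?_
                have nrm : ‖(r:ℂ) * Complex.exp (θ * Complex.I)‖ = r := by
                  rw [norm_mul, Complex.norm_exp_ofReal_mul_I]; simp [abs_of_pos hr.1]
                have low : 1 - t * r ≤ ‖1 - (t:ℂ) * ((r:ℂ) * Complex.exp (θ * Complex.I))‖ := by
                  have := norm_sub_norm_le (1:ℂ) ((t:ℂ) * ((r:ℂ) * Complex.exp (θ * Complex.I)))
                  rw [norm_mul, nrm] at this
                  simpa [abs_of_pos ht.1] using this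
                rw [nrm, mul_right_comm]
                gcongr ?_ * _ * ?_
                · apply ENNReal.ofReal_le_ofReal
                  have : 0 < 1 - t * r := by linarith
                  gcongr
                · rw [Complex.ofReal_mul, mul_assoc]
          _ ≤ (ENNReal.ofReal (1 / (1 - t * r) ^ 2) * ENNReal.ofReal (v r)) *
                ENNReal.ofReal (2 * π / (1 - s * r)) := by
              rw [one_mul, lintegral_const_mul' _ _ (by finiteness)]
              gcongr
              exact poisson_bound _ hsr0 (by linarith)
          _ ≤ (ENNReal.ofReal (1 / (1 - t * r) ^ 2) * ENNReal.ofReal (v r)) *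
                ENNReal.ofReal (2 * π / (1 - r)) := by
              gcongr
          _ = _ := by
              rw [div_eq_mul_one_div (2 * π), ENNReal.ofReal_mul (by positivity)]
              ring
    _ = ENNReal.ofReal (2 * π) * ((∫⁻ r in Ioo (0:ℝ) t, (ENNReal.ofReal (v r) *
        (ENNReal.ofReal (1 / (1 - t * r) ^ 2) * ENNReal.ofReal (1 / (1 - r))))) +
        ∫⁻ r in Ioo t 1, (ENNReal.ofReal (v r) *
        (ENNReal.ofReal (1 / (1 - t * r) ^ 2) * ENNReal.ofReal (1 / (1 - r))))) := by
        rw [lintegral_const_mul' _ _ (by finiteness), lint_split _ 0 t 1 ht.1 ht.2]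
    _ ≤ ENNReal.ofReal (2 * π) * (ENNReal.ofReal (4 * C2 * (om v t / (1 - t) ^ 3)) +
          ENNReal.ofReal (1 / (1 - t) ^ 2) * ENNReal.ofReal ((1 + C1) * (om v t / (1 - t)))) := by
        refine mul_le_mul_right (add_le_add ?_ ?_) _
        · refine le_trans ?_ (Ihead hv hC2 hP0 hP2 t ht)
          apply setLIntegral_mono' measurableSet_Ioo
          intro r hr
          have hr' : 0 < 1 - r := by linarith [hr.2]
          have : 1 - r ≤ 1 - t * r := by nlinarith [hr.1]
          rw [← ENNReal.ofReal_mul (by positivity)]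
          gcongr
          rw [div_mul_div_comm, one_mul, pow_succ (1 - r) 2]
          gcongr
        · refine le_trans ?_ (mul_le_mul_right (Itail hv hC1 hP1 t ht) _)
          rw [← lintegral_const_mul' _ _ (by finiteness)]
          apply setLIntegral_mono' measurableSet_Ioo
          intro r hr
          have : 1 - t ≤ 1 - t * r := by nlinarith [hr.2, ht.1]
          rw [mul_left_comm]
          gcongr
    _ = _ := by
        rw [← ENNReal.ofReal_mul (by positivity), ← ENNReal.ofReal_add (by positivity) (by positivity),
          ← ENNReal.ofReal_mul (by positivity)]
        congr 1
        field_simp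

lemma hardyB {v : ℝ → ℝ} (hv : RadialWeight v) (hM : M2v v < ⊤) :
    ∃ C : ℝ, 0 ≤ C ∧ ∀ φ : ℝ → ENNReal, Measurable φ →
      (∫⁻ t in Ioo (0:ℝ) 1, φ t) ^ 2 ≤ ENNReal.ofReal C *
        (∫⁻ t in Ioo (0:ℝ) 1, φ t ^ 2 * ENNReal.ofReal (om v t / (1-t)^2)) ∧
      ((∫⁻ t in Ioo (0:ℝ) 1, φ t ^ 2 * ENNReal.ofReal (om v t / (1-t)^2)) < ⊤ →
      ∫⁻ t in Ioo (0:ℝ) 1, φ t * ENNReal.ofReal (om v t / (1-t)^3) *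
        (∫⁻ s in Ioo (0:ℝ) 1, chi t s * φ s) ≤ ENNReal.ofReal C *
        (∫⁻ t in Ioo (0:ℝ) 1, φ t ^ 2 * ENNReal.ofReal (om v t / (1-t)^2))) := by
  obtain ⟨C, hC, hC1, -, hC2⟩ := P2 hv hM
  have mo := om_meas hv
  refine ⟨2 * C, by positivity, fun φ mφ => ?_⟩
  set N := ∫⁻ t in Ioo (0:ℝ) 1, φ t ^ 2 * ENNReal.ofReal (om v t / (1-t)^2) with hN
  set k : ℝ → ENNReal := fun t => ENNReal.ofReal (√(om v t) / (1 - t) ^ 1) with hk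
  set u : ℝ → ENNReal := fun t => ENNReal.ofReal (√(om v t) / (1 - t) ^ 2) with hu
  have mu : Measurable u := by fun_prop
  have mk : Measurable k := by fun_prop
  have k2 : ∀ t ∈ Ioo (0:ℝ) 1, k t ^ 2 = ENNReal.ofReal (om v t / (1 - t) ^ 2) := fun t ht =>
    ofReal_sq_aux (om_nonneg _ _) _ 1 (by linarith [ht.2])
  have u2 : ∀ t ∈ Ioo (0:ℝ) 1, u t ^ 2 = ENNReal.ofReal (om v t / (1 - t) ^ 4) := fun t ht =>
    ofReal_sq_aux (om_nonneg _ _) _ 2 (by linarith [ht.2])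
  have uk : ∀ t ∈ Ioo (0:ℝ) 1, u t * k t = ENNReal.ofReal (om v t / (1 - t) ^ 3) := by
    intro t ht
    have : 0 < 1 - t := by linarith [ht.2]
    rw [hu, hk]
    dsimp only
    rw [← ENNReal.ofReal_mul (by positivity)]
    congr 1
    rw [div_mul_div_comm, Real.mul_self_sqrt (om_nonneg _ _), ← pow_add]
  have Nk : ∫⁻ t in Ioo (0:ℝ) 1, (k t * φ t) ^ 2 = N := by
    apply setLIntegral_congr_fun measurableSet_Ioo
    intro t ht
    dsimp only
    rw [mul_pow, k2 t ht, mul_comm]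
  have L1 : (∫⁻ t in Ioo (0:ℝ) 1, φ t) ^ 2 ≤ ENNReal.ofReal C * N := by
    have cs := cs_lint (volume.restrict (Ioo (0:ℝ) 1)) (fun t => (k t)⁻¹) (fun t => k t * φ t)
      (by fun_prop) (by fun_prop)
    rw [Nk] at cs
    have kpos : ∀ t ∈ Ioo (0:ℝ) 1, 0 < √(om v t) / (1 - t) ^ 1 := by
      intro t ht
      have : 0 < 1 - t := by linarith [ht.2]
      have := om_pos hv t ht.2
      positivity
    rw [setLIntegral_congr_fun (g := φ) measurableSet_Ioo (by
      intro t ht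
      dsimp only
      rw [← mul_assoc, ENNReal.inv_mul_cancel _ ENNReal.ofReal_ne_top, one_mul]
      simpa [hk] using kpos t ht)] at cs
    refine cs.trans ?_
    gcongr
    refine le_trans (le_of_eq ?_) hC1
    apply setLIntegral_congr_fun measurableSet_Ioo
    intro t ht
    dsimp only
    have h1 : 0 < 1 - t := by linarith [ht.2]
    have h2 := om_pos hv t ht.2
    rw [← ENNReal.inv_pow, k2 t ht, ← ENNReal.ofReal_inv_of_pos (by positivity), inv_div]
  refine ⟨L1.trans (by gcongr; linarith), fun hfin => ?_⟩
  have Lfin : ∫⁻ t in Ioo (0:ℝ) 1, φ t ≠ ⊤ := by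
    intro h
    rw [h] at L1
    have := L1.trans_lt (ENNReal.mul_lt_top ENNReal.ofReal_lt_top hfin)
    simp at this
  have hardy := hardy_abs (volume.restrict (Ioo (0:ℝ) 1)) (fun s r => chi r s) chi_meas'
    (fun s r => chi_le_one r s) (fun s r => chi_total r s) φ u k mu mk (ENNReal.ofReal C) (by
      filter_upwards [ae_restrict_mem measurableSet_Ioo] with s hs
      rw [uk s hs, ← ENNReal.ofReal_mul hC]
      refine le_trans (le_of_eq ?_) (hC2 s hs)
      rw [← chi_lint_left _ 0 1 s hs]
      apply setLIntegral_congr_fun measurableSet_Ioo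
      intro r hr
      dsimp only
      rw [u2 r hr, mul_comm])
    (fun n s => chi s (aseq n) * φ s)
    (fun n => (chi_meas.comp (measurable_id.prodMk measurable_const)).fun_mul mφ) (trunc_mono φ)
    (by
      filter_upwards [ae_restrict_mem measurableSet_Ioo] with s hs
      exact trunc_sup φ s hs.2)
    (by
      intro n
      set K := ∫⁻ t in Ioo (0:ℝ) 1, φ t with hK
      have : ∫⁻ r in Ioo (0:ℝ) 1, (u r * ∫⁻ s in Ioo (0:ℝ) 1, chi r s * (chi s (aseq n) * φ s)) ^ 2
          ≤ (∫⁻ r in Ioo (0:ℝ) (aseq n), ENNReal.ofReal (om v r / (1 - r) ^ 4)) * K ^ 2 := by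
        calc _ ≤ ∫⁻ r in Ioo (0:ℝ) 1, (chi r (aseq n) * ENNReal.ofReal (om v r / (1 - r) ^ 4)) * K ^ 2 := by
              apply setLIntegral_mono' measurableSet_Ioo
              intro r hr
              rw [mul_pow, u2 r hr, mul_comm (chi r (aseq n)), mul_assoc]
              refine mul_le_mul_right ?_ _
              by_cases hra : r ≤ aseq n
              · rw [show chi r (aseq n) = 1 by simp [chi, hra], one_mul]
                gcongr
                refine lintegral_mono fun s => ?_
                calc chi r s * (chi s (aseq n) * φ s) ≤ 1 * (1 * φ s) :=
                      mul_le_mul' (chi_le_one _ _) (mul_le_mul_left (chi_le_one _ _) _)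
                  _ = _ := by simp
              · have z : ∀ s, chi r s * (chi s (aseq n) * φ s) = 0 := by
                  intro s
                  unfold chi
                  split_ifs with h1 h2
                  · exact absurd (h1.trans h2) hra
                  all_goals simp
                simp [z]
          _ = _ := by
              rw [lintegral_mul_const' _ _ (by finiteness), chi_lint_left _ _ _ _ (aseq_mem n)]
      exact (this.trans_lt (ENNReal.mul_lt_top ((hC2 _ (aseq_mem n)).trans_lt ENNReal.ofReal_lt_top)
        (ENNReal.pow_lt_top Lfin.lt_top))).ne)
  rw [Nk] at hardy
  have mΦ : Measurable fun r => ∫⁻ s in Ioo (0:ℝ) 1, chi r s * φ s :=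
    Measurable.lintegral_prod_right' (f := fun p : ℝ × ℝ => chi p.1 p.2 * φ p.2)
      (chi_meas.mul (mφ.comp measurable_snd))
  have cs := cs_lint (volume.restrict (Ioo (0:ℝ) 1)) (fun t => k t * φ t)
    (fun t => u t * ∫⁻ s in Ioo (0:ℝ) 1, chi t s * φ s) (mk.fun_mul mφ).aemeasurable
    (mu.fun_mul mΦ).aemeasurable
  rw [Nk, setLIntegral_congr_fun (g := fun t => φ t * ENNReal.ofReal (om v t / (1-t)^3) *
        (∫⁻ s in Ioo (0:ℝ) 1, chi t s * φ s)) measurableSet_Ioo (by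
      intro t ht
      dsimp only
      rw [← uk t ht]; ring)] at cs
  have : (∫⁻ t in Ioo (0:ℝ) 1, φ t * ENNReal.ofReal (om v t / (1-t)^3) *
        (∫⁻ s in Ioo (0:ℝ) 1, chi t s * φ s)) ^ 2 ≤ (ENNReal.ofReal (2 * C) * N) ^ 2 := by
    calc _ ≤ N * (4 * ENNReal.ofReal C ^ 2 * N) := cs.trans (by gcongr)
      _ = _ := by
        rw [ENNReal.ofReal_mul (by norm_num), show ENNReal.ofReal 2 = 2 by norm_num]; ring
  exact (ENNReal.pow_le_pow_left_iff (by norm_num)).1 this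

/-- The squared kernel. -/
def pk (z : ℂ) (t : ℝ) : ENNReal := ENNReal.ofReal (1 / ‖1 - t * z‖ ^ 2)

lemma pk_meas : Measurable fun q : ℂ × ℝ => pk q.1 q.2 := by
  unfold pk; fun_prop

lemma mG_aux {φ : ℝ → ENNReal} (mφ : Measurable φ) {v : ℝ → ℝ} (hvm : Measurable v) :
    Measurable fun q : ℂ × (ℝ × ℝ) =>
      φ q.2.1 * pk q.1 q.2.1 * (chi q.2.1 q.2.2 * (φ q.2.2 * pk q.1 q.2.2)) *
        ENNReal.ofReal (v ‖q.1‖) := by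
  have a1 : Measurable fun q : ℂ × (ℝ × ℝ) => pk q.1 q.2.1 :=
    pk_meas.comp (f := fun q : ℂ × (ℝ × ℝ) => (q.1, q.2.1)) (by fun_prop)
  have a2 : Measurable fun q : ℂ × (ℝ × ℝ) => pk q.1 q.2.2 :=
    pk_meas.comp (f := fun q : ℂ × (ℝ × ℝ) => (q.1, q.2.2)) (by fun_prop)
  have a3 : Measurable fun q : ℂ × (ℝ × ℝ) => chi q.2.1 q.2.2 :=
    chi_meas.comp measurable_snd
  fun_prop

lemma stepB {v : ℝ → ℝ} (hv : RadialWeight v) (hD : DoublingD v) (hM1 : M1v v < ⊤)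
    (hM2 : M2v v < ⊤) :
    ∃ C : ℝ, 0 ≤ C ∧ ∀ φ : ℝ → ENNReal, Measurable φ →
      (∫⁻ t in Ioo (0:ℝ) 1, φ t ^ 2 * ENNReal.ofReal (om v t / (1-t)^2)) < ⊤ →
      (∫⁻ t in Ioo (0:ℝ) 1, φ t) ^ 2 ≤ ENNReal.ofReal C *
        (∫⁻ t in Ioo (0:ℝ) 1, φ t ^ 2 * ENNReal.ofReal (om v t / (1-t)^2)) ∧
      ∫⁻ z in Metric.ball (0:ℂ) 1,
        (∫⁻ t in Ioo (0:ℝ) 1, φ t * pk z t) ^ 2 *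
          ENNReal.ofReal (v ‖z‖) ≤ ENNReal.ofReal C *
        (∫⁻ t in Ioo (0:ℝ) 1, φ t ^ 2 * ENNReal.ofReal (om v t / (1-t)^2)) := by
  obtain ⟨C, hC, hB⟩ := hardyB hv hM2
  obtain ⟨K, hK, hKb⟩ := Kbound hv hD hM1 hM2
  have hvm := hv.1
  have mo := om_meas hv
  refine ⟨C + 2 * K * C, by positivity, fun φ mφ hfin => ?_⟩
  obtain ⟨h1, h2⟩ := hB φ mφ
  have h2 := h2 hfin
  set N := ∫⁻ t in Ioo (0:ℝ) 1, φ t ^ 2 * ENNReal.ofReal (om v t / (1-t)^2) with hN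
  refine ⟨h1.trans (by gcongr; linarith [show 0 ≤ 2 * K * C by positivity]), ?_⟩
  have mG := mG_aux mφ hvm
  set μ := volume.restrict (Ioo (0:ℝ) 1) with hμ
  calc _ ≤ ∫⁻ z in Metric.ball (0:ℂ) 1, 2 * ∫⁻ t, ∫⁻ s, φ t * pk z t * (chi t s * (φ s * pk z s)) *
        ENNReal.ofReal (v ‖z‖) ∂μ ∂μ := by
        refine lintegral_mono fun z => ?_
        have mz : Measurable fun t => pk z t := pk_meas.comp (f := fun t => (z, t)) (by fun_prop)
        have hs := hardy_sq μ (fun s r => chi r s) chi_meas'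
          (fun s r => chi_le_one r s) (fun s r => chi_total r s) (fun t => φ t * pk z t)
          (mφ.fun_mul mz) 0
        have c0 : ∀ t ∈ Ioo (0:ℝ) 1, chi 0 t = 1 := fun t ht => by simp [chi, ht.1.le]
        have e1 : ∫⁻ t, chi 0 t * (φ t * pk z t) ∂μ = ∫⁻ t, φ t * pk z t ∂μ := by
          apply setLIntegral_congr_fun measurableSet_Ioo
          intro t ht
          dsimp only
          rw [c0 t ht, one_mul]
        have e2 : ∫⁻ t, chi 0 t * (φ t * pk z t) * (∫⁻ s, chi t s * (φ s * pk z s) ∂μ) ∂μ =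
            ∫⁻ t, φ t * pk z t * (∫⁻ s, chi t s * (φ s * pk z s) ∂μ) ∂μ := by
          apply setLIntegral_congr_fun measurableSet_Ioo
          intro t ht
          dsimp only
          rw [c0 t ht, one_mul]
        rw [e1, e2] at hs
        refine (mul_le_mul_left hs _).trans (le_of_eq ?_)
        rw [mul_assoc, ← lintegral_mul_const' _ _ ENNReal.ofReal_ne_top]
        congr 2; ext t
        have mc : Measurable fun s => chi t s := chi_meas.comp measurable_prodMk_left
        rw [← lintegral_const_mul _ (by fun_prop), ← lintegral_mul_const' _ _ ENNReal.ofReal_ne_top]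
    _ = 2 * ∫⁻ q : ℝ × ℝ, (∫⁻ z in Metric.ball (0:ℂ) 1,
        φ q.1 * pk z q.1 * (chi q.1 q.2 * (φ q.2 * pk z q.2)) *
        ENNReal.ofReal (v ‖z‖)) ∂(μ.prod μ) := by
        rw [lintegral_const_mul' _ _ (by norm_num)]
        congr 1
        refine Eq.trans ?_ (lintegral_lintegral_swap (f := fun (z : ℂ) (q : ℝ × ℝ) =>
          φ q.1 * pk z q.1 * (chi q.1 q.2 * (φ q.2 * pk z q.2)) *
          ENNReal.ofReal (v ‖z‖)) mG.aemeasurable)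
        congr 1; ext z
        rw [lintegral_prod]
        exact (mG.comp measurable_prodMk_left).aemeasurable
    _ = 2 * ∫⁻ t, ∫⁻ s, (∫⁻ z in Metric.ball (0:ℂ) 1, φ t * pk z t * (chi t s * (φ s * pk z s)) *
        ENNReal.ofReal (v ‖z‖)) ∂μ ∂μ := by
        congr 1
        rw [lintegral_prod]
        exact (Measurable.lintegral_prod_left' mG).aemeasurable
    _ ≤ 2 * ∫⁻ t, ∫⁻ s, φ t * (ENNReal.ofReal K * ENNReal.ofReal (om v t / (1-t)^3)) *
          (chi t s * φ s) ∂μ ∂μ := by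
        refine mul_le_mul_right ?_ _
        refine setLIntegral_mono' measurableSet_Ioo fun t ht => ?_
        refine setLIntegral_mono' measurableSet_Ioo fun s hs => ?_
        have m1 : Measurable fun z => pk z t := pk_meas.comp (f := fun z => (z, t)) (by fun_prop)
        have m2 : Measurable fun z => pk z s := pk_meas.comp (f := fun z => (z, s)) (by fun_prop)
        calc _ = ∫⁻ z in Metric.ball (0:ℂ) 1, (φ t * (chi t s * φ s)) *
                (pk z t * pk z s * ENNReal.ofReal (v ‖z‖)) := by
              congr 1; ext z; ring
          _ = (φ t * (chi t s * φ s)) * ∫⁻ z in Metric.ball (0:ℂ) 1,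
                (pk z t * pk z s * ENNReal.ofReal (v ‖z‖)) := by
              rw [lintegral_const_mul _ (by fun_prop)]
          _ ≤ (φ t * (chi t s * φ s)) * ENNReal.ofReal (K * (om v t / (1 - t) ^ 3)) := by
              gcongr; exact hKb t ht s hs
          _ = _ := by rw [ENNReal.ofReal_mul hK]; ring
    _ = 2 * (ENNReal.ofReal K * ∫⁻ t, φ t * ENNReal.ofReal (om v t / (1-t)^3) *
          (∫⁻ s, chi t s * φ s ∂μ) ∂μ) := by
        congr 1
        rw [← lintegral_const_mul' _ _ ENNReal.ofReal_ne_top]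
        congr 1; ext t
        have mc : Measurable fun s => chi t s := chi_meas.comp measurable_prodMk_left
        rw [lintegral_const_mul _ (by fun_prop)]
        ring
    _ ≤ 2 * (ENNReal.ofReal K * (ENNReal.ofReal C * N)) := by gcongr
    _ = ENNReal.ofReal (2 * K * C) * N := by
        rw [ENNReal.ofReal_mul (by positivity), ENNReal.ofReal_mul (by positivity),
          show ENNReal.ofReal 2 = 2 by norm_num]
        ring
    _ ≤ _ := by gcongr; linarith

lemma kern_lower (z : ℂ) (t : ℝ) (ht : t ∈ Ioo (0:ℝ) 1) : 1 - ‖z‖ ≤ ‖1 - (t:ℂ) * z‖ := by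
  have h1 := norm_sub_norm_le (1:ℂ) ((t:ℂ) * z)
  rw [norm_mul, norm_one, Complex.norm_real, Real.norm_of_nonneg ht.1.le] at h1
  nlinarith [norm_nonneg z, ht.2]

lemma Hop_deriv (ψ : ℝ → ℂ) (hψ : IntegrableOn ψ (Ioo 0 1)) (z₀ : ℂ) (hz : z₀ ∈ Metric.ball (0:ℂ) 1) :
    HasDerivAt (Hop ψ) (∫ t in Ioo (0:ℝ) 1, ψ t * t / (1 - t * z₀) ^ 2) z₀ := by
  rw [mem_ball_zero_iff] at hz
  set δ := (1 - ‖z₀‖) / 2 with hδ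
  have hδ0 : 0 < δ := by rw [hδ]; linarith
  have low : ∀ z ∈ Metric.ball z₀ δ, ∀ t ∈ Ioo (0:ℝ) 1, δ ≤ ‖1 - (t:ℂ) * z‖ := by
    intro z hzb t ht
    have := kern_lower z t ht
    rw [mem_ball_iff_norm] at hzb
    have := norm_sub_norm_le z z₀
    linarith
  have ne0 : ∀ z ∈ Metric.ball z₀ δ, ∀ t ∈ Ioo (0:ℝ) 1, 1 - (t:ℂ) * z ≠ 0 := fun z hzb t ht =>
    norm_pos_iff.1 (hδ0.trans_le (low z hzb t ht))
  have ms : ∀ z : ℂ, AEStronglyMeasurable (fun t : ℝ => ψ t / (1 - t * z))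
      (volume.restrict (Ioo 0 1)) := fun z => by
    apply AEMeasurable.aestronglyMeasurable
    exact hψ.1.aemeasurable.div (by fun_prop)
  have hz0 : z₀ ∈ Metric.ball z₀ δ := Metric.mem_ball_self hδ0
  have := hasDerivAt_integral_of_dominated_loc_of_deriv_le (𝕜 := ℂ)
    (μ := volume.restrict (Ioo (0:ℝ) 1)) (F := fun z t => ψ t / (1 - t * z))
    (F' := fun z t => ψ t * t / (1 - t * z) ^ 2) (x₀ := z₀) (s := Metric.ball z₀ δ)
    (bound := fun t => ‖ψ t‖ * (1 / δ ^ 2)) (Metric.ball_mem_nhds _ hδ0)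
    (Eventually.of_forall ms) (by
      refine Integrable.mono' (hψ.norm.mul_const (1 / δ)) (ms z₀) ?_
      filter_upwards [ae_restrict_mem measurableSet_Ioo] with t ht
      rw [norm_div, div_eq_mul_one_div]
      gcongr
      exact low z₀ hz0 t ht)
    (by
      apply AEMeasurable.aestronglyMeasurable
      exact (hψ.1.aemeasurable.mul (by fun_prop)).div (by fun_prop))
    (by
      filter_upwards [ae_restrict_mem measurableSet_Ioo] with t ht z hzb
      rw [norm_div, norm_mul, norm_pow, div_eq_mul_one_div]
      have : ‖(t:ℂ)‖ ≤ 1 := by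
        rw [Complex.norm_real, Real.norm_of_nonneg ht.1.le]; exact ht.2.le
      have l := low z hzb t ht
      calc _ ≤ ‖ψ t‖ * 1 * (1 / δ ^ 2) := by gcongr
        _ = _ := by ring)
    (hψ.norm.mul_const _)
    (by
      filter_upwards [ae_restrict_mem measurableSet_Ioo] with t ht z hzb
      have h0 := ne0 z hzb t ht
      have d1 : HasDerivAt (fun z : ℂ => 1 - (t:ℂ) * z) (-(t:ℂ)) z := by
        simpa using ((hasDerivAt_id z).const_mul (t:ℂ)).const_sub 1
      exact ((hasDerivAt_const z (ψ t)).div d1 h0).congr_deriv (by ring))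
  exact this.2

lemma Hop_bound {v : ℝ → ℝ} (hv : RadialWeight v) (hD : DoublingD v) (hM1 : M1v v < ⊤)
    (hM2 : M2v v < ⊤) :
    ∃ C : ℝ, 0 < C ∧ ∀ f : ℂ → ℂ, DifferentiableOn ℂ f (Metric.ball 0 1) → DvSq v f < ⊤ →
      ∀ ψ : ℝ → ℂ, AEStronglyMeasurable ψ (volume.restrict (Ioo 0 1)) → (∀ t, ‖ψ t‖ = ‖f t‖) →
      DifferentiableOn ℂ (Hop ψ) (Metric.ball 0 1) ∧
      (DvSq v (Hop ψ)) ^ (1/2 : ℝ) ≤ ENNReal.ofReal C * (DvSq v f) ^ (1/2 : ℝ) := by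
  obtain ⟨A, hA, hA1⟩ := stepA hv hD hM1
  obtain ⟨B, hB, hB1⟩ := stepB hv hD hM1 hM2
  set E := (B + π⁻¹ * B) * A with hE
  have hE0 : 0 ≤ E := by positivity
  refine ⟨√E + 1, by positivity, fun f hf hfin ψ mψ hψ => ?_⟩
  set φ : ℝ → ENNReal := (Ioo (0:ℝ) 1).indicator (fun t => ‖f t‖ₑ) with hφ
  have hcont : ContinuousOn (fun t : ℝ => f t) (Ioo 0 1) :=
    hf.continuousOn.comp Complex.continuous_ofReal.continuousOn
      (fun t ht => mem_ball_of_Ico ht.1.le ht.2)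
  have φe : ∀ t ∈ Ioo (0:ℝ) 1, φ t = ‖ψ t‖ₑ := by
    intro t ht
    rw [hφ, Set.indicator_of_mem ht, ← ofReal_norm, ← ofReal_norm, hψ]
  have φe' : ∀ t ∈ Ioo (0:ℝ) 1, φ t = ‖f t‖ₑ := by
    intro t ht
    rw [hφ, Set.indicator_of_mem ht]
  have mφ : Measurable φ := by
    have m1 : Measurable ((Ioo (0:ℝ) 1).indicator (fun t : ℝ => f t)) := by
      classical
      rw [← Set.piecewise_eq_indicator]
      exact hcont.measurable_piecewise continuousOn_const measurableSet_Ioo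
    have : φ = fun t => ‖(Ioo (0:ℝ) 1).indicator (fun t : ℝ => f t) t‖ₑ := by
      ext t; rw [enorm_indicator_eq_indicator_enorm]
    rw [this]; exact m1.enorm
  set N := ∫⁻ t in Ioo (0:ℝ) 1, φ t ^ 2 * ENNReal.ofReal (om v t / (1-t)^2) with hN
  have hNle : N ≤ ENNReal.ofReal A * DvSq v f := by
    refine le_trans (le_of_eq ?_) (hA1 f hf)
    apply setLIntegral_congr_fun measurableSet_Ioo
    intro t ht
    dsimp only
    rw [φe' t ht]
  have hNfin : N < ⊤ := hNle.trans_lt (ENNReal.mul_lt_top ENNReal.ofReal_lt_top hfin)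
  obtain ⟨L1, L2⟩ := hB1 φ mφ hNfin
  have φint : ∫⁻ t in Ioo (0:ℝ) 1, ‖ψ t‖ₑ = ∫⁻ t in Ioo (0:ℝ) 1, φ t :=
    (setLIntegral_congr_fun measurableSet_Ioo φe).symm
  have iψ : IntegrableOn ψ (Ioo 0 1) := by
    refine ⟨mψ, ?_⟩
    unfold HasFiniteIntegral
    rw [φint]
    by_contra h
    rw [not_lt_top_iff] at h
    rw [h] at L1
    have := L1.trans_lt (ENNReal.mul_lt_top ENNReal.ofReal_lt_top hNfin)
    simp at this
  refine ⟨fun z hz => (Hop_deriv ψ iψ z hz).differentiableAt.differentiableWithinAt, ?_⟩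
  have h0 : ‖Hop ψ 0‖ₑ ≤ ∫⁻ t in Ioo (0:ℝ) 1, φ t := by
    rw [← φint]
    unfold Hop
    refine (enorm_integral_le_lintegral_enorm _).trans (le_of_eq ?_)
    simp
  have hd : ∀ z ∈ Metric.ball (0:ℂ) 1, ‖deriv (Hop ψ) z‖ₑ ≤ ∫⁻ t in Ioo (0:ℝ) 1, φ t * pk z t := by
    intro z hz
    rw [(Hop_deriv ψ iψ z hz).deriv]
    refine (enorm_integral_le_lintegral_enorm _).trans ?_
    apply setLIntegral_mono' measurableSet_Ioo
    intro t ht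
    rw [φe t ht, pk, ← ofReal_norm, ← ofReal_norm, ← ENNReal.ofReal_mul (norm_nonneg _)]
    apply ENNReal.ofReal_le_ofReal
    rw [norm_div, norm_mul, norm_pow, div_eq_mul_one_div]
    have : ‖(t:ℂ)‖ ≤ 1 := by
      rw [Complex.norm_real, Real.norm_of_nonneg ht.1.le]; exact ht.2.le
    calc _ ≤ ‖ψ t‖ * 1 * (1 / ‖1 - (t:ℂ) * z‖ ^ 2) := by gcongr
      _ = _ := by ring
  have main : DvSq v (Hop ψ) ≤ ENNReal.ofReal E * DvSq v f := by
    calc DvSq v (Hop ψ) = ‖Hop ψ 0‖ₑ ^ 2 + (ENNReal.ofReal π)⁻¹ *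
          ∫⁻ z in Metric.ball (0:ℂ) 1, ‖deriv (Hop ψ) z‖ₑ ^ 2 * ENNReal.ofReal (v ‖z‖) := rfl
      _ ≤ ENNReal.ofReal B * N + (ENNReal.ofReal π)⁻¹ * (ENNReal.ofReal B * N) := by
          gcongr ?_ + _ * ?_
          · exact le_trans (by gcongr) L1
          · refine le_trans ?_ L2
            apply setLIntegral_mono' measurableSet_ball
            intro z hz
            gcongr
            exact hd z hz
      _ = ENNReal.ofReal (B + π⁻¹ * B) * N := by
          rw [ENNReal.ofReal_add hB (by positivity), ENNReal.ofReal_mul (by positivity),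
            ENNReal.ofReal_inv_of_pos Real.pi_pos]
          ring
      _ ≤ ENNReal.ofReal (B + π⁻¹ * B) * (ENNReal.ofReal A * DvSq v f) := by gcongr
      _ = _ := by rw [hE, ENNReal.ofReal_mul (by positivity), mul_assoc]
  calc _ ≤ (ENNReal.ofReal E * DvSq v f) ^ (1/2:ℝ) := ENNReal.rpow_le_rpow main (by norm_num)
    _ = ENNReal.ofReal (√E) * (DvSq v f) ^ (1/2:ℝ) := by
        rw [ENNReal.mul_rpow_of_nonneg _ _ (by norm_num), ENNReal.ofReal_rpow_of_nonneg hE0 (by norm_num),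
          Real.sqrt_eq_rpow]
    _ ≤ _ := by gcongr; linarith


/-- Corollary 1.3: if `v ∈ D̂` satisfies `M₁(v) < ∞` and `M₂(v) < ∞`,
then both the Hilbert operator `H` and the sublinear Hilbert operator `H̃` are bounded on `D_v`. -/
theorem statement6 (v : ℝ → ℝ) (hv : RadialWeight v) (hD : DoublingD v)
    (hM1 : M1v v < ⊤) (hM2 : M2v v < ⊤) :
    ∃ C : ℝ, 0 < C ∧ ∀ f : ℂ → ℂ, DifferentiableOn ℂ f (Metric.ball 0 1) →
      DvSq v f < ⊤ →
      DifferentiableOn ℂ (Hop (fun t : ℝ => f t)) (Metric.ball 0 1) ∧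
      DifferentiableOn ℂ (Htil (fun t : ℝ => f t)) (Metric.ball 0 1) ∧
      (DvSq v (Hop (fun t : ℝ => f t))) ^ (1/2 : ℝ) ≤
        ENNReal.ofReal C * (DvSq v f) ^ (1/2 : ℝ) ∧
      (DvSq v (Htil (fun t : ℝ => f t))) ^ (1/2 : ℝ) ≤
        ENNReal.ofReal C * (DvSq v f) ^ (1/2 : ℝ) := by
  obtain ⟨C, hC, h⟩ := Hop_bound hv hD hM1 hM2
  refine ⟨C, hC, fun f hf hfin => ?_⟩
  have hcont : ContinuousOn (fun t : ℝ => f t) (Ioo 0 1) :=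
    hf.continuousOn.comp Complex.continuous_ofReal.continuousOn
      (fun t ht => mem_ball_of_Ico ht.1.le ht.2)
  have m1 : AEStronglyMeasurable (fun t : ℝ => f t) (volume.restrict (Ioo 0 1)) :=
    hcont.aestronglyMeasurable measurableSet_Ioo
  have m2 : AEStronglyMeasurable (fun t : ℝ => (‖f t‖ : ℂ)) (volume.restrict (Ioo 0 1)) :=
    Complex.continuous_ofReal.comp_aestronglyMeasurable m1.norm
  have a := h f hf hfin (fun t : ℝ => f t) m1 (fun t => rfl)
  have b := h f hf hfin (fun t : ℝ => (‖f t‖ : ℂ)) m2 (fun t => by simp)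
  exact ⟨a.1, b.1, a.2, b.2⟩

end
end

section
/- Let v be a radial weight in the class D̂ satisfying M₁(v) = sup_{0<r<1} (∫_r¹ v̂(s)/(1-s)² ds)^{1/2} (∫₀^r 1/v̂(s) ds)^{1/2} < ∞ and M₂(v) = sup_{0<r<1} (∫₀^r v̂(s)/(1-s)⁴ ds)^{1/2} (∫_r¹ (1-s)²/v̂(s) ds)^{1/2} < ∞, and let g be analytic on 𝔻. If there exists K > 0 such that for every f analytic on 𝔻 with ‖f‖_{D_v} < ∞ the function H_g(f)(z) = ∫₀¹ f(t) g′(tz) dt satisfies ‖H_g(f)‖_{D_v} ≤ K · ‖f‖_{D_v}, then ‖g − g(0)‖_{B(2,∞)} < ∞; moreover ‖g − g(0)‖_{B(2,∞)} ≤ C · K for a constant C depending only on v. -/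
open MeasureTheory Real Set Filter

noncomputable section

lemma pars_exp (m : ℤ) : ∫ θ in (-π)..π, Complex.exp (m * (θ * Complex.I)) = if m = 0 then (2 * π : ℂ) else 0 := by
  split_ifs with h
  · subst h; simp; ring
  · have hc : (m * Complex.I : ℂ) ≠ 0 := by simp [h]
    have := integral_exp_mul_complex (a := -π) (b := π) hc
    have e : ∀ θ : ℝ, (m * (θ * Complex.I) : ℂ) = m * Complex.I * θ := fun θ => by ring
    simp_rw [e]
    rw [this, div_eq_zero_iff]
    left
    rw [sub_eq_zero, Complex.exp_eq_exp_iff_exists_int]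
    exact ⟨m, by push_cast; ring⟩

lemma pars_fin (d : ℕ → ℂ) (n : ℕ) :
    ∫ θ in (-π)..π, ‖∑ k ∈ Finset.range n, d k * Complex.exp (k * (θ * Complex.I))‖ ^ 2
      = 2 * π * ∑ k ∈ Finset.range n, ‖d k‖ ^ 2 := by
  have h1 : ∀ θ : ℝ, ((‖∑ k ∈ Finset.range n, d k * Complex.exp (k * (θ * Complex.I))‖ ^ 2 : ℝ) : ℂ)
      = ∑ j ∈ Finset.range n, ∑ k ∈ Finset.range n,
        d j * (starRingEnd ℂ) (d k) * Complex.exp (((j - k : ℤ) : ℂ) * (θ * Complex.I)) := by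
    intro θ
    push_cast
    rw [← Complex.mul_conj', map_sum, Finset.sum_mul_sum]
    refine Finset.sum_congr rfl fun j _ => Finset.sum_congr rfl fun k _ => ?_
    rw [map_mul, ← Complex.exp_conj]
    simp only [map_mul, Complex.conj_I, Complex.conj_ofReal, map_natCast]
    rw [sub_mul, sub_eq_add_neg, Complex.exp_add]
    ring_nf
  have h2 : ((∫ θ in (-π)..π, ‖∑ k ∈ Finset.range n, d k * Complex.exp (k * (θ * Complex.I))‖ ^ 2 : ℝ) : ℂ)
      = ((2 * π * ∑ k ∈ Finset.range n, ‖d k‖ ^ 2 : ℝ) : ℂ) := by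
    rw [← intervalIntegral.integral_ofReal]
    simp_rw [h1]
    rw [intervalIntegral.integral_finsetSum]
    swap
    · intro i _
      apply Continuous.intervalIntegrable
      fun_prop
    push_cast
    rw [Finset.mul_sum]
    refine Finset.sum_congr rfl fun j hj => ?_
    rw [intervalIntegral.integral_finsetSum]
    swap
    · intro i _
      apply Continuous.intervalIntegrable
      fun_prop
    have : ∀ k ∈ Finset.range n, (∫ θ in (-π)..π, d j * (starRingEnd ℂ) (d k) * Complex.exp (((j:ℂ) - k) * (θ * Complex.I))) = if j = k then d j * (starRingEnd ℂ) (d k) * (2 * π) else 0 := by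
      intro k _
      rw [intervalIntegral.integral_const_mul]
      have := pars_exp ((j:ℤ) - k)
      push_cast at this
      rw [this]
      have e : ((j:ℤ) - k = 0) ↔ j = k := by omega
      simp only [e]
      split_ifs <;> simp
    rw [Finset.sum_congr rfl this]
    rw [Finset.sum_ite_eq]
    simp only [hj, if_true]
    rw [Complex.mul_conj']; ring
  exact_mod_cast h2

lemma pars (d : ℕ → ℂ) (hd : Summable (fun k => ‖d k‖)) (F : ℝ → ℂ)
    (hF : ∀ θ : ℝ, HasSum (fun k : ℕ => d k * Complex.exp (k * (θ * Complex.I))) (F θ)) :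
    HasSum (fun k => ‖d k‖ ^ 2) ((2 * π)⁻¹ * ∫ θ in (-π)..π, ‖F θ‖ ^ 2) := by
  rw [hasSum_iff_tendsto_nat_of_nonneg (fun _ => by positivity)]
  have h1 : ∀ n, ∑ k ∈ Finset.range n, ‖d k‖ ^ 2 = (2 * π)⁻¹ *
     ∫ θ in (-π)..π, ‖∑ k ∈ Finset.range n, d k * Complex.exp (k * (θ * Complex.I))‖ ^ 2 := by
    intro n
    rw [pars_fin]
    field_simp
  simp_rw [h1]
  apply Tendsto.const_mul
  apply intervalIntegral.tendsto_integral_filter_of_dominated_convergence (fun _ => (∑' k, ‖d k‖) ^ 2)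
  · refine Eventually.of_forall fun n => ?_
    apply Continuous.aestronglyMeasurable
    fun_prop
  · refine Eventually.of_forall fun n => Eventually.of_forall fun θ _ => ?_
    rw [norm_pow, norm_norm]
    gcongr
    refine (norm_sum_le _ _).trans ?_
    refine le_trans (le_of_eq ?_) (hd.sum_le_tsum (Finset.range n) (fun _ _ => norm_nonneg _))
    refine Finset.sum_congr rfl fun k _ => ?_
    rw [norm_mul, Complex.norm_exp]
    simp
  · simp
  · refine Eventually.of_forall fun θ _ => ?_
    exact ((hF θ).tendsto_sum_nat.norm.pow 2)

/-- `h` is the sum of the power series with coefficients `c` in the unit disc. -/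
def HasPS (c : ℕ → ℂ) (h : ℂ → ℂ) : Prop :=
  ∀ z ∈ Metric.ball (0:ℂ) 1, HasSum (fun k => c k * z ^ k) (h z)

lemma HasPS.summable {c : ℕ → ℂ} {h : ℂ → ℂ} (H : HasPS c h) {r : ℝ} (h0 : 0 ≤ r) (h1 : r < 1) :
    Summable (fun k => ‖c k‖ * r ^ k) := by
  have := (H (r : ℂ) (by simpa [abs_of_nonneg h0] using h1)).summable.norm
  simpa [abs_of_nonneg h0] using this

lemma HasPS.aux {c : ℕ → ℂ} {h : ℂ → ℂ} (H : HasPS c h) {z : ℂ} (hz : z ∈ Metric.ball (0:ℂ) 1) :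
    DifferentiableAt ℂ h z ∧ HasSum (fun k : ℕ => deriv (fun w => c k * w ^ k) z) (deriv h z) := by
  have hz1 : ‖z‖ < 1 := by simpa using hz
  obtain ⟨r, hr, hr1⟩ := exists_between hz1
  have h0 : 0 ≤ r := (norm_nonneg z).trans hr.le
  have hle : ∀ (i : ℕ) (w : ℂ), w ∈ Metric.ball (0:ℂ) r → ‖c i * w ^ i‖ ≤ ‖c i‖ * r ^ i := by
    intro i w hw
    have : ‖w‖ ≤ r := by simpa using (Metric.mem_ball.1 hw).le
    rw [norm_mul, norm_pow]
    gcongr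
  have hdi : ∀ i : ℕ, DifferentiableOn ℂ (fun w : ℂ => c i * w ^ i) (Metric.ball (0:ℂ) r) := by
    intro i; fun_prop
  have hzr : z ∈ Metric.ball (0:ℂ) r := by simpa using hr
  have e : (fun w : ℂ => ∑' i : ℕ, c i * w ^ i) =ᶠ[nhds z] h := by
    filter_upwards [Metric.isOpen_ball.mem_nhds hz] with w hw using (H w hw).tsum_eq
  constructor
  · have := Complex.differentiableOn_tsum_of_summable_norm (H.summable h0 hr1) hdi
      Metric.isOpen_ball hle
    exact (this.differentiableAt (Metric.isOpen_ball.mem_nhds hzr)).congr_of_eventuallyEq e.symm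
  · have := Complex.hasSum_deriv_of_summable_norm (H.summable h0 hr1) hdi
      Metric.isOpen_ball hle hzr
    rwa [e.deriv_eq] at this

lemma HasPS.deriv {c : ℕ → ℂ} {h : ℂ → ℂ} (H : HasPS c h) :
    HasPS (fun k => (k + 1) * c (k + 1)) (deriv h) := by
  intro z hz
  have := (H.aux hz).2
  rw [← hasSum_nat_add_iff' 1] at this
  simp at this
  have e : (fun k : ℕ => (fun k : ℕ => ((k:ℂ) + 1) * c (k + 1)) k * z ^ k) =
      fun n : ℕ => c (n + 1) * ((↑n + 1) * z ^ n) := by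
    funext n; ring
  rw [e]
  exact this

lemma HasPS.pars {c : ℕ → ℂ} {h : ℂ → ℂ} (H : HasPS c h) {r : ℝ} (h0 : 0 ≤ r) (h1 : r < 1) :
    HasSum (fun k => ‖c k‖ ^ 2 * r ^ (2 * k))
      ((2*π)⁻¹ * ∫ θ in (-π)..π, ‖h ((r:ℂ) * Complex.exp (θ * Complex.I))‖^2) := by
  have := _root_.pars (fun k => c k * (r : ℂ) ^ k) (by simpa [abs_of_nonneg h0] using H.summable h0 h1)
    (fun θ => h ((r:ℂ) * Complex.exp (θ * Complex.I))) (by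
      intro θ
      have := H ((r:ℂ) * Complex.exp (θ * Complex.I)) (by
        simp [Complex.norm_exp, abs_of_nonneg h0, h1])
      convert this using 2 with k
      rw [mul_pow, Complex.exp_nat_mul]; ring)
  convert this using 2 with k
  simp [abs_of_nonneg h0, mul_pow, pow_mul]
  left; rw [pow_right_comm]

lemma HasPS.lpars {c : ℕ → ℂ} {h : ℂ → ℂ} (H : HasPS c h) {r : ℝ} (h0 : 0 ≤ r) (h1 : r < 1) :
    ∫⁻ θ in Ioo (-π) π, (‖h ((r:ℂ) * Complex.exp (θ * Complex.I))‖₊ : ENNReal) ^ 2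
     = ENNReal.ofReal (2 * π) * ∑' k, (‖c k‖₊ : ENNReal) ^ 2 * ENNReal.ofReal (r ^ (2 * k)) := by
  have hc : Continuous (fun θ : ℝ => ‖h ((r:ℂ) * Complex.exp (θ * Complex.I))‖^2) := by
    rw [continuous_iff_continuousAt]
    intro θ
    have h2 : (r:ℂ) * Complex.exp (θ * Complex.I) ∈ Metric.ball (0:ℂ) 1 := by
        simp [Complex.norm_exp, abs_of_nonneg h0, h1]
    have := (H.aux h2).1.continuousAt
    have h3 : ContinuousAt (fun θ : ℝ => (r:ℂ) * Complex.exp (θ * Complex.I)) θ := by fun_prop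
    exact (ContinuousAt.comp (f := fun θ : ℝ => (r:ℂ) * Complex.exp (θ * Complex.I)) this h3).norm.pow 2
  have P := H.pars h0 h1
  have e1 : ∫ θ in (-π)..π, ‖h ((r:ℂ) * Complex.exp (θ * Complex.I))‖^2
     = 2 * π * ∑' k, ‖c k‖ ^ 2 * r ^ (2 * k) := by
    rw [P.tsum_eq, ← mul_assoc, mul_inv_cancel₀ (by positivity), one_mul]
  have e2 : ∀ k, (‖c k‖₊ : ENNReal) ^ 2 * ENNReal.ofReal (r ^ (2 * k)) =
      ENNReal.ofReal (‖c k‖ ^ 2 * r ^ (2 * k)) := by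
    intro k
    rw [ENNReal.ofReal_mul (by positivity), ENNReal.ofReal_pow (norm_nonneg _), ofReal_norm]
    rfl
  simp_rw [e2]
  rw [← ENNReal.ofReal_tsum_of_nonneg (fun k => by positivity) P.summable,
    ← ENNReal.ofReal_mul (by positivity), ← e1,
    intervalIntegral.integral_of_le (by linarith [pi_pos]), integral_Ioc_eq_integral_Ioo,
    ofReal_integral_eq_lintegral_ofReal]
  · refine lintegral_congr fun θ => ?_
    rw [ENNReal.ofReal_pow (norm_nonneg _), ofReal_norm]
    rfl
  · exact (hc.integrableOn_Icc (a := -π) (b := π)).mono_set Ioo_subset_Icc_self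
  · exact Eventually.of_forall fun θ => by positivity

/-- extended-real moments -/
def mom (v : ℝ → ℝ) (j : ℕ) : ENNReal :=
  ∫⁻ s in Ioo (0:ℝ) 1, ENNReal.ofReal (s ^ j) * ENNReal.ofReal (v s)

lemma HasPS.dvSq {c : ℕ → ℂ} {h : ℂ → ℂ} (H : HasPS c h) (v : ℝ → ℝ) (hv : Measurable v) :
    DvSq v h = (‖c 0‖₊ : ENNReal) ^ 2 +
      ∑' k : ℕ, 2 * (((k + 1 : ℕ) : ENNReal) ^ 2 * (‖c (k + 1)‖₊ : ENNReal) ^ 2) * mom v (2 * k + 1) := by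
  unfold DvSq
  have h0 : h 0 = c 0 := by
    have := H 0 (by simp)
    have h2 := hasSum_single (f := fun k => c k * (0:ℂ) ^ k) 0 (by intro b hb; simp [hb])
    simpa using this.unique h2
  rw [h0]
  congr 1
  have hd := measurable_deriv h
  rw [← lintegral_indicator measurableSet_ball, ← Complex.lintegral_comp_polarCoord_symm]
  have ht : polarCoord.target = Ioi (0:ℝ) ×ˢ Ioo (-π) π := rfl
  rw [ht, Measure.volume_eq_prod, ← Measure.prod_restrict, lintegral_prod]
  swap
  · apply Measurable.aemeasurable
    refine Measurable.mul (f := fun p : ℝ × ℝ => ENNReal.ofReal p.1) (by fun_prop) ?_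
    have hp : Measurable (fun p : ℝ × ℝ => Complex.polarCoord.symm p) := by
      simp only [Complex.polarCoord_symm_apply]
      fun_prop
    exact Measurable.comp (g := (Metric.ball (0:ℂ) 1).indicator _)
      (Measurable.indicator (by fun_prop) measurableSet_ball) hp
  have hin : ∀ r ∈ Ioi (0:ℝ), ∫⁻ θ in Ioo (-π) π, ENNReal.ofReal r • (Metric.ball (0:ℂ) 1).indicator
      (fun z => (‖_root_.deriv h z‖₊ : ENNReal)^2 * ENNReal.ofReal (v ‖z‖)) (Complex.polarCoord.symm (r, θ))
      = (Ioo (0:ℝ) 1).indicator (fun r => ENNReal.ofReal (2 * π) * ∑' k : ℕ,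
         ((((k + 1 : ℕ) : ENNReal) ^ 2 * (‖c (k + 1)‖₊ : ENNReal) ^ 2) *
          (ENNReal.ofReal (r ^ (2 * k + 1)) * ENNReal.ofReal (v r)))) r := by
    intro r hr
    have hr0 : 0 < r := hr
    have hn : ∀ θ : ℝ, Complex.polarCoord.symm (r, θ) = (r : ℂ) * Complex.exp (θ * Complex.I) := by
      intro θ
      rw [Complex.polarCoord_symm_apply, Complex.exp_mul_I]; simp
    have hn2 : ∀ θ : ℝ, ‖(r : ℂ) * Complex.exp (θ * Complex.I)‖ = r := by
      intro θ; simp [Complex.norm_exp, abs_of_pos hr0]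
    by_cases hr1 : r < 1
    · rw [indicator_of_mem (show r ∈ Ioo (0:ℝ) 1 from ⟨hr0, hr1⟩)]
      have : ∀ θ : ℝ, ENNReal.ofReal r • (Metric.ball (0:ℂ) 1).indicator
        (fun z => (‖_root_.deriv h z‖₊ : ENNReal)^2 * ENNReal.ofReal (v ‖z‖)) (Complex.polarCoord.symm (r, θ))
        = (ENNReal.ofReal r * ENNReal.ofReal (v r)) *
          (‖_root_.deriv h ((r : ℂ) * Complex.exp (θ * Complex.I))‖₊ : ENNReal)^2 := by
        intro θ
        rw [hn, indicator_of_mem (by rw [Metric.mem_ball, dist_zero_right, hn2]; exact hr1), hn2, smul_eq_mul]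
        ring
      simp_rw [this]
      rw [lintegral_const_mul _ (by fun_prop), H.deriv.lpars hr0.le hr1]
      rw [mul_left_comm]
      congr 1
      rw [← ENNReal.tsum_mul_left]
      refine tsum_congr fun k => ?_
      rw [pow_succ r (2 * k), ENNReal.ofReal_mul (by positivity)]
      have : (‖((k:ℂ) + 1) * c (k + 1)‖₊ : ENNReal) = ((k + 1 : ℕ) : ENNReal) * (‖c (k+1)‖₊ : ENNReal) := by
        rw [nnnorm_mul, ENNReal.coe_mul]
        congr 1
        have : ((k:ℂ) + 1) = ((k + 1 : ℕ) : ℂ) := by push_cast; rfl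
        rw [this]
        simp only [Complex.nnnorm_natCast]
        simp
      rw [this]
      ring
    · rw [indicator_of_notMem (fun h => hr1 h.2)]
      have : ∀ θ : ℝ, ENNReal.ofReal r • (Metric.ball (0:ℂ) 1).indicator
        (fun z => (‖_root_.deriv h z‖₊ : ENNReal)^2 * ENNReal.ofReal (v ‖z‖)) (Complex.polarCoord.symm (r, θ)) = 0 := by
        intro θ
        rw [hn, indicator_of_notMem (by rw [Metric.mem_ball, dist_zero_right, hn2]; exact hr1), smul_zero]
      simp_rw [this]; simp
  rw [setLIntegral_congr_fun measurableSet_Ioi hin, lintegral_indicator measurableSet_Ioo,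
    Measure.restrict_restrict measurableSet_Ioo, inter_eq_left.2 Ioo_subset_Ioi_self,
    lintegral_const_mul _ (by fun_prop), lintegral_tsum (by intro k; fun_prop), ← mul_assoc]
  have hpi : (ENNReal.ofReal π)⁻¹ * ENNReal.ofReal (2 * π) = 2 := by
    rw [mul_comm (2:ℝ), ENNReal.ofReal_mul pi_pos.le, ← mul_assoc, ENNReal.inv_mul_cancel (by simp [pi_pos]) (by simp)]
    simp
  rw [hpi, ← ENNReal.tsum_mul_left]
  refine tsum_congr fun k => ?_
  rw [lintegral_const_mul _ (by fun_prop), ← mul_assoc]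
  rfl

lemma mom_anti (v : ℝ → ℝ) {i j : ℕ} (h : i ≤ j) : mom v j ≤ mom v i := by
  unfold mom
  refine setLIntegral_mono' measurableSet_Ioo fun s hs => ?_
  gcongr ?_ * _
  exact ENNReal.ofReal_le_ofReal (pow_le_pow_of_le_one hs.1.le hs.2.le h)

lemma mom_lt_top {v : ℝ → ℝ} (hv : RadialWeight v) (j : ℕ) : mom v j < ⊤ := by
  refine (mom_anti v (Nat.zero_le j)).trans_lt ?_
  simp only [mom, pow_zero, ENNReal.ofReal_one, one_mul]
  rw [← ofReal_integral_eq_lintegral_ofReal hv.2.2]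
  · exact ENNReal.ofReal_lt_top
  · filter_upwards [ae_restrict_mem measurableSet_Ioo] with s hs
    exact (hv.2.1 s ⟨hs.1.le, hs.2⟩).le

lemma mom_pos {v : ℝ → ℝ} (hv : RadialWeight v) (j : ℕ) : 0 < mom v j := by
  have hvm := hv.1
  unfold mom
  rw [setLIntegral_pos_iff (by fun_prop)]
  have : Ioo (0:ℝ) 1 ⊆ Function.support (fun s => ENNReal.ofReal (s ^ j) * ENNReal.ofReal (v s)) := by
    intro s hs
    have h1 := hv.2.1 s ⟨hs.1.le, hs.2⟩
    have h2 : 0 < s ^ j := pow_pos hs.1 j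
    simp only [Function.mem_support]
    exact mul_ne_zero (by simpa using h2) (by simpa using h1)
  rw [inter_eq_right.2 this]
  simp

lemma mom_doubling {v : ℝ → ℝ} (hv : RadialWeight v) {C : ℝ}
    (hC : ∀ r ∈ Set.Ico (0:ℝ) 1, hatw v r ≤ C * hatw v ((1+r)/2)) (hC0 : 0 ≤ C) (m : ℕ) (hm : 1 ≤ m) :
    mom v m ≤ ENNReal.ofReal C * mom v (2 * m) := by
  have hvm := hv.1
  set μ : Measure ℝ := (volume.restrict (Ioo (0:ℝ) 1)).withDensity (fun s => ENNReal.ofReal (v s)) with hμ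
  have hae : ∀ᵐ s ∂μ, s ∈ Ioo (0:ℝ) 1 :=
    (withDensity_absolutelyContinuous _ _).ae_le (ae_restrict_mem measurableSet_Ioo)
  have hmom : ∀ j, mom v j = ∫⁻ s, ENNReal.ofReal (s ^ j) ∂μ := by
    intro j
    rw [hμ, lintegral_withDensity_eq_lintegral_mul _ (by fun_prop) (by fun_prop)]
    unfold mom
    refine lintegral_congr fun s => ?_
    simp [mul_comm]
  have hmeas : ∀ t ∈ Ico (0:ℝ) 1, μ {s | t ≤ s} = ENNReal.ofReal (hatw v t) := by
    intro t ht
    have hms : MeasurableSet {s : ℝ | t ≤ s} := measurableSet_Ici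
    rw [hμ, withDensity_apply _ hms, Measure.restrict_restrict hms]
    have e : ({s : ℝ | t ≤ s} ∩ Ioo 0 1 : Set ℝ) =ᵐ[volume] Ioo t 1 := by
      have h1 : ({s : ℝ | t ≤ s} ∩ Ioo 0 1 : Set ℝ) =ᵐ[volume] (Ioi t ∩ Ioo 0 1 : Set ℝ) :=
        (Ioi_ae_eq_Ici (a := t) (μ := volume)).symm.inter (ae_eq_refl _)
      have h2 : (Ioi t ∩ Ioo 0 1 : Set ℝ) = Ioo t 1 := by
        ext s; simp only [mem_inter_iff, mem_Ioi, mem_Ioo]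
        constructor
        · rintro ⟨a, b, c⟩; exact ⟨a, c⟩
        · rintro ⟨a, c⟩; exact ⟨a, ht.1.trans_lt a, c⟩
      rwa [h2] at h1
    rw [setLIntegral_congr e, hatw, intervalIntegral.integral_of_le ht.2.le,
      integral_Ioc_eq_integral_Ioo, ofReal_integral_eq_lintegral_ofReal]
    · exact hv.2.2.mono_set (Ioo_subset_Ioo_left ht.1)
    · filter_upwards [ae_restrict_mem measurableSet_Ioo] with s hs
      exact (hv.2.1 s ⟨ht.1.trans hs.1.le, hs.2⟩).le
  have hIntg : ∀ a : ℝ, ∫ t in (0:ℝ)..a, (m : ℝ) * t ^ (m - 1) = a ^ m := by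
    intro a
    rw [intervalIntegral.integral_const_mul, integral_pow]
    obtain ⟨k, rfl⟩ : ∃ k, m = k + 1 := ⟨m - 1, by omega⟩
    simp
    field_simp
  have L1 := lintegral_comp_eq_lintegral_meas_le_mul (g := fun t : ℝ => (m : ℝ) * t ^ (m - 1))
    (f := fun s : ℝ => s) μ
    (by filter_upwards [hae] with s hs using hs.1.le) (by fun_prop)
    (fun t _ => Continuous.intervalIntegrable (by fun_prop) _ _)
    (by filter_upwards [ae_restrict_mem measurableSet_Ioi] with t ht
        have : (0:ℝ) < t := ht
        positivity)
  have L2 := lintegral_comp_eq_lintegral_meas_le_mul (g := fun t : ℝ => (m : ℝ) * t ^ (m - 1))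
    (f := fun s : ℝ => max (2 * s - 1) 0) μ
    (Eventually.of_forall fun s => le_max_right _ _) (by fun_prop)
    (fun t _ => Continuous.intervalIntegrable (by fun_prop) _ _)
    (by filter_upwards [ae_restrict_mem measurableSet_Ioi] with t ht
        have : (0:ℝ) < t := ht
        positivity)
  simp only [hIntg] at L1 L2
  rw [hmom m, L1]
  have hbd : ∀ t ∈ Ioi (0:ℝ), μ {s | t ≤ s} * ENNReal.ofReal ((m : ℝ) * t ^ (m - 1)) ≤
      ENNReal.ofReal C * (μ {s | t ≤ max (2 * s - 1) 0} * ENNReal.ofReal ((m : ℝ) * t ^ (m - 1))) := by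
    intro t ht
    have ht0 : (0:ℝ) < t := ht
    rw [← mul_assoc]
    gcongr ?_ * _
    by_cases h1 : t < 1
    · have e : {s : ℝ | t ≤ max (2 * s - 1) 0} = {s | (1 + t) / 2 ≤ s} := by
        ext s
        simp only [mem_ofPred_eq, le_max_iff]
        constructor
        · rintro (h | h) <;> linarith
        · intro h; left; linarith
      rw [e, hmeas t ⟨ht0.le, h1⟩, hmeas _ ⟨by linarith, by linarith⟩, ← ENNReal.ofReal_mul hC0]
      exact ENNReal.ofReal_le_ofReal (hC t ⟨ht0.le, h1⟩)
    · have : μ {s | t ≤ s} = 0 := by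
        refine measure_mono_null (t := {s | ¬ s ∈ Ioo (0:ℝ) 1}) ?_ hae
        intro s hs h2
        have h3 : t ≤ s := hs
        linarith [h2.2]
      rw [this]; exact zero_le
  refine (setLIntegral_mono' measurableSet_Ioi hbd).trans ?_
  rw [lintegral_const_mul' _ _ ENNReal.ofReal_ne_top, ← L2, hmom]
  refine mul_le_mul_right ?_ _
  refine lintegral_mono_ae ?_
  filter_upwards [hae] with s hs
  apply ENNReal.ofReal_le_ofReal
  rw [pow_mul]
  gcongr
  exact max_le (by nlinarith [sq_nonneg (s - 1)]) (sq_nonneg s)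

lemma hasPS_Hg {b : ℕ → ℂ} {g f : ℂ → ℂ} (H : HasPS b (deriv g)) (hf : Continuous f) :
    HasPS (fun k => b k * ∫ t in Ioo (0:ℝ) 1, f t * (t : ℂ) ^ k) (Hg g f) := by
  intro z hz
  have hz1 : ‖z‖ < 1 := by simpa using hz
  obtain ⟨B, hB⟩ := (isCompact_Icc (a := (0:ℝ)) (b := 1)).exists_bound_of_continuousOn
    (f := fun t : ℝ => f t) (by fun_prop)
  have hB0 : 0 ≤ B := (norm_nonneg _).trans (hB 0 (by simp))
  have hIntg : ∀ k, IntegrableOn (fun t : ℝ => f t * (b k * (t * z) ^ k)) (Ioo 0 1) := by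
    intro k
    refine IntegrableOn.mono_set ?_ Ioo_subset_Icc_self
    exact ContinuousOn.integrableOn_Icc (by fun_prop)
  have := hasSum_integral_of_summable_integral_norm (μ := volume.restrict (Ioo (0:ℝ) 1))
    (F := fun (k : ℕ) (t : ℝ) => f t * (b k * (t * z) ^ k)) hIntg (by
      refine Summable.of_nonneg_of_le (fun k => integral_nonneg fun _ => norm_nonneg _) (fun k => ?_)
        ((H.summable (norm_nonneg z) hz1).mul_left B)
      calc ∫ t in Ioo (0:ℝ) 1, ‖f t * (b k * (t * z) ^ k)‖
          ≤ ∫ t in Ioo (0:ℝ) 1, B * (‖b k‖ * ‖z‖ ^ k) := by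
            refine setIntegral_mono_on (hIntg k).norm (integrableOn_const (by simp)) measurableSet_Ioo fun t ht => ?_
            have h1 := hB t ⟨ht.1.le, ht.2.le⟩
            rw [norm_mul, norm_mul, norm_pow, norm_mul]
            gcongr
            simp only [Complex.norm_real, norm_eq_abs, abs_of_pos ht.1]
            exact mul_le_of_le_one_left (norm_nonneg _) ht.2.le
        _ = B * (‖b k‖ * ‖z‖ ^ k) := by simp)
  have e1 : Hg g f z = ∫ t in Ioo (0:ℝ) 1, ∑' k : ℕ, f t * (b k * (t * z) ^ k) := by
    unfold Hg
    refine setIntegral_congr_fun measurableSet_Ioo fun t ht => ?_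
    have h2 := H (t * z) (by
      simp only [Metric.mem_ball, dist_zero_right, norm_mul, Complex.norm_real, norm_eq_abs, abs_of_pos ht.1]
      nlinarith [norm_nonneg z, ht.1, ht.2])
    exact (h2.mul_left (f t)).tsum_eq.symm
  rw [e1]
  have e2 : (fun k => (fun k => b k * ∫ t in Ioo (0:ℝ) 1, f t * (t : ℂ) ^ k) k * z ^ k) =
      fun k : ℕ => ∫ t in Ioo (0:ℝ) 1, f t * (b k * (t * z) ^ k) := by
    funext k
    simp only []
    rw [mul_right_comm, ← integral_const_mul]
    congr 1
    funext t
    ring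
  rw [e2]
  exact this

/-- test polynomials -/
def fT (M : ℕ) (z : ℂ) : ℂ := ∑ j ∈ Finset.Ico M (2 * M + 1), z ^ (j + 1)

lemma fT_ps (M : ℕ) : HasPS (fun k => if k ∈ Finset.Ico (M + 1) (2 * M + 2) then 1 else 0) (fT M) := by
  intro z _
  have e : fT M z = ∑ k ∈ Finset.Ico (M + 1) (2 * M + 2),
      (if k ∈ Finset.Ico (M + 1) (2 * M + 2) then (1:ℂ) else 0) * z ^ k := by
    rw [Finset.sum_congr rfl (g := fun k => z ^ k) (fun k hk => by rw [if_pos hk, one_mul])]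
    unfold fT
    rw [Finset.sum_Ico_add' (fun k => z ^ k) M (2 * M + 1) 1]
  rw [e]
  apply hasSum_sum_of_ne_finset_zero
  intro k hk
  simp only [if_neg hk, zero_mul]

lemma fT_dv (M : ℕ) (v : ℝ → ℝ) (hv : Measurable v) :
    DvSq v (fT M) ≤ 8 * ((M + 1 : ℕ) : ENNReal) ^ 3 * mom v (2 * M + 1) := by
  rw [(fT_ps M).dvSq v hv]
  have h0 : ¬ (0 ∈ Finset.Ico (M + 1) (2 * M + 2)) := by simp
  rw [if_neg h0]
  rw [tsum_eq_sum (s := Finset.Ico M (2 * M + 1))]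
  · simp only [nnnorm_zero, ENNReal.coe_zero, ne_eq, OfNat.ofNat_ne_zero, not_false_eq_true, zero_pow, zero_add]
    refine (Finset.sum_le_card_nsmul _ _ (8 * ((M + 1 : ℕ) : ENNReal) ^ 2 * mom v (2 * M + 1)) ?_).trans ?_
    · intro j hj
      rw [Finset.mem_Ico] at hj
      rw [if_pos (by rw [Finset.mem_Ico]; omega)]
      have h1 : ((j + 1 : ℕ) : ENNReal) ≤ 2 * ((M + 1 : ℕ) : ENNReal) := by
        have : j + 1 ≤ 2 * (M + 1) := by omega
        exact_mod_cast this
      calc 2 * (((j + 1 : ℕ) : ENNReal) ^ 2 * ((‖(1:ℂ)‖₊ : NNReal) : ENNReal) ^ 2) * mom v (2 * j + 1)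
          ≤ 2 * ((2 * ((M + 1 : ℕ) : ENNReal)) ^ 2 * 1) * mom v (2 * M + 1) := by
            gcongr
            · simp
            · exact mom_anti v (by omega)
        _ = _ := by ring
    · rw [Nat.card_Ico, nsmul_eq_mul]
      have : 2 * M + 1 - M = M + 1 := by omega
      rw [this]
      apply le_of_eq
      ring
  · intro j hj
    rw [Finset.mem_Ico] at hj
    rw [if_neg (by rw [Finset.mem_Ico]; omega)]
    simp

lemma fT_mu (M k : ℕ) (hk : k < 2 * M + 2) : 1 / 4 ≤ ‖∫ t in Ioo (0:ℝ) 1, fT M t * (t : ℂ) ^ k‖ := by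
  have e : ∫ t in Ioo (0:ℝ) 1, fT M t * (t : ℂ) ^ k =
      ((∑ j ∈ Finset.Ico M (2 * M + 1), (1 / ((j + 1 + k : ℕ) + 1 : ℝ)) : ℝ) : ℂ) := by
    have h1 : ∀ t : ℝ, fT M t * (t : ℂ) ^ k = ((∑ j ∈ Finset.Ico M (2 * M + 1), t ^ (j + 1 + k) : ℝ) : ℂ) := by
      intro t
      unfold fT
      push_cast
      rw [Finset.sum_mul]
      refine Finset.sum_congr rfl fun j _ => ?_
      rw [pow_add _ (j + 1) k]
    simp_rw [h1]
    rw [integral_complex_ofReal, ← integral_Ioc_eq_integral_Ioo, ← intervalIntegral.integral_of_le zero_le_one,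
      intervalIntegral.integral_finsetSum (fun i _ => Continuous.intervalIntegrable (by fun_prop) _ _)]
    congr 1
    refine Finset.sum_congr rfl fun j _ => ?_
    rw [integral_pow]
    simp
  rw [e, Complex.norm_real, norm_eq_abs]
  refine le_trans ?_ (le_abs_self _)
  have h2 : ∀ j ∈ Finset.Ico M (2 * M + 1), 1 / (4 * (M + 1 : ℝ)) ≤ 1 / ((j + 1 + k : ℕ) + 1 : ℝ) := by
    intro j hj
    rw [Finset.mem_Ico] at hj
    apply one_div_le_one_div_of_le (by positivity)
    have : j + 1 + k + 1 ≤ 4 * (M + 1) := by omega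
    exact_mod_cast this
  have h3 := Finset.card_nsmul_le_sum _ _ _ h2
  rw [Nat.card_Ico, nsmul_eq_mul] at h3
  have h4 : 2 * M + 1 - M = M + 1 := by omega
  rw [h4] at h3
  refine le_trans (le_of_eq ?_) h3
  push_cast
  field_simp

lemma sq_of_half {a b : ENNReal} {K : ℝ}
    (h : a ^ (1/2 : ℝ) ≤ ENNReal.ofReal K * b ^ (1/2 : ℝ)) : a ≤ ENNReal.ofReal K ^ 2 * b := by
  have h2 := pow_le_pow_left' h 2
  rw [mul_pow] at h2
  have e : ∀ x : ENNReal, (x ^ (1/2 : ℝ)) ^ 2 = x := by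
    intro x
    rw [← ENNReal.rpow_natCast, ← ENNReal.rpow_mul]
    norm_num
  rwa [e, e] at h2

lemma dyadic {v : ℝ → ℝ} (hv : RadialWeight v) {C : ℝ}
    (hC : ∀ r ∈ Set.Ico (0:ℝ) 1, hatw v r ≤ C * hatw v ((1+r)/2)) (hC0 : 0 ≤ C)
    {b : ℕ → ℂ} {g : ℂ → ℂ} (H : HasPS b (deriv g)) {K : ℝ} (hK : 0 < K)
    (hb : ∀ f : ℂ → ℂ, DifferentiableOn ℂ f (Metric.ball 0 1) → DvSq v f < ⊤ →
        (DvSq v (Hg g f)) ^ (1/2 : ℝ) ≤ ENNReal.ofReal K * (DvSq v f) ^ (1/2 : ℝ)) (M : ℕ) :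
    ∑ k ∈ Finset.Ico (M + 1) (2 * (M + 1)), ‖b k‖ ^ 2 ≤ 64 * C * K ^ 2 * (M + 1) := by
  have hd : Differentiable ℂ (fT M) := by unfold fT; fun_prop
  have hfin : DvSq v (fT M) < ⊤ := by
    refine (fT_dv M v hv.1).trans_lt ?_
    exact ENNReal.mul_lt_top (ENNReal.mul_lt_top (by simp) (ENNReal.pow_lt_top (ENNReal.natCast_lt_top _))) (mom_lt_top hv _)
  have h1 := (sq_of_half (hb _ hd.differentiableOn hfin)).trans (mul_le_mul_right (fT_dv M v hv.1) _)
  rw [(hasPS_Hg H hd.continuous).dvSq v hv.1] at h1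
  have h2 := (ENNReal.sum_le_tsum (Finset.Ico M (2 * M + 1))).trans (le_add_self.trans h1)
  have hmd : mom v (2 * M + 1) ≤ ENNReal.ofReal C * mom v (4 * M + 1) :=
    (mom_doubling hv hC hC0 (2 * M + 1) (by omega)).trans (mul_le_mul_right (mom_anti v (by omega)) _)
  set m := (mom v (4 * M + 1)).toReal with hm
  have hmE : mom v (4 * M + 1) = ENNReal.ofReal m := (ENNReal.ofReal_toReal (mom_lt_top hv _).ne).symm
  have hm0 : 0 < m := ENNReal.toReal_pos (mom_pos hv _).ne' (mom_lt_top hv _).ne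
  have h3 : ∀ j ∈ Finset.Ico M (2 * M + 1),
      ENNReal.ofReal ((1 / 8) * (M + 1) ^ 2 * ‖b (j + 1)‖ ^ 2 * m) ≤
      2 * (((j + 1 : ℕ) : ENNReal) ^ 2 * (‖b (j + 1) * ∫ t in Ioo (0:ℝ) 1, fT M t * (t : ℂ) ^ (j + 1)‖₊ : ENNReal) ^ 2)
        * mom v (2 * j + 1) := by
    intro j hj
    rw [Finset.mem_Ico] at hj
    refine le_trans ?_ (mul_le_mul_right (mom_anti v (show 2 * j + 1 ≤ 4 * M + 1 by omega)) _)
    rw [hmE]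
    have hmu := fT_mu M (j + 1) (by omega)
    set I := ∫ t in Ioo (0:ℝ) 1, fT M t * (t : ℂ) ^ (j + 1)
    have e1 : (‖b (j + 1) * I‖₊ : ENNReal) = ENNReal.ofReal (‖b (j + 1)‖ * ‖I‖) := by
      rw [← norm_mul, ofReal_norm]; rfl
    have e2 : ((j + 1 : ℕ) : ENNReal) = ENNReal.ofReal (j + 1) := by
      rw [← ENNReal.ofReal_natCast]; push_cast; rfl
    have e3 : (2 : ENNReal) = ENNReal.ofReal 2 := by simp
    rw [e1, e2, e3, ← ENNReal.ofReal_pow (by positivity), ← ENNReal.ofReal_pow (by positivity),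
      ← ENNReal.ofReal_mul (by positivity), ← ENNReal.ofReal_mul (by positivity),
      ← ENNReal.ofReal_mul (by positivity)]
    apply ENNReal.ofReal_le_ofReal
    have hj2 : (M:ℝ) ≤ j := by exact_mod_cast hj.1
    calc (1 / 8) * ((M:ℝ) + 1) ^ 2 * ‖b (j + 1)‖ ^ 2 * m
        = 2 * (((M:ℝ) + 1) ^ 2 * (‖b (j + 1)‖ * (1/4)) ^ 2) * m := by ring
      _ ≤ _ := by gcongr
  have h4 := (Finset.sum_le_sum h3).trans (h2.trans (mul_le_mul_right (mul_le_mul_right hmd _) _))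
  rw [← ENNReal.ofReal_sum_of_nonneg (fun _ _ => by positivity), hmE] at h4
  have e2 : ((M + 1 : ℕ) : ENNReal) = ENNReal.ofReal (M + 1) := by
    rw [← ENNReal.ofReal_natCast]; push_cast; rfl
  have e3 : (8 : ENNReal) = ENNReal.ofReal 8 := by simp
  rw [e2, e3, ← ENNReal.ofReal_pow (by positivity), ← ENNReal.ofReal_pow (by positivity),
      ← ENNReal.ofReal_mul (by positivity), ← ENNReal.ofReal_mul (by positivity),
      ← ENNReal.ofReal_mul (by positivity), ← ENNReal.ofReal_mul (by positivity),
      ENNReal.ofReal_le_ofReal_iff (by positivity), ← Finset.sum_mul, ← Finset.mul_sum,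
      Finset.sum_Ico_add' (fun k => ‖b k‖ ^ 2) M (2 * M + 1) 1] at h4
  have e4 : 2 * (M + 1) = 2 * M + 1 + 1 := by ring
  rw [e4]
  set S := ∑ k ∈ Finset.Ico (M + 1) (2 * M + 1 + 1), ‖b k‖ ^ 2
  have hp : (0:ℝ) < (1/8) * ((M:ℝ) + 1) ^ 2 * m := by positivity
  refine le_of_mul_le_mul_left ?_ hp
  calc (1/8) * ((M:ℝ) + 1) ^ 2 * m * S = 1 / 8 * ((M:ℝ) + 1) ^ 2 * S * m := by ring
    _ ≤ _ := h4
    _ = _ := by ring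

lemma zeroth {v : ℝ → ℝ} (hv : RadialWeight v)
    {b : ℕ → ℂ} {g : ℂ → ℂ} (H : HasPS b (deriv g)) {K : ℝ} (hK : 0 < K)
    (hb : ∀ f : ℂ → ℂ, DifferentiableOn ℂ f (Metric.ball 0 1) → DvSq v f < ⊤ →
        (DvSq v (Hg g f)) ^ (1/2 : ℝ) ≤ ENNReal.ofReal K * (DvSq v f) ^ (1/2 : ℝ)) :
    ‖b 0‖ ^ 2 ≤ K ^ 2 := by
  have h1 : DvSq v (fun _ => (1:ℂ)) = 1 := by simp [DvSq]
  have h2 := sq_of_half (hb (fun _ => (1:ℂ)) (by fun_prop) (by simp [h1]))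
  rw [h1, (hasPS_Hg H continuous_const).dvSq v hv.1] at h2
  have h3 := le_self_add.trans h2
  simp only [pow_zero, mul_one, integral_const, measureReal_restrict_apply_univ, volume_real_Ioo_of_le zero_le_one] at h3
  norm_num at h3
  have e1 : (‖b 0‖₊ : ENNReal) = ENNReal.ofReal ‖b 0‖ := by
      rw [ofReal_norm]; rfl
  simp only [e1] at h3
  rwa [← ENNReal.ofReal_pow (by positivity), ← ENNReal.ofReal_pow (by positivity),
    ENNReal.ofReal_le_ofReal_iff (by positivity)] at h3

lemma partial_sums {a : ℕ → ℝ} (ha : ∀ k, 0 ≤ a k) {D : ℝ} (h0 : a 0 ≤ D)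
    (hd : ∀ M : ℕ, ∑ k ∈ Finset.Ico (M + 1) (2 * (M + 1)), a k ≤ D * (M + 1)) (n : ℕ) :
    ∑ k ∈ Finset.range n, a k ≤ 3 * D * n := by
  have hD : 0 ≤ D := (ha 0).trans h0
  induction n using Nat.strong_induction_on with
  | _ n ih =>
    rcases Nat.lt_or_ge n 2 with h | h
    · interval_cases n
      · simp
      · simp; linarith
    · obtain ⟨M, hM1, hM2, hM3⟩ : ∃ M, M + 1 < n ∧ n ≤ 2 * (M + 1) ∧ 2 * (M + 1) ≤ n + 1 :=
        ⟨(n + 1) / 2 - 1, by omega, by omega, by omega⟩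
      have i1 := ih (M + 1) hM1
      have i2 := hd M
      have h3 : ∑ k ∈ Finset.range n, a k ≤ ∑ k ∈ Finset.range (2 * (M + 1)), a k :=
        Finset.sum_le_sum_of_subset_of_nonneg (by simpa using hM2) (fun _ _ _ => ha _)
      rw [← Finset.sum_range_add_sum_Ico a (show M + 1 ≤ 2 * (M + 1) by omega)] at h3
      push_cast at i1
      have h4 : 2 * ((M:ℝ) + 1) ≤ n + 1 := by exact_mod_cast hM3
      have h5 : (2:ℝ) ≤ n := by exact_mod_cast h
      have h6 : 4 * ((M:ℝ) + 1) ≤ 3 * n := by linarith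
      nlinarith

lemma abel_maj {a : ℕ → ℝ} {E : ℝ} (h : ∀ n : ℕ, ∑ k ∈ Finset.range n, a k ≤ E * n)
    {x : ℝ} (h0 : 0 ≤ x) (h1 : x ≤ 1) (n : ℕ) :
    ∑ k ∈ Finset.range n, a k * x ^ k ≤ E * ∑ k ∈ Finset.range n, x ^ k := by
  have key : ∀ n, x ^ n * (E * n - ∑ k ∈ Finset.range n, a k) ≤
      E * ∑ k ∈ Finset.range n, x ^ k - ∑ k ∈ Finset.range n, a k * x ^ k := by
    intro n
    induction n with
    | zero => simp
    | succ n ih =>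
      have h2 : x ^ (n + 1) ≤ x ^ n := pow_le_pow_of_le_one h0 h1 (by omega)
      have h3 := h (n + 1)
      refine (mul_le_mul_of_nonneg_right h2 (by linarith)).trans ?_
      simp only [Finset.sum_range_succ]
      push_cast
      nlinarith
  have := key n
  have h2 := mul_nonneg (pow_nonneg h0 n) (sub_nonneg.2 (h n))
  linarith

/-- necessity in Proposition 3.1: if `H_g` is bounded on `D_v` with norm `K`,
then `‖g - g(0)‖_{B(2,∞)} < ∞` and in fact `‖g - g(0)‖_{B(2,∞)} ≤ C K` with `C = C(v)`. -/
theorem statement8 (v : ℝ → ℝ) (hv : RadialWeight v) (hD : DoublingD v)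
    (hM1 : M1v v < ⊤) (hM2 : M2v v < ⊤) :
    ∃ C : ℝ, 0 < C ∧ ∀ g : ℂ → ℂ, DifferentiableOn ℂ g (Metric.ball 0 1) →
      ∀ K : ℝ, 0 < K →
      (∀ f : ℂ → ℂ, DifferentiableOn ℂ f (Metric.ball 0 1) → DvSq v f < ⊤ →
        (DvSq v (Hg g f)) ^ (1/2 : ℝ) ≤ ENNReal.ofReal K * (DvSq v f) ^ (1/2 : ℝ)) →
      B2infE (fun z => g z - g 0) < ⊤ ∧
      B2infE (fun z => g z - g 0) ≤ ENNReal.ofReal (C * K) := by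
  obtain ⟨C, hC1, hC⟩ := hD
  have hC0 : 0 ≤ C := by linarith
  refine ⟨Real.sqrt (192 * C), by positivity, ?_⟩
  intro g hg K hK hb
  suffices hmain : B2infE (fun z => g z - g 0) ≤ ENNReal.ofReal (Real.sqrt (192 * C) * K) from
    ⟨hmain.trans_lt ENNReal.ofReal_lt_top, hmain⟩
  have hg' : DifferentiableOn ℂ (deriv g) (Metric.ball 0 1) := hg.deriv Metric.isOpen_ball
  set b : ℕ → ℂ := fun n => ((n.factorial : ℂ))⁻¹ * iteratedDeriv n (deriv g) 0 with hbdef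
  have H : HasPS b (deriv g) := by
    intro z hz
    have := Complex.hasSum_taylorSeries_on_ball hg' hz
    have e : (fun k => b k * z ^ k) =
        fun n : ℕ => ((n.factorial : ℂ))⁻¹ • (z - 0) ^ n • iteratedDeriv n (deriv g) 0 := by
      funext n
      simp only [hbdef, smul_eq_mul, sub_zero]
      ring
    rw [e]
    exact this
  have hps := partial_sums (a := fun k => ‖b k‖ ^ 2) (D := 64 * C * K ^ 2) (fun k => by positivity)
    ((zeroth hv H hK hb).trans (by nlinarith [sq_nonneg K])) (dyadic hv hC hC0 H hK hb)
  unfold B2infE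
  simp only [sub_self, nnnorm_zero, ENNReal.coe_zero, zero_add]
  refine iSup₂_le fun r hr => ?_
  apply ENNReal.ofReal_le_ofReal
  have hder : deriv (fun z => g z - g 0) = deriv g := by
    funext z
    exact deriv_sub_const _
  rw [hder]
  have hr0 : 0 < 1 - r := by linarith [hr.2]
  have hsum := H.pars hr.1.le hr.2
  have hle : (2*π)⁻¹ * ∫ θ in (-π)..π, ‖deriv g ((r:ℂ) * Complex.exp (θ * Complex.I))‖^2
      ≤ 192 * C * K ^ 2 / (1 - r) := by
    refine le_of_tendsto' hsum.tendsto_sum_nat fun n => ?_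
    have hx0 : 0 ≤ r ^ 2 := sq_nonneg r
    have hx1 : r ^ 2 < 1 := by nlinarith [hr.1, hr.2]
    have h1 := abel_maj hps hx0 hx1.le n
    simp only [← pow_mul] at h1
    refine h1.trans ?_
    have h2 : ∑ k ∈ Finset.range n, r ^ (2 * k) ≤ (1 - r)⁻¹ := by
      have h3 := (summable_geometric_of_lt_one hr.1.le hr.2).sum_le_tsum (Finset.range n)
        (fun _ _ => pow_nonneg hr.1.le _)
      rw [tsum_geometric_of_lt_one hr.1.le hr.2] at h3
      refine le_trans (Finset.sum_le_sum fun k _ => ?_) h3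
      exact pow_le_pow_of_le_one hr.1.le hr.2.le (by omega)
    rw [div_eq_mul_inv]
    have e : 3 * (64 * C * K ^ 2) = 192 * C * K ^ 2 := by ring
    rw [e]
    gcongr
  unfold M2mean
  rw [← Real.sqrt_mul' _ hr0.le]
  have e : Real.sqrt (192 * C) * K = Real.sqrt (192 * C * K ^ 2) := by
    rw [Real.sqrt_mul' (192 * C) (sq_nonneg K), Real.sqrt_sq hK.le]
  rw [e]
  apply Real.sqrt_le_sqrt
  rw [le_div_iff₀ hr0] at hle
  exact hle

end
end
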